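/- arXiv:2102.08508 — 3 statements merged into one kernel-verified Lean document; each statement's English description precedes it below -/
import Mathlib

section
/- For every integer n ≥ 1, the number of ballot permutations of [n] equals ((n−1)!!)² if n is even, and equals n!!·(n−2)!! if n is odd, where m!! denotes the double factorial m(m−2)(m−4)⋯ (ending at 1 or 2) with the conventions 0!! = (−1)!! = 1. -/
/-- The word `π₁π₂⋯πₙ` of a permutation of `[n] = {1, …, n}`, as a function on
0-indexed positions; `permWord n π i` is the letter at (1-indexed) position `i+1`,
a value in `{1, …, n}` (and `0` for out-of-range positions). -/
def permWord (n : ℕ) (π : Equiv.Perm (Fin n)) : ℕ → ℕ :=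
  fun i => if h : i < n then (π ⟨i, h⟩ : ℕ) + 1 else 0

/-- A permutation of `[n]` is a ballot permutation if every prefix `π₁⋯πᵢ`, `1 ≤ i ≤ n`,
has at least as many ascents as descents. -/
def IsBallot (n : ℕ) (π : Equiv.Perm (Fin n)) : Prop :=
  ∀ i ≤ n,
    ((Finset.range (i - 1)).filter (fun k => permWord n π (k + 1) < permWord n π k)).card ≤
      ((Finset.range (i - 1)).filter (fun k => permWord n π k < permWord n π (k + 1))).card

/-! Reading a word from left to right and going up at ascents, down at descents, gives a walk. Cut a
word as `u ++ v` and ask that both `u.reverse` and `v` be ballot: the walk of `u` then never goes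
below its end, and that of `v` never below its start. Exactly two cuts qualify, the one after the
last minimum of the walk and the one before its first minimum. Counting pairs of a word and such a
cut, by the letters of `u`, gives `∑ C(n,k) bₖ bₙ₋ₖ = 2 n!` for `n ≥ 1`, where `bₙ` is the number
of ballot words on `n` distinct letters. The exponential generating function `B` thus satisfies
`B² (1 - X) = 1 + X`, hence `B' (1 - X²) = B`, that is `bₙ₊₂ = bₙ₊₁ + (n + 1) n bₙ`, which the
products of double factorials solve.
-/

section Walk
open Finset

variable {ι β : Type*} [LinearOrder ι] [LinearOrder β]

/-- The leftmost point of `s` at which `h` attains its minimum over `s`. -/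
def IsFirstMin (h : ι → β) (s : Finset ι) (p : ι) : Prop :=
  p ∈ s ∧ ∀ i ∈ s, h p < h i ∨ h p = h i ∧ p ≤ i

/-- The rightmost point of `s` at which `h` attains its minimum over `s`. -/
def IsLastMin (h : ι → β) (s : Finset ι) (q : ι) : Prop :=
  q ∈ s ∧ ∀ i ∈ s, h q < h i ∨ h q = h i ∧ i ≤ q

theorem exists_isFirstMin {s : Finset ι} (hs : s.Nonempty) (h : ι → β) :
    ∃ p, IsFirstMin h s p := by
  simpa only [IsFirstMin, Prod.Lex.toLex_le_toLex] using
    s.exists_min_image (fun i ↦ toLex (h i, i)) hs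

theorem exists_isLastMin {s : Finset ι} (hs : s.Nonempty) (h : ι → β) :
    ∃ q, IsLastMin h s q :=
  exists_isFirstMin (ι := ιᵒᵈ) hs h

theorem IsLastMin.unique {h : ι → β} {s : Finset ι} {q q' : ι} (hq : IsLastMin h s q)
    (hq' : IsLastMin h s q') : q = q' := by
  have := hq.2 q' hq'.1
  have := hq'.2 q hq.1
  grind

theorem IsFirstMin.unique {h : ι → β} {s : Finset ι} {p p' : ι} (hp : IsFirstMin h s p)
    (hp' : IsFirstMin h s p') : p = p' :=
  IsLastMin.unique (ι := ιᵒᵈ) hp hp'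

theorem IsFirstMin.le_isLastMin {h : ι → β} {s : Finset ι} {p q : ι} (hp : IsFirstMin h s p)
    (hq : IsLastMin h s q) : p ≤ q := by
  have := hp.2 q hq.1
  have := hq.2 p hp.1
  grind

/-- `k` cuts the walk of heights `h 1, …, h n` at a minimum: the left part `h 1, …, h k` nowhere
goes below its last point, and the right part `h (k + 1), …, h n` nowhere goes below its first.
Either part may be empty. -/
def IsMinCut (h : ℕ → β) (n k : ℕ) : Prop :=
  (∀ i ∈ Icc 1 k, h k ≤ h i) ∧ ∀ i ∈ Ioc k n, h (k + 1) ≤ h i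

instance (h : ℕ → β) (n : ℕ) : DecidablePred (IsMinCut h n) :=
  fun _ ↦ inferInstanceAs (Decidable (_ ∧ _))

theorem IsMinCut.isLastMin_or_isFirstMin {h : ℕ → β} {n k : ℕ} (hn : n ≠ 0)
    (step : ∀ i ∈ Ico 1 n, h i ≠ h (i + 1)) (hk : k ≤ n) (hcut : IsMinCut h n k) :
    IsLastMin h (Icc 1 n) k ∨ IsFirstMin h (Icc 1 n) (k + 1) := by
  obtain ⟨hleft, hright⟩ := hcut
  simp only [mem_Icc, mem_Ico, mem_Ioc] at *
  have last (hk1 : 1 ≤ k) (hlt : ∀ i, k < i ∧ i ≤ n → h k < h i) :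
      IsLastMin h (Icc 1 n) k := by
    refine ⟨mem_Icc.mpr ⟨hk1, hk⟩, fun i hi ↦ ?_⟩
    have := hleft i
    have := hlt i
    grind
  have first (hkn : k < n) (hlt : ∀ i, 1 ≤ i ∧ i ≤ k → h (k + 1) < h i) :
      IsFirstMin h (Icc 1 n) (k + 1) := by
    refine ⟨mem_Icc.mpr ⟨by lia, hkn⟩, fun i hi ↦ ?_⟩
    have := hright i
    have := hlt i
    grind
  rcases Nat.eq_zero_or_pos k with rfl | hk1
  · exact .inr (first (by lia) (by lia))
  rcases hk.eq_or_lt with rfl | hkn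
  · exact .inl (last hk1 (by lia))
  rcases (step k ⟨hk1, hkn⟩).lt_or_gt with up | down
  · exact .inl (last hk1 fun i hi ↦ up.trans_le (hright i hi))
  · exact .inr (first hkn fun i hi ↦ down.trans_le (hleft i hi))

variable {h : ℕ → ℤ} {n p q : ℕ}

/- Just after its last minimum the walk is exactly one above it, hence at most as high as every
later point; dually for the first minimum. -/
theorem IsLastMin.isMinCut (step : ∀ i ∈ Ico 1 n, h (i + 1) ≤ h i + 1)
    (hq : IsLastMin h (Icc 1 n) q) : IsMinCut h n q := by
  simp only [IsMinCut, IsLastMin, mem_Icc, mem_Ico, mem_Ioc] at *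
  refine ⟨fun i hi ↦ ?_, fun i hi ↦ ?_⟩ <;> have := hq.2 i <;> have := step q <;> lia

theorem IsFirstMin.isMinCut (step : ∀ i ∈ Ico 1 n, h i ≤ h (i + 1) + 1)
    (hp : IsFirstMin h (Icc 1 n) (p + 1)) : IsMinCut h n p := by
  simp only [IsMinCut, IsFirstMin, mem_Icc, mem_Ico, mem_Ioc] at *
  refine ⟨fun i hi ↦ ?_, fun i hi ↦ ?_⟩ <;> have := hp.2 i <;> have := step p <;> lia

theorem card_filter_isMinCut (hn : n ≠ 0)
    (step : ∀ i ∈ Ico 1 n, h (i + 1) = h i + 1 ∨ h i = h (i + 1) + 1) :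
    #{k ∈ range (n + 1) | IsMinCut h n k} = 2 := by
  have hne : (Icc 1 n).Nonempty := nonempty_Icc.mpr (Nat.one_le_iff_ne_zero.mpr hn)
  obtain ⟨p, hp⟩ := exists_isFirstMin hne h
  obtain ⟨q, hq⟩ := exists_isLastMin hne h
  obtain ⟨p, rfl⟩ : ∃ r, p = r + 1 := Nat.exists_eq_succ_of_ne_zero (by grind [IsFirstMin])
  have hpq : q ≠ p := (Nat.lt_of_succ_le (hp.le_isLastMin hq)).ne'
  suffices {k ∈ range (n + 1) | IsMinCut h n k} = {q, p} by rw [this, card_pair hpq]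
  ext k
  simp only [mem_filter, mem_range_succ_iff, mem_insert, mem_singleton]
  constructor
  · rintro ⟨hk, hcut⟩
    exact (hcut.isLastMin_or_isFirstMin hn (fun i hi ↦ by grind) hk).imp (·.unique hq)
      fun hk' ↦ Nat.succ_injective (hk'.unique hp)
  · rintro (rfl | rfl)
    · exact ⟨(mem_Icc.mp hq.1).2, hq.isMinCut fun i hi ↦ by grind⟩
    · exact ⟨Nat.le_of_succ_le (mem_Icc.mp hp.1).2, hp.isMinCut fun i hi ↦ by grind⟩

end Walk

section Arrangements
open Finset
open scoped Nat

variable {α β : Type*}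

/-- The words that use every letter of `s` exactly once. -/
def arrangements (s : Finset α) : Finset (List α) :=
  ⟨s.val.lists, Multiset.lists_nodup_finset s⟩

theorem mem_arrangements {s : Finset α} {l : List α} :
    l ∈ arrangements s ↔ s.val = l :=
  Multiset.mem_lists_iff s.val l

theorem card_arrangements (s : Finset α) : #(arrangements s) = (#s)! := by
  rw [arrangements, card_mk, ← coe_toList s, Multiset.lists_coe, Multiset.coe_card,
    List.length_permutations, length_toList]

theorem length_of_mem_arrangements {s : Finset α} {l : List α}
    (hl : l ∈ arrangements s) : l.length = #s := by
  rw [card_def, mem_arrangements.mp hl, Multiset.coe_card]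

theorem nodup_of_mem_arrangements {s : Finset α} {l : List α}
    (hl : l ∈ arrangements s) : l.Nodup := by
  rw [← Multiset.coe_nodup, ← mem_arrangements.mp hl]
  exact s.nodup

theorem mem_arrangements_toFinset [DecidableEq α] {l : List α} (hl : l.Nodup) :
    l ∈ arrangements l.toFinset := by
  rw [mem_arrangements, List.toFinset_val, hl.dedup]

theorem toFinset_of_mem_arrangements [DecidableEq α] {s : Finset α} {l : List α}
    (hl : l ∈ arrangements s) : l.toFinset = s := by
  rw [← val_inj, mem_arrangements.mp hl, List.toFinset_val, (nodup_of_mem_arrangements hl).dedup]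

theorem reverse_mem_arrangements {s : Finset α} {l : List α} :
    l.reverse ∈ arrangements s ↔ l ∈ arrangements s := by
  rw [mem_arrangements, mem_arrangements, Multiset.coe_reverse]

theorem append_mem_arrangements_iff [DecidableEq α] {s t : Finset α} (hts : t ⊆ s)
    {u v : List α} (hu : u ∈ arrangements t) :
    u ++ v ∈ arrangements s ↔ v ∈ arrangements (s \ t) := by
  rw [mem_arrangements] at hu
  rw [mem_arrangements, mem_arrangements, sdiff_val, ← Multiset.coe_add, ← hu, add_comm,
    tsub_eq_iff_eq_add_of_le (val_le_iff.mpr hts)]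

theorem arrangements_map (f : α ↪ β) (s : Finset α) :
    arrangements (s.map f) = (arrangements s).map ⟨List.map f, f.injective.list_map⟩ := by
  ext l
  simp only [mem_arrangements, mem_map, map_val, Function.Embedding.coeFn_mk]
  constructor
  · intro hl
    have hrange : ∀ x ∈ l, x ∈ Set.range f := fun x hx ↦ by
      have hx' : x ∈ s.val.map f := hl ▸ hx
      obtain ⟨y, -, rfl⟩ := Multiset.mem_map.mp hx'
      exact ⟨y, rfl⟩
    obtain ⟨l, rfl⟩ : l ∈ Set.range (List.map f) := by rwa [Set.range_list_map]
    exact ⟨l, Multiset.map_injective f.injective (by simpa using hl), rfl⟩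
  · rintro ⟨l, hl, rfl⟩
    rw [hl, Multiset.map_coe]

end Arrangements

section Words
open Finset
open scoped Nat

variable {α β : Type*} [LinearOrder α] [LinearOrder β]

/-- The step of the height walk of a word between consecutive letters `a`, `b`: `1` for an ascent,
`-1` for a descent, `0` if `a = b`. -/
def ascentSign (a b : α) : ℤ :=
  (if a < b then 1 else 0) - if b < a then 1 else 0

/-- The height of a word: its number of ascents minus its number of descents. -/
def wordHeight : List α → ℤ
  | a :: b :: l => ascentSign a b + wordHeight (b :: l)
  | _ => 0

@[simp] theorem wordHeight_nil : wordHeight ([] : List α) = 0 := rfl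

@[simp] theorem wordHeight_singleton (a : α) : wordHeight [a] = 0 := rfl

@[simp] theorem wordHeight_cons_cons (a b : α) (l : List α) :
    wordHeight (a :: b :: l) = ascentSign a b + wordHeight (b :: l) := rfl

theorem wordHeight_append_cons (u v : List α) (a : α) :
    wordHeight (u ++ a :: v) = wordHeight (u ++ [a]) + wordHeight (a :: v) := by
  induction u with
  | nil => simp
  | cons b u ih => cases u <;> simp_all [add_assoc]

theorem wordHeight_append_pair (u : List α) (a b : α) :
    wordHeight (u ++ [a, b]) = wordHeight (u ++ [a]) + ascentSign a b := by
  rw [wordHeight_append_cons]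
  simp

theorem wordHeight_reverse (l : List α) : wordHeight l.reverse = -wordHeight l := by
  induction l with
  | nil => simp
  | cons a l ih =>
    cases l with
    | nil => simp
    | cons b l =>
      rw [List.reverse_cons, List.reverse_cons] at *
      rw [List.append_assoc, List.singleton_append, wordHeight_append_pair, ih]
      simp [ascentSign]

theorem wordHeight_map {f : α → β} (hf : StrictMono f) (l : List α) :
    wordHeight (l.map f) = wordHeight l := by
  induction l with
  | nil => rfl
  | cons a l ih => cases l <;> simp_all [ascentSign, hf.lt_iff_lt]

theorem wordHeight_drop {l : List α} {i : ℕ} (hi : i < l.length) :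
    wordHeight (l.drop i) = wordHeight l - wordHeight (l.take (i + 1)) := by
  rw [eq_sub_iff_add_eq', List.drop_eq_getElem_cons hi, List.take_succ_eq_append_getElem hi,
    ← wordHeight_append_cons, ← List.drop_eq_getElem_cons hi, List.take_append_drop]

theorem wordHeight_take_succ_succ {l : List α} {i : ℕ} (hi : i + 1 < l.length) :
    wordHeight (l.take (i + 2)) = wordHeight (l.take (i + 1)) + ascentSign l[i] l[i + 1] := by
  rw [List.take_succ_eq_append_getElem hi, List.take_succ_eq_append_getElem (Nat.lt_of_succ_lt hi),
    List.append_assoc, List.singleton_append, wordHeight_append_pair]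

theorem wordHeight_take_step {l : List α} (hl : l.Nodup) {i : ℕ} (hi : i ∈ Ico 1 l.length) :
    wordHeight (l.take (i + 1)) = wordHeight (l.take i) + 1 ∨
      wordHeight (l.take i) = wordHeight (l.take (i + 1)) + 1 := by
  obtain ⟨i, rfl⟩ : ∃ j, i = j + 1 := Nat.exists_eq_add_of_le' (mem_Ico.mp hi).1
  have hi' : i + 1 < l.length := (mem_Ico.mp hi).2
  have hne : l[i] ≠ l[i + 1] := fun heq ↦ by simpa using hl.getElem_inj_iff.mp heq
  rw [wordHeight_take_succ_succ hi']
  rcases hne.lt_or_gt with hlt | hgt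
  · simp [ascentSign, hlt, hlt.not_gt]
  · simp [ascentSign, hgt, hgt.not_gt]

/-- A word is ballot if each of its nonempty prefixes has at least as many ascents as descents. -/
def IsBallotWord (l : List α) : Prop :=
  ∀ i ∈ Icc 1 l.length, 0 ≤ wordHeight (l.take i)

instance : DecidablePred (IsBallotWord (α := α)) :=
  fun l ↦ inferInstanceAs (Decidable (∀ i ∈ Icc 1 l.length, 0 ≤ wordHeight (l.take i)))

theorem isBallotWord_map {f : α → β} (hf : StrictMono f) {l : List α} :
    IsBallotWord (l.map f) ↔ IsBallotWord l := by
  simp only [IsBallotWord, List.length_map, ← List.map_take, wordHeight_map hf]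

theorem isBallotWord_drop_iff {l : List α} {k : ℕ} :
    IsBallotWord (l.drop k) ↔
      ∀ i ∈ Ioc k l.length, wordHeight (l.take (k + 1)) ≤ wordHeight (l.take i) := by
  have height_take_drop (i : ℕ) (hi : i ∈ Ioc k l.length) : wordHeight ((l.drop k).take (i - k)) =
      wordHeight (l.take i) - wordHeight (l.take (k + 1)) := by
    rw [List.take_drop, wordHeight_drop (by grind), List.take_take]
    grind
  constructor
  · intro hl i hi
    rw [← sub_nonneg, ← height_take_drop i hi]
    exact hl _ (by grind)
  · intro hl j hj
    obtain ⟨i, hi, rfl⟩ : ∃ i ∈ Ioc k l.length, j = i - k := ⟨j + k, by grind⟩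
    rw [height_take_drop i hi, sub_nonneg]
    exact hl i hi

theorem isBallotWord_reverse_take_iff {l : List α} {k : ℕ} (hk : k ≤ l.length) :
    IsBallotWord (l.take k).reverse ↔
      ∀ i ∈ Icc 1 k, wordHeight (l.take k) ≤ wordHeight (l.take i) := by
  have height_take_reverse (i : ℕ) (hi : i ∈ Icc 1 k) :
      wordHeight ((l.take k).reverse.take (k + 1 - i)) =
        wordHeight (l.take i) - wordHeight (l.take k) := by
    rw [List.take_reverse, wordHeight_reverse, wordHeight_drop (by grind), List.take_take]
    grind
  constructor
  · intro hl i hi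
    rw [← sub_nonneg, ← height_take_reverse i hi]
    exact hl _ (by grind)
  · intro hl j hj
    obtain ⟨i, hi, rfl⟩ : ∃ i ∈ Icc 1 k, j = k + 1 - i := ⟨k + 1 - j, by grind⟩
    rw [height_take_reverse i hi, sub_nonneg]
    exact hl i hi

/-- The cuts of a word `l = u ++ v` for which both `u.reverse` and `v` are ballot, encoded by the
length of `u`. -/
def ballotCuts (l : List α) : Finset ℕ :=
  {k ∈ range (l.length + 1) | IsBallotWord (l.take k).reverse ∧ IsBallotWord (l.drop k)}

theorem mem_ballotCuts {l : List α} {k : ℕ} :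
    k ∈ ballotCuts l ↔
      k ≤ l.length ∧ IsBallotWord (l.take k).reverse ∧ IsBallotWord (l.drop k) := by
  rw [ballotCuts, mem_filter, mem_range_succ_iff]

theorem card_ballotCuts {l : List α} (hl : l.Nodup) (hne : l ≠ []) : #(ballotCuts l) = 2 := by
  rw [← card_filter_isMinCut (h := fun i ↦ wordHeight (l.take i)) (List.length_pos_iff.mpr hne).ne'
    fun i hi ↦ wordHeight_take_step hl hi]
  refine congrArg card (filter_congr fun k hk ↦ ?_)
  rw [isBallotWord_reverse_take_iff (mem_range_succ_iff.mp hk), isBallotWord_drop_iff, IsMinCut]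

/-- The ballot words that use every letter of `s` exactly once. -/
def ballotArrangements (s : Finset α) : Finset (List α) :=
  {l ∈ arrangements s | IsBallotWord l}

/-- The number of ballot words that use each of `n` letters exactly once, counted on the alphabet
`Fin n`. -/
def ballotNumber (n : ℕ) : ℕ := #(ballotArrangements (univ : Finset (Fin n)))

theorem mem_ballotArrangements {s : Finset α} {l : List α} :
    l ∈ ballotArrangements s ↔ l ∈ arrangements s ∧ IsBallotWord l :=
  mem_filter

theorem card_ballotArrangements (s : Finset α) : #(ballotArrangements s) = ballotNumber #s := by
  let e := s.orderEmbOfFin rfl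
  have hs : univ.map e.toEmbedding = s := s.map_orderEmbOfFin_univ rfl
  rw [ballotArrangements, ← hs, arrangements_map, filter_map, card_map, ballotNumber,
    ballotArrangements, card_map, card_univ, Fintype.card_fin]
  congr 1
  exact filter_congr fun l _ ↦ isBallotWord_map e.strictMono

theorem sum_card_ballotCuts (s : Finset α) :
    ∑ l ∈ arrangements s, #(ballotCuts l) =
      ∑ t ∈ s.powerset, #(ballotArrangements t) * #(ballotArrangements (s \ t)) := by
  simp only [← card_product, ← card_sigma]
  refine card_nbij' (fun x ↦ ⟨(x.1.take x.2).toFinset, (x.1.take x.2).reverse, x.1.drop x.2⟩)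
    (fun y ↦ ⟨y.2.1.reverse ++ y.2.2, y.2.1.length⟩) ?_ ?_ ?_ ?_ <;>
    simp only [Set.MapsTo, Set.LeftInvOn, Set.RightInvOn, mem_coe, mem_sigma, mem_product,
      mem_powerset, mem_ballotArrangements, mem_ballotCuts]
  · rintro ⟨l, k⟩ ⟨hl, -, hu, hv⟩
    have htake : l.take k ∈ arrangements (l.take k).toFinset :=
      mem_arrangements_toFinset ((nodup_of_mem_arrangements hl).sublist (List.take_sublist k l))
    have hsub : (l.take k).toFinset ⊆ s := by
      rw [← toFinset_of_mem_arrangements hl]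
      exact Multiset.toFinset_subset.mpr (List.take_subset k l)
    refine ⟨hsub, ⟨reverse_mem_arrangements.mpr htake, hu⟩, ?_, hv⟩
    rwa [← append_mem_arrangements_iff hsub htake, List.take_append_drop]
  · rintro ⟨t, u, v⟩ ⟨hts, ⟨hut, hu⟩, hvt, hv⟩
    refine ⟨(append_mem_arrangements_iff hts (reverse_mem_arrangements.mpr hut)).mpr hvt, ?_⟩
    simpa using ⟨hu, hv⟩
  · rintro ⟨l, k⟩ ⟨-, hk, -⟩
    simpa using hk
  · rintro ⟨t, u, v⟩ ⟨-, ⟨hut, -⟩, -⟩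
    simp [toFinset_of_mem_arrangements hut]

theorem ballotNumber_convolution {n : ℕ} (hn : n ≠ 0) :
    ∑ k ∈ range (n + 1), n.choose k * (ballotNumber k * ballotNumber (n - k)) = 2 * n ! := by
  have hcuts : ∀ l ∈ arrangements (univ : Finset (Fin n)), #(ballotCuts l) = 2 := fun l hl ↦
    card_ballotCuts (nodup_of_mem_arrangements hl) <| by
      rintro rfl
      exact hn (by simpa using (length_of_mem_arrangements hl).symm)
  calc ∑ k ∈ range (n + 1), n.choose k * (ballotNumber k * ballotNumber (n - k))
      = ∑ t ∈ (univ : Finset (Fin n)).powerset, ballotNumber #t * ballotNumber (n - #t) := by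
        rw [sum_powerset_apply_card fun k ↦ ballotNumber k * ballotNumber (n - k)]
        simp only [card_univ, Fintype.card_fin, smul_eq_mul]
    _ = ∑ t ∈ (univ : Finset (Fin n)).powerset,
          #(ballotArrangements t) * #(ballotArrangements (univ \ t)) := by
        refine sum_congr rfl fun t ht ↦ ?_
        rw [card_ballotArrangements, card_ballotArrangements,
          card_sdiff_of_subset (mem_powerset.mp ht), card_univ, Fintype.card_fin]
    _ = ∑ l ∈ arrangements (univ : Finset (Fin n)), #(ballotCuts l) :=
        (sum_card_ballotCuts univ).symm
    _ = 2 * n ! := by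
        rw [sum_const_nat hcuts, card_arrangements, card_univ, Fintype.card_fin, mul_comm]

theorem ballotNumber_zero : ballotNumber 0 = 1 :=
  card_eq_one.mpr ⟨[], by
    ext l
    simp +contextual [mem_ballotArrangements, mem_arrangements, IsBallotWord, eq_comm]⟩

theorem ballotNumber_one : ballotNumber 1 = 1 := by
  have h : ballotNumber 1 + ballotNumber 1 = 2 := by
    simpa [sum_range_succ, ballotNumber_zero] using ballotNumber_convolution one_ne_zero
  lia

end Words

section GeneratingFunction
open PowerSeries
open scoped Nat

theorem coeff_recurrence_of_derivative_mul_eq_self {R : Type*} [CommRing R] {F : R⟦X⟧}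
    (hF : d⁄dX R F * (1 - X ^ 2) = F) (n : ℕ) :
    (n + 2) * coeff (n + 2) F = coeff (n + 1) F + n * coeff n F := by
  have h := congrArg (coeff (n + 1)) hF
  have hcoeff : coeff n (d⁄dX R F * X) = n * coeff n F := by
    cases n with
    | zero => simp
    | succ n => rw [coeff_succ_mul_X, coeff_derivative]; push_cast; ring
  rw [mul_sub, mul_one, sq, ← mul_assoc, map_sub, coeff_succ_mul_X, hcoeff, coeff_derivative] at h
  push_cast at h
  linear_combination h

theorem derivative_mul_eq_self_of_sq_mul {R : Type*} [CommRing R] [IsDomain R]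
    [NeZero (2 : R)] {F : R⟦X⟧} (hF : F ^ 2 * (1 - X) = 1 + X) : d⁄dX R F * (1 - X ^ 2) = F := by
  have hF0 : F ≠ 0 := by
    rintro rfl
    simpa using congrArg (coeff 0) hF
  have h2 : (2 : R⟦X⟧) ≠ 0 := by
    rw [← map_ofNat C 2]
    exact (map_ne_zero_iff C C_injective).mpr two_ne_zero
  have hF' : F ^ 2 * -1 + (1 - X) * (2 * F * d⁄dX R F) = 1 := by
    simpa [Derivation.leibniz, Derivation.leibniz_pow, mul_assoc] using congrArg (d⁄dX R) hF
  refine mul_left_cancel₀ (mul_ne_zero h2 hF0) ?_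
  linear_combination (1 + X) * hF' - hF

/-- The exponential generating function `∑ bₙ Xⁿ / n!` of the ballot numbers `bₙ`. -/
noncomputable def ballotEGF : ℚ⟦X⟧ :=
  mk fun n ↦ (ballotNumber n : ℚ) / n !

theorem coeff_ballotEGF_sq (n : ℕ) : coeff n (ballotEGF ^ 2) = if n = 0 then 1 else 2 := by
  rw [sq, coeff_mul, Finset.Nat.sum_antidiagonal_eq_sum_range_succ_mk]
  simp only [ballotEGF, coeff_mk]
  split_ifs with hn
  · simp [hn, ballotNumber_zero]
  · have hconv : (∑ k ∈ Finset.range (n + 1),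
        (n.choose k : ℚ) * (ballotNumber k * ballotNumber (n - k))) = 2 * n ! := by
      exact_mod_cast ballotNumber_convolution hn
    rw [← mul_left_inj' (Nat.cast_ne_zero.mpr n.factorial_ne_zero), ← hconv, Finset.sum_mul]
    refine Finset.sum_congr rfl fun k hk ↦ ?_
    rw [Nat.cast_choose ℚ (Finset.mem_range_succ_iff.mp hk)]
    field_simp

theorem ballotEGF_sq_mul : ballotEGF ^ 2 * (1 - X) = 1 + X := by
  ext n
  rw [mul_sub, mul_one, map_sub, map_add]
  rcases n with _ | _ | n
  · simp [coeff_ballotEGF_sq]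
  · norm_num [coeff_succ_mul_X, coeff_ballotEGF_sq, coeff_one, coeff_X]
  · simp [coeff_succ_mul_X, coeff_ballotEGF_sq, coeff_one, coeff_X]

theorem ballotNumber_add_two (n : ℕ) :
    ballotNumber (n + 2) = ballotNumber (n + 1) + (n + 1) * n * ballotNumber n := by
  have h := coeff_recurrence_of_derivative_mul_eq_self
    (derivative_mul_eq_self_of_sq_mul ballotEGF_sq_mul) n
  simp only [ballotEGF, coeff_mk, Nat.factorial_succ] at h
  push_cast at h
  field_simp at h
  have h' : (ballotNumber (n + 2) : ℚ) =
      ballotNumber (n + 1) + (n + 1) * n * ballotNumber n :=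
    mul_left_cancel₀ (by positivity : (n + 2 : ℚ) ≠ 0) (by linear_combination h)
  exact_mod_cast h'

end GeneratingFunction

section ClosedForm
open scoped Nat

theorem eq_doubleFactorial_of_recurrence {b : ℕ → ℕ} (h0 : b 0 = 1) (h1 : b 1 = 1)
    (hb : ∀ n, b (n + 2) = b (n + 1) + (n + 1) * n * b n) (m : ℕ) :
    b (2 * m) = (2 * m - 1)‼ ^ 2 ∧ b (2 * m + 1) = (2 * m + 1)‼ * (2 * m - 1)‼ := by
  induction m with
  | zero => simp [h0, h1]
  | succ m ih =>
    obtain ⟨heven, hodd⟩ := ih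
    have hdf : (2 * m + 1)‼ = (2 * m + 1) * (2 * m - 1)‼ := Nat.doubleFactorial_add_one _
    have heven' : b (2 * m + 2) = (2 * m + 1)‼ ^ 2 := by
      rw [hb, heven, hodd, hdf]
      ring
    refine ⟨heven', ?_⟩
    calc b (2 * m + 3) = b (2 * m + 2) + (2 * m + 2) * (2 * m + 1) * b (2 * m + 1) := hb _
      _ = (2 * m + 1)‼ ^ 2 + (2 * m + 2) * (2 * m + 1) * ((2 * m + 1)‼ * (2 * m - 1)‼) := by
          rw [heven', hodd]
      _ = (2 * m + 1)‼ ^ 2 + (2 * m + 2) * (2 * m + 1)‼ * (2 * m + 1)‼ := by rw [hdf]; ring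
      _ = (2 * m + 3) * (2 * m + 1)‼ * (2 * m + 1)‼ := by ring
      _ = (2 * m + 3)‼ * (2 * m + 1)‼ := by rw [Nat.doubleFactorial_add_two (2 * m + 1)]

end ClosedForm

section BallotPermutations
open Finset

theorem wordHeight_map_range {α : Type*} [LinearOrder α] (w : ℕ → α) (m : ℕ) :
    wordHeight ((List.range (m + 1)).map w) =
      #{k ∈ range m | w k < w (k + 1)} - #{k ∈ range m | w (k + 1) < w k} := by
  induction m with
  | zero => simp
  | succ m ih =>
    have happend : (List.range (m + 1 + 1)).map w =
        (List.range m).map w ++ [w m, w (m + 1)] := by simp [List.range_succ]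
    rw [List.range_succ, List.map_append, List.map_singleton] at ih
    rw [happend, wordHeight_append_pair, ih, ascentSign]
    simp only [card_filter, sum_range_succ]
    push_cast
    ring

variable {n : ℕ} {π : Equiv.Perm (Fin n)}

theorem map_permWord_range :
    (List.range n).map (permWord n π) = (List.ofFn π).map fun x : Fin n ↦ (x : ℕ) + 1 := by
  apply List.ext_getElem <;> simp +contextual [permWord]

theorem isBallot_iff_isBallotWord : IsBallot n π ↔ IsBallotWord (List.ofFn π) := by
  have hmono : StrictMono fun x : Fin n ↦ (x : ℕ) + 1 := fun x y hxy ↦ by simpa using hxy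
  rw [← isBallotWord_map hmono, ← map_permWord_range]
  have height_take (i : ℕ) (hi : i ∈ Icc 1 n) :
      wordHeight (((List.range n).map (permWord n π)).take i) =
        #{k ∈ range (i - 1) | permWord n π k < permWord n π (k + 1)} -
          #{k ∈ range (i - 1) | permWord n π (k + 1) < permWord n π k} := by
    obtain ⟨hi0, hin⟩ := mem_Icc.mp hi
    rw [← wordHeight_map_range, Nat.sub_add_cancel hi0, ← List.map_take, List.take_range,
      min_eq_left hin]
  simp only [IsBallot, IsBallotWord, List.length_map, List.length_range]
  constructor
  · intro h i hi
    simpa [height_take i hi] using h i (mem_Icc.mp hi).2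
  · intro h i hi
    rcases i.eq_zero_or_pos with rfl | hi0
    · simp
    · have hi' : i ∈ Icc 1 n := mem_Icc.mpr ⟨hi0, hi⟩
      simpa [height_take i hi'] using h i hi'

theorem ofFn_perm_injective :
    Function.Injective fun π : Equiv.Perm (Fin n) ↦ List.ofFn π :=
  List.ofFn_injective.comp DFunLike.coe_injective

theorem image_ofFn_univ :
    univ.image (fun π : Equiv.Perm (Fin n) ↦ List.ofFn π) = arrangements univ := by
  refine eq_of_subset_of_card_le (fun l hl ↦ ?_) ?_
  · obtain ⟨π, -, rfl⟩ := mem_image.mp hl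
    convert mem_arrangements_toFinset (List.nodup_ofFn.mpr π.injective)
    ext x
    simpa using π.surjective x
  · rw [card_image_of_injective _ ofFn_perm_injective,
      card_arrangements, card_univ, card_univ, Fintype.card_perm]

theorem card_isBallot_eq_ballotNumber :
    Nat.card {π : Equiv.Perm (Fin n) // IsBallot n π} = ballotNumber n := by
  classical
  rw [Nat.card_eq_fintype_card, Fintype.card_subtype, ballotNumber, ballotArrangements,
    ← image_ofFn_univ, filter_image, card_image_of_injective _ ofFn_perm_injective]
  simp only [isBallot_iff_isBallotWord]

end BallotPermutations

/-- The number of ballot permutations of `[n]` is `((n-1)!!)²` for even `n`,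
and `n!!·(n-2)!!` for odd `n`. -/
theorem ballot_count_doubleFactorial (n : ℕ) (hn : 1 ≤ n) :
    Nat.card {π : Equiv.Perm (Fin n) // IsBallot n π} =
      if Even n then Nat.doubleFactorial (n - 1) ^ 2
      else Nat.doubleFactorial n * Nat.doubleFactorial (n - 2) := by
  have closedForm (m : ℕ) :=
    eq_doubleFactorial_of_recurrence ballotNumber_zero ballotNumber_one ballotNumber_add_two m
  rw [card_isBallot_eq_ballotNumber]
  rcases Nat.even_or_odd' n with ⟨m, rfl | rfl⟩
  · rw [if_pos (even_two_mul m)]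
    exact (closedForm m).1
  · rw [if_neg (Nat.not_even_two_mul_add_one m)]
    exact (closedForm m).2
end

section
/- For every integer n ≥ 1 and every integer d with 0 ≤ d ≤ ⌊(n−1)/2⌋, the number of ballot permutations of [n] with exactly d descents equals the number of odd order permutations π of [n] with M(π) = d. -/
/-- The number of descents of a permutation of `[n]`. -/
def desNum (n : ℕ) (π : Equiv.Perm (Fin n)) : ℕ :=
  ((Finset.range (n - 1)).filter (fun i => permWord n π (i + 1) < permWord n π i)).card

/-- The cyclic descent number of a cycle `c = (c₁c₂⋯c_k)` (as a permutation):
the number of `i ∈ [k]` with `cᵢ > cᵢ₊₁` (indices cyclic), i.e. the number of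
points `x` with `c x < x`. -/
def cdes {n : ℕ} (c : Equiv.Perm (Fin n)) : ℕ :=
  (Finset.univ.filter (fun x : Fin n => c x < x)).card

/-- The cyclic ascent number: the number of points `x` with `x < c x`. -/
def casc {n : ℕ} (c : Equiv.Perm (Fin n)) : ℕ :=
  (Finset.univ.filter (fun x : Fin n => x < c x)).card

/-- `M(π) = Σ_c min(cdes c, casc c)`, summed over all cycles `c` of `π`. -/
def Mstat {n : ℕ} (π : Equiv.Perm (Fin n)) : ℕ :=
  ∑ c ∈ π.cycleFactorsFinset, min (cdes c) (casc c)

/-!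
Read a word as a walk, up at ascents and down at descents. Of all the ways to cut a walk in two,
exactly two leave a left part that stays above its end and a right part that stays above its start
(a ballot word): just before the first minimum and just after the last one. For the exponential
generating series in `z` this says that the ballot series `N` and the series `R` of the left parts
satisfy `R * N = 1 + (1 + X) * (P - 1)`, where `P` is the series of the Eulerian polynomials.

Removing the maximal letter gives the Riccati equation `P' = P * (1 + X * (P - 1))`, from which
`Q = R * N` satisfies a linear equation `Q' = (A + B) * Q`. Here `A` is the derivative of the series
of odd cycles weighted by the minimum of their numbers of cyclic ascents and descents, and `B` is,
up to its constant term, the same with the maximum. The solution `F` of `F' = A * F` is the series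
of odd order permutations, and `Q = F * G` with `G' = B * G`. All nonconstant terms `Xᵈ zⁿ` of `N`
and `F` satisfy `2d < n`, those of `R` and `G` satisfy `2d > n`, and such a factorisation is unique;
hence `N = F`.
-/

namespace BallotOddOrder

open Finset
open scoped Polynomial

section ExponentialSeries

open PowerSeries

variable {A : Type*} [CommRing A]

/-- The binomial convolution of two sequences, whose exponential generating function is the
product of theirs. -/
def binomConv (a b : ℕ → A) (n : ℕ) : A :=
  ∑ k ∈ range (n + 1), n.choose k • (a k * b (n - k))

lemma sum_powerset_eq_binomConv {α : Type*} [DecidableEq α] (a b : ℕ → A) (S : Finset α) :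
    ∑ T ∈ S.powerset, a #T * b #(S \ T) = binomConv a b #S := by
  rw [binomConv, ← sum_powerset_apply_card (fun k => a k * b (#S - k))]
  exact sum_congr rfl fun T hT => by rw [card_sdiff_of_subset (mem_powerset.1 hT)]

variable [Algebra ℚ A]

/-- The exponential generating function `∑ aₙ zⁿ / n!`. -/
noncomputable def egf (a : ℕ → A) : A⟦X⟧ := mk fun n => (n.factorial : ℚ)⁻¹ • a n

lemma coeff_egf (a : ℕ → A) (n : ℕ) : coeff n (egf a) = (n.factorial : ℚ)⁻¹ • a n :=
  coeff_mk n _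

lemma coeff_zero_egf (a : ℕ → A) : coeff 0 (egf a) = a 0 := by
  rw [coeff_egf, Nat.factorial_zero, Nat.cast_one, inv_one, one_smul]

lemma egf_injective : Function.Injective (egf : (ℕ → A) → A⟦X⟧) := by
  intro a b h
  ext n
  have hn : (n.factorial : ℚ)⁻¹ ≠ 0 := inv_ne_zero (Nat.cast_ne_zero.2 n.factorial_ne_zero)
  have hab := congrArg (coeff n) h
  rw [coeff_egf, coeff_egf] at hab
  exact (IsUnit.mk0 _ hn).smul_left_cancel.1 hab

lemma egf_binomConv (a b : ℕ → A) : egf (binomConv a b) = egf a * egf b := by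
  ext n
  rw [coeff_mul,
    Nat.sum_antidiagonal_eq_sum_range_succ fun i j => coeff i (egf a) * coeff j (egf b),
    coeff_egf, binomConv, smul_sum]
  refine sum_congr rfl fun k hk => ?_
  have hkn : k ≤ n := Nat.lt_succ_iff.1 (mem_range.1 hk)
  rw [coeff_egf, coeff_egf, smul_mul_smul_comm, ← Nat.cast_smul_eq_nsmul ℚ, smul_smul,
    Nat.cast_choose ℚ hkn]
  congr 1
  field_simp

lemma derivative_egf (a : ℕ → A) : d⁄dX A (egf a) = egf fun n => a (n + 1) := by
  ext n
  rw [coeff_derivative, coeff_egf, coeff_egf, ← Nat.cast_succ, mul_comm, ← nsmul_eq_mul,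
    ← Nat.cast_smul_eq_nsmul ℚ, smul_smul, Nat.factorial_succ]
  congr 1
  push_cast
  field_simp

lemma coeff_succ_of_derivative_eq_mul {F G : A⟦X⟧} (h : d⁄dX A F = G * F) (n : ℕ) :
    coeff (n + 1) F =
      ((n + 1 : ℕ) : ℚ)⁻¹ • ∑ p ∈ antidiagonal n, coeff p.1 G * coeff p.2 F := by
  rw [← coeff_mul, ← h, coeff_derivative, ← Nat.cast_succ, mul_comm, ← nsmul_eq_mul,
    ← Nat.cast_smul_eq_nsmul ℚ, smul_smul, inv_mul_cancel₀ (Nat.cast_ne_zero.2 n.succ_ne_zero),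
    one_smul]

lemma eq_zero_of_derivative_eq_mul {F G : A⟦X⟧} (h : d⁄dX A F = G * F)
    (h0 : coeff 0 F = 0) : F = 0 := by
  ext n
  rw [map_zero]
  induction n using Nat.strong_induction_on with
  | _ n ih =>
    rcases n with _ | n
    · exact h0
    · rw [coeff_succ_of_derivative_eq_mul h, sum_eq_zero, smul_zero]
      intro p hp
      rw [ih p.2 (by have := mem_antidiagonal.1 hp; lia), mul_zero]

lemma derivative_eq_mul_of_derivative_mul_eq {A : Type*} [CommRing A] {F G H₁ H₂ : A⟦X⟧}
    (hF : IsUnit F) (hF' : d⁄dX A F = H₁ * F) (hFG : d⁄dX A (F * G) = (H₁ + H₂) * (F * G)) :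
    d⁄dX A G = H₂ * G := by
  rw [Derivation.leibniz, hF', smul_eq_mul, smul_eq_mul] at hFG
  refine hF.mul_left_cancel ?_
  linear_combination hFG

end ExponentialSeries

section Eulerian

open PowerSeries

variable {A : Type*} [CommRing A]

lemma derivative_rescale_neg_one (F : A⟦X⟧) :
    d⁄dX A (rescale (-1) F) = -rescale (-1) (d⁄dX A F) := by
  ext n
  simp only [coeff_derivative, coeff_rescale, map_neg, pow_succ]
  ring

lemma rescale_C (a b : A) : rescale a (C b) = C b := by
  ext n
  rcases n with _ | n <;> simp [coeff_C]

variable [Algebra ℚ A] {t : A} {P : A⟦X⟧}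

/-- The Riccati equation of the Eulerian series becomes a linear equation for the difference of
the two sides. -/
lemma rescale_neg_one_mul_of_riccati (hP : d⁄dX A P = P * (1 + C t * (P - 1)))
    (h0 : coeff 0 P = 1) :
    rescale (-1) P * (1 + (1 + C t) * (P - 1)) = 1 + C t * (P - 1) := by
  have hQ : d⁄dX A (rescale (-1) P) =
      -(rescale (-1) P * (1 + C t * (rescale (-1) P - 1))) := by
    rw [derivative_rescale_neg_one, hP]
    simp only [map_mul, map_add, map_sub, map_one, rescale_C]
  have hD : d⁄dX A (rescale (-1) P * (1 + (1 + C t) * (P - 1)) - (1 + C t * (P - 1))) =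
      C t * (P - rescale (-1) P) *
        (rescale (-1) P * (1 + (1 + C t) * (P - 1)) - (1 + C t * (P - 1))) := by
    simp only [map_sub, map_add, Derivation.leibniz, derivative_C, derivative_one, hP, hQ,
      smul_eq_mul]
    ring
  refine sub_eq_zero.1 (eq_zero_of_derivative_eq_mul hD ?_)
  have hQ0 : coeff 0 (rescale (-1) P) = 1 := by rw [coeff_rescale, pow_zero, one_mul, h0]
  rw [coeff_zero_eq_constantCoeff_apply] at h0 hQ0 ⊢
  simp only [map_sub, map_add, map_mul, map_one, h0, hQ0, constantCoeff_C]
  ring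

lemma derivative_of_riccati (hP : d⁄dX A P = P * (1 + C t * (P - 1)))
    (h0 : coeff 0 P = 1) :
    d⁄dX A (1 + (1 + C t) * (P - 1)) =
      (1 + C t * (P - 1) + C t * rescale (-1) P) * (1 + (1 + C t) * (P - 1)) := by
  have hrefl := rescale_neg_one_mul_of_riccati hP h0
  simp only [map_sub, map_add, Derivation.leibniz, derivative_C, derivative_one, hP, smul_eq_mul]
  linear_combination -C t * hrefl

end Eulerian

section Diagonal

open PowerSeries

variable {K : Type*} [CommRing K] {F G : K[X]⟦X⟧}

lemma coeff_mul_of_coeff_eq_zero {A : Type*} [CommRing A] {F : A⟦X⟧} {n : ℕ}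
    (h : ∀ k < n, coeff k F = 0) (G : A⟦X⟧) : coeff n (F * G) = coeff n F * coeff 0 G := by
  rw [coeff_mul, sum_eq_single (n, 0)]
  · rintro ⟨i, j⟩ hij hne
    have hij := mem_antidiagonal.1 hij
    rw [h i (by grind), zero_mul]
  · simp

/-- A series in `z` over `K[X]` all of whose nonconstant terms `Xᵈ zⁿ` satisfy `2d < n`. -/
def BelowDiagonal (F : K[X]⟦X⟧) : Prop :=
  ∀ n, 0 < n → 2 * (coeff n F).natDegree < n

/-- A series in `z` over `K[X]` all of whose nonconstant terms `Xᵈ zⁿ` satisfy `n < 2d`. -/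
def AboveDiagonal (F : K[X]⟦X⟧) : Prop :=
  ∀ n, 0 < n → Polynomial.X ^ (n / 2 + 1) ∣ coeff n F

lemma eq_of_mul_eq_mul_of_diagonal {F₁ F₂ G₁ G₂ : K[X]⟦X⟧}
    (hF₁ : BelowDiagonal F₁) (hF₂ : BelowDiagonal F₂)
    (hG₁ : AboveDiagonal G₁) (hG₂ : AboveDiagonal G₂)
    (hF₁0 : coeff 0 F₁ = 1) (hF₂0 : coeff 0 F₂ = 1)
    (hG₁0 : coeff 0 G₁ = 1) (hG₂0 : coeff 0 G₂ = 1)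
    (h : F₁ * G₁ = F₂ * G₂) : F₁ = F₂ := by
  have hsum : (F₁ - F₂) * G₁ + (G₁ - G₂) * F₂ = 0 := by linear_combination h
  have hzero (n : ℕ) : coeff n (F₁ - F₂) = 0 ∧ coeff n (G₁ - G₂) = 0 := by
    induction n using Nat.strong_induction_on with
    | _ n ih =>
      rcases n.eq_zero_or_pos with rfl | hn
      · simp only [map_sub, hF₁0, hF₂0, hG₁0, hG₂0, sub_self, and_self]
      have hn0 : coeff n (F₁ - F₂) + coeff n (G₁ - G₂) = 0 := by
        have := congrArg (coeff n) hsum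
        rwa [map_add, coeff_mul_of_coeff_eq_zero (fun k hk => (ih k hk).1),
          coeff_mul_of_coeff_eq_zero (fun k hk => (ih k hk).2), hG₁0, hF₂0, mul_one, mul_one,
          map_zero] at this
      have hdvd : Polynomial.X ^ (n / 2 + 1) ∣ coeff n (F₁ - F₂) := by
        rw [eq_neg_of_add_eq_zero_left hn0, dvd_neg, map_sub]
        exact dvd_sub (hG₁ n hn) (hG₂ n hn)
      have hdeg : (coeff n (F₁ - F₂)).natDegree < n / 2 + 1 := by
        have := Polynomial.natDegree_sub_le (coeff n F₁) (coeff n F₂)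
        have := hF₁ n hn
        have := hF₂ n hn
        rw [map_sub]
        lia
      have hF : coeff n (F₁ - F₂) = 0 := by
        ext d
        rcases lt_or_ge d (n / 2 + 1) with hd | hd
        · exact Polynomial.X_pow_dvd_iff.1 hdvd d hd
        · exact Polynomial.coeff_eq_zero_of_natDegree_lt (hdeg.trans_le hd)
      exact ⟨hF, by rwa [hF, zero_add] at hn0⟩
  exact sub_eq_zero.1 (ext fun n => (hzero n).1)

variable [Algebra ℚ K]

lemma belowDiagonal_egf {a : ℕ → K[X]} (ha : ∀ n, 0 < n → 2 * (a n).natDegree < n) :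
    BelowDiagonal (egf a) := by
  intro n hn
  rw [coeff_egf]
  have := Polynomial.natDegree_smul_le (n.factorial : ℚ)⁻¹ (a n)
  have := ha n hn
  lia

lemma aboveDiagonal_egf {a : ℕ → K[X]}
    (ha : ∀ n, 0 < n → Polynomial.X ^ (n / 2 + 1) ∣ a n) : AboveDiagonal (egf a) := by
  intro n hn
  rw [coeff_egf]
  exact dvd_smul_of_dvd _ (ha n hn)

lemma belowDiagonal_of_derivative_eq_mul (h : d⁄dX K[X] F = G * F) (h0 : coeff 0 F = 1)
    (hG : ∀ n, 2 * (coeff n G).natDegree ≤ n) : BelowDiagonal F := by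
  intro n hn
  induction n using Nat.strong_induction_on with
  | _ n ih =>
    obtain ⟨n, rfl⟩ := Nat.exists_eq_succ_of_ne_zero hn.ne'
    have hterm (p : ℕ × ℕ) (hp : p ∈ antidiagonal n) :
        (coeff p.1 G * coeff p.2 F).natDegree ≤ n / 2 := by
      have hp := mem_antidiagonal.1 hp
      have hF : 2 * (coeff p.2 F).natDegree ≤ p.2 := by
        rcases p.2.eq_zero_or_pos with hp0 | hp0
        · rw [hp0, h0, Polynomial.natDegree_one]
        · exact (ih p.2 (by lia) hp0).le
      have := hG p.1
      have := Polynomial.natDegree_mul_le (p := coeff p.1 G) (q := coeff p.2 F)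
      lia
    rw [Nat.succ_eq_add_one, coeff_succ_of_derivative_eq_mul h]
    have := Polynomial.natDegree_sum_le_of_forall_le _ _ hterm
    have := Polynomial.natDegree_smul_le ((n + 1 : ℕ) : ℚ)⁻¹
      (∑ p ∈ antidiagonal n, coeff p.1 G * coeff p.2 F)
    lia

lemma aboveDiagonal_of_derivative_eq_mul (h : d⁄dX K[X] F = G * F) (h0 : coeff 0 F = 1)
    (hG : ∀ n, Polynomial.X ^ ((n + 1) / 2 + 1) ∣ coeff n G) : AboveDiagonal F := by
  intro n hn
  induction n using Nat.strong_induction_on with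
  | _ n ih =>
    obtain ⟨n, rfl⟩ := Nat.exists_eq_succ_of_ne_zero hn.ne'
    rw [Nat.succ_eq_add_one, coeff_succ_of_derivative_eq_mul h]
    refine dvd_smul_of_dvd _ (dvd_sum fun p hp => ?_)
    have hp := mem_antidiagonal.1 hp
    rcases p.2.eq_zero_or_pos with hp0 | hp0
    · rw [hp0, h0, mul_one, ← hp, hp0, add_zero]
      exact hG p.1
    · have hmul := mul_dvd_mul (hG p.1) (ih p.2 (by lia) hp0)
      rw [← pow_add] at hmul
      exact (pow_dvd_pow _ (by lia)).trans hmul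

end Diagonal

section Arrangements

variable {α : Type*}

/-- The words in which every element of `S` occurs exactly once and no other letter occurs. -/
def arrangements (S : Finset α) : Finset (List α) := ⟨S.val.lists, Multiset.lists_nodup_finset S⟩

lemma mem_arrangements {S : Finset α} {l : List α} :
    l ∈ arrangements S ↔ (l : Multiset α) = S.val :=
  (Multiset.mem_lists_iff _ _).trans eq_comm

variable {S : Finset α} {l : List α}

lemma length_of_mem_arrangements (hl : l ∈ arrangements S) : l.length = #S :=
  congrArg Multiset.card (mem_arrangements.1 hl)

lemma nodup_of_mem_arrangements (hl : l ∈ arrangements S) : l.Nodup := by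
  rw [← Multiset.coe_nodup, mem_arrangements.1 hl]
  exact S.nodup

lemma mem_iff_of_mem_arrangements (hl : l ∈ arrangements S) {x : α} : x ∈ l ↔ x ∈ S := by
  rw [← Multiset.mem_coe, mem_arrangements.1 hl, mem_val]

lemma arrangements_empty : arrangements (∅ : Finset α) = {[]} := by
  ext l
  simp [mem_arrangements]

lemma arrangements_map {β : Type*} (f : α ↪ β) (S : Finset α) :
    arrangements (S.map f) = (arrangements S).map ⟨List.map f, f.injective.list_map⟩ := by
  ext l
  simp only [mem_map, mem_arrangements, map_val, Function.Embedding.coeFn_mk]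
  constructor
  · intro hl
    have hrange : ∀ y ∈ l, y ∈ Set.range f := fun y hy => by
      obtain ⟨x, -, rfl⟩ := Multiset.mem_map.1 (hl ▸ Multiset.mem_coe.2 hy)
      exact ⟨x, rfl⟩
    obtain ⟨l, rfl⟩ : l ∈ Set.range (List.map f) := (Set.range_list_map f).ge hrange
    exact ⟨l, Multiset.map_injective f.injective (by rw [← hl, Multiset.map_coe]), rfl⟩
  · rintro ⟨l, hl, rfl⟩
    rw [← hl, Multiset.map_coe]

variable {A : Type*} [AddCommMonoid A] [DecidableEq α]

lemma sum_powerset_arrangements (S : Finset α) (F : List α → List α → A) :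
    ∑ T ∈ S.powerset, ∑ l₁ ∈ arrangements T, ∑ l₂ ∈ arrangements (S \ T), F l₁ l₂ =
      ∑ l ∈ arrangements S, ∑ i ∈ range (#S + 1), F (l.take i) (l.drop i) := by
  simp only [← sum_product', sum_sigma' S.powerset fun T => arrangements T ×ˢ arrangements (S \ T)]
  refine sum_bij' (fun x _ => (x.2.1 ++ x.2.2, x.2.1.length))
    (fun y _ => ⟨(y.1.take y.2).toFinset, y.1.take y.2, y.1.drop y.2⟩) ?_ ?_ ?_ ?_ ?_
  · rintro ⟨T, l₁, l₂⟩ hx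
    simp only [mem_sigma, mem_powerset, mem_product, mem_range] at hx ⊢
    obtain ⟨hTS, h₁, h₂⟩ := hx
    constructor
    · rw [mem_arrangements] at *
      rw [← Multiset.coe_add, h₁, h₂, sdiff_val, add_tsub_cancel_of_le (val_le_iff.2 hTS)]
    · rw [length_of_mem_arrangements h₁]
      exact Nat.lt_succ_of_le (card_le_card hTS)
  · rintro ⟨l, i⟩ hy
    simp only [mem_sigma, mem_powerset, mem_product, mem_range] at hy ⊢
    obtain ⟨hl, -⟩ := hy
    have hval : (l.take i).toFinset.val = l.take i := by
      rw [List.toFinset_val, ((nodup_of_mem_arrangements hl).sublist (l.take_sublist i)).dedup]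
    have hsum : (l.take i : Multiset α) + l.drop i = S.val := by
      rw [Multiset.coe_add, List.take_append_drop, mem_arrangements.1 hl]
    refine ⟨?_, mem_arrangements.2 hval.symm, ?_⟩
    · rw [← val_le_iff, hval, ← hsum]
      exact Multiset.le_add_right _ _
    · rw [mem_arrangements, sdiff_val, hval, ← hsum, add_tsub_cancel_left]
  · rintro ⟨T, l₁, l₂⟩ hx
    simp only [mem_sigma, mem_product] at hx
    have hT : l₁.toFinset = T := ext fun x => by
      rw [List.mem_toFinset, mem_iff_of_mem_arrangements hx.2.1]
    simp only [List.take_left, List.drop_left, hT]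
  · rintro ⟨l, i⟩ hy
    simp only [mem_product, mem_range] at hy
    have hi : i ≤ l.length := by
      rw [length_of_mem_arrangements hy.1]
      exact Nat.lt_succ_iff.1 hy.2
    simp only [List.take_append_drop, List.length_take_of_le hi]
  · rintro ⟨T, l₁, l₂⟩ -
    simp only [List.take_left, List.drop_left]

lemma sum_arrangements_insert {M : α} (hM : M ∉ S) (F : List α → A) :
    ∑ l ∈ arrangements (insert M S), F l =
      ∑ T ∈ S.powerset, ∑ l₁ ∈ arrangements T, ∑ l₂ ∈ arrangements (S \ T), F (l₁ ++ M :: l₂) := by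
  have hmem (l₁ l₂ : List α) :
      l₁ ++ M :: l₂ ∈ arrangements (insert M S) ↔ l₁ ++ l₂ ∈ arrangements S := by
    rw [mem_arrangements, mem_arrangements, Multiset.coe_eq_coe.2 List.perm_middle,
      insert_val_of_notMem hM, ← Multiset.cons_coe, Multiset.cons_inj_right]
  rw [sum_powerset_arrangements S fun l₁ l₂ => F (l₁ ++ M :: l₂), ← sum_product', eq_comm]
  refine sum_bij (fun x _ => x.1.take x.2 ++ M :: x.1.drop x.2) ?_ ?_ ?_ fun _ _ => rfl
  · intro x hx
    rw [hmem, List.take_append_drop]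
    exact (mem_product.1 hx).1
  · rintro ⟨l, i⟩ hx ⟨m, j⟩ hy h
    simp only [mem_product, mem_range] at hx hy h
    have hMm : M ∉ m := fun h => hM ((mem_iff_of_mem_arrangements hy.1).1 h)
    obtain ⟨htake, -, hdrop⟩ := (List.append_cons_inj_of_notMem
      (fun h => hMm (List.mem_of_mem_take h)) (fun h => hMm (List.mem_of_mem_drop h))).1 h.symm
    have hlen := congrArg List.length htake
    have := length_of_mem_arrangements hx.1
    have := length_of_mem_arrangements hy.1
    refine Prod.ext ?_ ?_
    · change l = m
      rw [← List.take_append_drop i l, ← htake, ← hdrop, List.take_append_drop]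
    · rw [List.length_take_of_le (by lia), List.length_take_of_le (by lia)] at hlen
      exact hlen.symm
  · intro l hl
    obtain ⟨l₁, l₂, rfl⟩ :=
      List.append_of_mem ((mem_iff_of_mem_arrangements hl).2 (mem_insert_self M S))
    have hl := (hmem l₁ l₂).1 hl
    have hlen := length_of_mem_arrangements hl
    rw [List.length_append] at hlen
    exact ⟨(l₁ ++ l₂, l₁.length), mem_product.2 ⟨hl, mem_range.2 (by lia)⟩, by simp⟩

end Arrangements

section Patterns

variable {α : Type*} [LinearOrder α]

open scoped Classical in
/-- The descent pattern of a word. Only the values at `k` with `k + 1 < l.length` are meaningful: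
as `none` is below every letter, the last position of a word counts as a descent here. -/
noncomputable def descents (l : List α) (k : ℕ) : Bool := decide (l[k + 1]? < l[k]?)

lemma descents_iff {l : List α} {k : ℕ} : descents l k ↔ l[k + 1]? < l[k]? := by
  simp only [descents, decide_eq_true_eq]

lemma descents_drop (l : List α) (i : ℕ) : descents (l.drop i) = fun k => descents l (i + k) := by
  funext k
  rw [Bool.eq_iff_iff, descents_iff, descents_iff, List.getElem?_drop, List.getElem?_drop,
    add_assoc]

lemma descents_take (l : List α) {i k : ℕ} (hk : k + 1 < i) :
    descents (l.take i) k = descents l k := by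
  rw [Bool.eq_iff_iff, descents_iff, descents_iff, List.getElem?_take_of_lt hk,
    List.getElem?_take_of_lt ((Nat.lt_succ_self k).trans hk)]

lemma descents_map {β : Type*} [LinearOrder β] {f : α → β} (hf : StrictMono f) (l : List α) :
    descents (l.map f) = descents l := by
  funext k
  rw [Bool.eq_iff_iff, descents_iff, descents_iff, List.getElem?_map, List.getElem?_map]
  cases l[k + 1]? <;> cases l[k]? <;> simp [hf.lt_iff_lt]

variable {A : Type*} [CommRing A]

/-- The sum of a statistic `Φ n s` of the length `n` and the descent pattern `s` of a word over all
arrangements of `n` letters. -/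
noncomputable def wordSum (Φ : ℕ → (ℕ → Bool) → A) (n : ℕ) : A :=
  ∑ l ∈ arrangements (univ : Finset (Fin n)), Φ n (descents l)

lemma sum_arrangements_eq_wordSum (Φ : ℕ → (ℕ → Bool) → A) (S : Finset α) :
    ∑ l ∈ arrangements S, Φ l.length (descents l) = wordSum Φ #S := by
  have hS := congrArg arrangements (S.map_orderEmbOfFin_univ rfl)
  rw [← hS, arrangements_map, sum_map, wordSum]
  refine sum_congr rfl fun l hl => ?_
  simp only [Function.Embedding.coeFn_mk, List.length_map, length_of_mem_arrangements hl,
    card_univ, Fintype.card_fin]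
  exact congrArg _ (descents_map (S.orderEmbOfFin rfl).strictMono l)

lemma sum_powerset_mul_eq_binomConv (Φ Ψ : ℕ → (ℕ → Bool) → A) (S : Finset α) :
    ∑ T ∈ S.powerset, ∑ l₁ ∈ arrangements T, ∑ l₂ ∈ arrangements (S \ T),
      Φ l₁.length (descents l₁) * Ψ l₂.length (descents l₂) =
        binomConv (wordSum Φ) (wordSum Ψ) #S := by
  simp only [← sum_mul_sum, sum_arrangements_eq_wordSum]
  exact sum_powerset_eq_binomConv _ _ S

lemma wordSum_succ_eq_binomConv {Φ Ψ Ξ : ℕ → (ℕ → Bool) → A}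
    (h : ∀ (l₁ l₂ : List ℕ) (M : ℕ), (∀ x ∈ l₁, x < M) → (∀ x ∈ l₂, x < M) →
      Φ (l₁ ++ M :: l₂).length (descents (l₁ ++ M :: l₂)) =
        Ψ l₁.length (descents l₁) * Ξ l₂.length (descents l₂)) (n : ℕ) :
    wordSum Φ (n + 1) = binomConv (wordSum Ψ) (wordSum Ξ) n := by
  conv_lhs => rw [← card_range (n + 1)]
  rw [← sum_arrangements_eq_wordSum Φ, range_add_one,
    sum_arrangements_insert notMem_range_self]
  conv_rhs => rw [← card_range n]
  rw [← sum_powerset_mul_eq_binomConv]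
  refine sum_congr rfl fun T hT => sum_congr rfl fun l₁ hl₁ => sum_congr rfl fun l₂ hl₂ =>
    h l₁ l₂ n (fun x hx => ?_) (fun x hx => ?_)
  · exact mem_range.1 (mem_powerset.1 hT ((mem_iff_of_mem_arrangements hl₁).1 hx))
  · exact mem_range.1 (sdiff_subset ((mem_iff_of_mem_arrangements hl₂).1 hx))

lemma binomConv_wordSum (Φ Ψ : ℕ → (ℕ → Bool) → A) (n : ℕ) :
    binomConv (wordSum Φ) (wordSum Ψ) n = ∑ l ∈ arrangements (univ : Finset (Fin n)),
      ∑ i ∈ range (n + 1), Φ i (descents (l.take i)) * Ψ (n - i) (descents (l.drop i)) := by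
  have h := sum_powerset_mul_eq_binomConv Φ Ψ (univ : Finset (Fin n))
  rw [sum_powerset_arrangements univ fun l₁ l₂ =>
    Φ l₁.length (descents l₁) * Ψ l₂.length (descents l₂), card_univ, Fintype.card_fin] at h
  rw [← h]
  refine sum_congr rfl fun l hl => sum_congr rfl fun i hi => ?_
  have hln : l.length = n := by rw [length_of_mem_arrangements hl, card_univ, Fintype.card_fin]
  rw [List.length_take_of_le (by have := mem_range.1 hi; lia), List.length_drop, hln]

end Patterns

section Walks

/-- A pattern `s` is read as a walk whose `k`-th step is down if `s k` holds and up otherwise;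
this is the number of down steps among the first `j` steps. -/
def downSteps (s : ℕ → Bool) (j : ℕ) : ℕ := Nat.count (fun k => s k = true) j

/-- The height of the walk of `s` after `j` steps. -/
def height (s : ℕ → Bool) (j : ℕ) : ℤ := j - 2 * downSteps s j

variable {s s' : ℕ → Bool}

lemma downSteps_zero : downSteps s 0 = 0 := Nat.count_zero _

lemma downSteps_add (i j : ℕ) :
    downSteps s (i + j) = downSteps s i + downSteps (fun k => s (i + k)) j :=
  Nat.count_add _ i j

lemma downSteps_succ (j : ℕ) : downSteps s (j + 1) = downSteps s j + if s j then 1 else 0 :=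
  Nat.count_succ _ j

lemma downSteps_succ' (j : ℕ) :
    downSteps s (j + 1) = downSteps (fun k => s (k + 1)) j + if s 0 then 1 else 0 :=
  Nat.count_succ' _ j

lemma downSteps_congr {j : ℕ} (h : ∀ k < j, s k = s' k) : downSteps s j = downSteps s' j :=
  le_antisymm (Nat.count_mono_left fun k hk => (h k hk ▸ id))
    (Nat.count_mono_left fun k hk => (h k hk ▸ id))

lemma downSteps_le (j : ℕ) : downSteps s j ≤ j := Nat.count_le _

lemma downSteps_not_add (s : ℕ → Bool) (j : ℕ) :
    downSteps (fun k => !s k) j + downSteps s j = j := by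
  induction j with
  | zero => rw [downSteps_zero, downSteps_zero]
  | succ j ih =>
    rw [downSteps_succ, downSteps_succ]
    cases s j <;> simp <;> lia

lemma height_zero : height s 0 = 0 := by
  rw [height, downSteps_zero, Nat.cast_zero, mul_zero, sub_zero]

lemma height_succ (j : ℕ) : height s (j + 1) = height s j + if s j then -1 else 1 := by
  rw [height, height, downSteps_succ]
  split_ifs <;> push_cast <;> ring

lemma height_add (i j : ℕ) : height s (i + j) = height s i + height (fun k => s (i + k)) j := by
  rw [height, height, height, downSteps_add]
  push_cast
  ring

lemma height_congr {j : ℕ} (h : ∀ k < j, s k = s' k) : height s j = height s' j := by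
  rw [height, height, downSteps_congr h]

/-- The walk with the `n` vertices `0, …, n - 1` never goes below its starting height. -/
def Ballot (n : ℕ) (s : ℕ → Bool) : Prop := ∀ j < n, 0 ≤ height s j

/-- The walk with the `n` vertices `0, …, n - 1` never goes below its final height. -/
def Coballot (n : ℕ) (s : ℕ → Bool) : Prop := ∀ j < n, height s (n - 1) ≤ height s j

/-- The walk with `n` vertices attains its minimal height at `a` for the first time. -/
def IsFirstMin (n : ℕ) (s : ℕ → Bool) (a : ℕ) : Prop :=
  a < n ∧ (∀ j < n, height s a ≤ height s j) ∧ ∀ j < a, height s a < height s j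

/-- The walk with `n` vertices attains its minimal height at `b` for the last time. -/
def IsLastMin (n : ℕ) (s : ℕ → Bool) (b : ℕ) : Prop :=
  b < n ∧ (∀ j < n, height s b ≤ height s j) ∧ ∀ j < n, b < j → height s b < height s j

variable {n i a b : ℕ}

lemma coballot_congr (h : ∀ k, k + 1 < n → s k = s' k) : Coballot n s ↔ Coballot n s' := by
  have hheight (j : ℕ) (hj : j < n) : height s j = height s' j :=
    height_congr fun k hk => h k (by lia)
  refine forall₂_congr fun j hj => ?_
  rw [hheight j hj, hheight (n - 1) (by lia)]

lemma exists_isFirstMin (hn : 0 < n) (s : ℕ → Bool) : ∃ a, IsFirstMin n s a := by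
  obtain ⟨a, ha, hmin⟩ := exists_min_image (range n) (fun j => toLex (height s j, j))
    ⟨0, mem_range.2 hn⟩
  simp only [Prod.Lex.toLex_le_toLex, mem_range] at ha hmin
  exact ⟨a, ha, by grind, by grind⟩

lemma exists_isLastMin (hn : 0 < n) (s : ℕ → Bool) : ∃ b, IsLastMin n s b := by
  obtain ⟨b, hb, hmin⟩ := exists_min_image (range n) (fun j => toLex (height s j, -(j : ℤ)))
    ⟨0, mem_range.2 hn⟩
  simp only [Prod.Lex.toLex_le_toLex, mem_range] at hb hmin
  exact ⟨b, hb, by grind, by grind⟩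

lemma IsFirstMin.unique (ha : IsFirstMin n s a) (hb : IsFirstMin n s b) : a = b := by
  have := ha.2.2 b
  have := hb.2.2 a
  have := ha.2.1 b hb.1
  have := hb.2.1 a ha.1
  lia

lemma IsLastMin.unique (ha : IsLastMin n s a) (hb : IsLastMin n s b) : a = b := by
  have := ha.2.2 b hb.1
  have := hb.2.2 a ha.1
  have := ha.2.1 b hb.1
  have := hb.2.1 a ha.1
  lia

lemma IsFirstMin.le_of_isLastMin (ha : IsFirstMin n s a) (hb : IsLastMin n s b) : a ≤ b := by
  have := ha.2.2 b
  have := hb.2.1 a ha.1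
  lia

lemma ballot_shift_iff :
    Ballot (n - i) (fun k => s (i + k)) ↔ ∀ j < n, i ≤ j → height s i ≤ height s j := by
  constructor
  · intro h j hj hij
    have hshift := height_add (s := s) i (j - i)
    rw [Nat.add_sub_cancel' hij] at hshift
    have := h (j - i) (by lia)
    lia
  · intro h j hj
    have := height_add (s := s) i j
    have := h (i + j) (by lia) (by lia)
    lia

lemma IsFirstMin.coballot (ha : IsFirstMin n s a) : Coballot a s := by
  intro j hj
  obtain ⟨m, rfl⟩ := Nat.exists_eq_succ_of_ne_zero (Nat.ne_zero_of_lt hj)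
  have hstep := height_succ (s := s) m
  have := ha.2.2 j hj
  have := ha.2.2 m m.lt_succ_self
  rw [Nat.succ_sub_one]
  grind

lemma IsFirstMin.ballot_shift (ha : IsFirstMin n s a) : Ballot (n - a) fun k => s (a + k) :=
  ballot_shift_iff.2 fun j hj _ => ha.2.1 j hj

lemma IsLastMin.coballot (hb : IsLastMin n s b) : Coballot (b + 1) s :=
  fun j hj => hb.2.1 j (by have := hb.1; lia)

lemma IsLastMin.ballot_shift (hb : IsLastMin n s b) :
    Ballot (n - (b + 1)) fun k => s (b + 1 + k) := by
  refine ballot_shift_iff.2 fun j hj hbj => ?_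
  have hstep := height_succ (s := s) b
  have := hb.2.2 j hj hbj
  have := hb.2.2 (b + 1) (by lia) b.lt_succ_self
  grind

lemma isFirstMin_or_isLastMin (hn : 0 < n) (hi : i ≤ n) (hl : Coballot i s)
    (hr : Ballot (n - i) fun k => s (i + k)) :
    IsFirstMin n s i ∨ ∃ b, i = b + 1 ∧ IsLastMin n s b := by
  rw [ballot_shift_iff] at hr
  rcases i with _ | b
  · exact Or.inl ⟨hn, fun j hj => hr j hj j.zero_le, fun j hj => absurd hj j.not_lt_zero⟩
  · have hstep := height_succ (s := s) b
    have hl' : ∀ j < b + 1, height s b ≤ height s j := hl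
    by_cases hdown : b + 1 < n ∧ s b
    · refine Or.inl ⟨hdown.1, fun j hj => ?_, fun j hj => ?_⟩ <;> grind
    · refine Or.inr ⟨b, rfl, hi, fun j hj => ?_, fun j hj hbj => ?_⟩ <;> grind

end Walks

section Statistics

/-- The number of descents of a word of length `n` with descent pattern `s`. -/
def desCount (n : ℕ) (s : ℕ → Bool) : ℕ := downSteps s (n - 1)

/-- The number of maximal increasing runs of a word of length `n` with descent pattern `s`. -/
def ascRuns (n : ℕ) (s : ℕ → Bool) : ℕ := if n = 0 then 0 else desCount n s + 1

/-- The smaller one of the numbers of maximal increasing runs and of maximal decreasing runs. -/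
def minRuns (n : ℕ) (s : ℕ → Bool) : ℕ := min (ascRuns n s) (n - desCount n s)

variable {n a b m : ℕ} {s s' : ℕ → Bool}

lemma ascRuns_zero : ascRuns 0 s = 0 := if_pos rfl

lemma ascRuns_of_pos (hn : 0 < n) : ascRuns n s = desCount n s + 1 := if_neg hn.ne'

lemma desCount_congr (h : ∀ k, k + 1 < n → s k = s' k) : desCount n s = desCount n s' :=
  downSteps_congr fun k hk => h k (by lia)

lemma ascRuns_congr (h : ∀ k, k + 1 < n → s k = s' k) : ascRuns n s = ascRuns n s' := by
  rw [ascRuns, ascRuns, desCount_congr h]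

lemma desCount_le : desCount n s ≤ n - 1 := downSteps_le _

lemma desCount_not (n : ℕ) (s : ℕ → Bool) :
    desCount n (fun k => !s k) = n - 1 - desCount n s := by
  have := downSteps_not_add s (n - 1)
  rw [desCount, desCount]
  lia

lemma ascRuns_add_desCount (h : m + 1 < n) :
    (ascRuns (m + 1) s + desCount (n - (m + 1)) fun k => s (m + 1 + k)) =
      desCount n s + if s m then 0 else 1 := by
  rw [ascRuns_of_pos m.succ_pos, desCount, desCount, desCount,
    show n - 1 = m + 1 + (n - (m + 1) - 1) by lia, downSteps_add, downSteps_succ,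
    Nat.succ_sub_one]
  split_ifs <;> lia

lemma IsFirstMin.ascRuns_add (ha : IsFirstMin n s a) :
    (ascRuns a s + desCount (n - a) fun k => s (a + k)) = desCount n s := by
  rcases a with _ | m
  · simp only [ascRuns_zero, zero_add, Nat.sub_zero]
  · have hstep := height_succ (s := s) m
    have := ha.2.2 m m.lt_succ_self
    have hdown : s m := by grind
    rw [ascRuns_add_desCount ha.1, if_pos hdown, add_zero]

lemma IsLastMin.ascRuns_add (hb : IsLastMin n s b) :
    (ascRuns (b + 1) s + desCount (n - (b + 1)) fun k => s (b + 1 + k)) = desCount n s + 1 := by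
  have hb1 := ascRuns_of_pos (s := s) b.succ_pos
  rcases (Nat.succ_le_of_lt hb.1).eq_or_lt with hbn | hbn
  · rw [← hbn, Nat.sub_self, hb1]
    rfl
  · have hstep := height_succ (s := s) b
    have := hb.2.2 (b + 1) hbn b.lt_succ_self
    have hup : ¬ s b := by grind
    rw [ascRuns_add_desCount hbn, if_neg hup]

open scoped Classical in
/-- The contribution `X ^ des` of a ballot word to the generating polynomial. -/
noncomputable def ballotWeight (n : ℕ) (s : ℕ → Bool) : ℚ[X] :=
  if Ballot n s then .X ^ desCount n s else 0

open scoped Classical in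
/-- The contribution of a word whose walk stays above its end; together with `ballotWeight` it
splits `(1 + X) * X ^ des`. -/
noncomputable def coballotWeight (n : ℕ) (s : ℕ → Bool) : ℚ[X] :=
  if Coballot n s then .X ^ ascRuns n s else 0

open scoped Classical in
lemma coballotWeight_congr (h : ∀ k, k + 1 < n → s k = s' k) :
    coballotWeight n s = coballotWeight n s' := by
  rw [coballotWeight, coballotWeight, ascRuns_congr h]
  exact if_congr (coballot_congr h) rfl rfl

/-- Only two cuts of a walk contribute: before its first minimum and after its last one. -/
lemma sum_coballotWeight_mul_ballotWeight (hn : 0 < n) (s : ℕ → Bool) :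
    ∑ i ∈ range (n + 1), coballotWeight i s * ballotWeight (n - i) (fun k => s (i + k)) =
      (1 + .X) * .X ^ desCount n s := by
  obtain ⟨a, ha⟩ := exists_isFirstMin hn s
  obtain ⟨b, hb⟩ := exists_isLastMin hn s
  have hab := ha.le_of_isLastMin hb
  rw [sum_eq_add_of_mem a (b + 1) (mem_range.2 (ha.1.trans n.lt_succ_self))
    (mem_range.2 (Nat.succ_lt_succ hb.1)) (by lia)]
  · rw [coballotWeight, ballotWeight, if_pos ha.coballot, if_pos ha.ballot_shift, ← pow_add,
      ha.ascRuns_add, coballotWeight, ballotWeight, if_pos hb.coballot,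
      if_pos hb.ballot_shift, ← pow_add, hb.ascRuns_add]
    ring
  · rintro i hi ⟨hia, hib⟩
    have hi : i ≤ n := Nat.lt_succ_iff.1 (mem_range.1 hi)
    rw [coballotWeight, ballotWeight]
    by_contra hne
    obtain ⟨hl, hr⟩ : Coballot i s ∧ Ballot (n - i) (fun k => s (i + k)) := by
      constructor <;> by_contra h <;> simp [h] at hne
    rcases isFirstMin_or_isLastMin hn hi hl hr with h | ⟨c, rfl, h⟩
    · exact hia (h.unique ha)
    · exact hib (congrArg _ (h.unique hb))

end Statistics

section Words

variable {α : Type*} [LinearOrder α]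

lemma downSteps_append_cons {l₁ l₂ : List α} {M : α} (h : ∀ x ∈ l₁, x < M) :
    downSteps (descents (l₁ ++ M :: l₂)) l₁.length = desCount l₁.length (descents l₁) := by
  rcases l₁.length.eq_zero_or_pos with h0 | hpos
  · rw [h0, desCount, downSteps_zero, downSteps_zero]
  obtain ⟨m, hm⟩ := Nat.exists_eq_succ_of_ne_zero hpos.ne'
  have hlast : ¬ descents (l₁ ++ M :: l₂) m := by
    rw [descents_iff, ← Nat.succ_eq_add_one, ← hm, List.getElem?_append_right le_rfl,
      List.getElem?_append_left (by lia), Nat.sub_self, List.getElem?_cons_zero,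
      List.getElem?_eq_getElem (by lia), Option.some_lt_some]
    exact (h _ (List.getElem_mem _)).le.not_gt
  rw [desCount, hm, Nat.succ_eq_add_one, downSteps_succ, if_neg hlast, add_zero,
    Nat.add_sub_cancel]
  refine downSteps_congr fun k hk => ?_
  rw [← descents_take (i := l₁.length) _ (by lia), List.take_left]

lemma downSteps_cons {l : List α} {M : α} (h : ∀ x ∈ l, x < M) :
    downSteps (descents (M :: l)) l.length = ascRuns l.length (descents l) := by
  rcases l with _ | ⟨x, l⟩
  · rfl
  have hfirst : descents (M :: x :: l) 0 :=
    descents_iff.2 (Option.some_lt_some.2 (h x List.mem_cons_self))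
  have hrest : (fun k => descents (M :: x :: l) (k + 1)) = descents (x :: l) := by
    rw [show x :: l = (M :: x :: l).drop 1 from rfl, descents_drop]
    simp only [add_comm 1]
    rfl
  rw [ascRuns_of_pos (by simp), List.length_cons, downSteps_succ', if_pos hfirst, hrest, desCount,
    Nat.add_sub_cancel]

lemma desCount_append_cons {l₁ l₂ : List α} {M : α} (h₁ : ∀ x ∈ l₁, x < M) (h₂ : ∀ x ∈ l₂, x < M) :
    desCount (l₁ ++ M :: l₂).length (descents (l₁ ++ M :: l₂)) =
      desCount l₁.length (descents l₁) + ascRuns l₂.length (descents l₂) := by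
  rw [desCount, List.length_append, List.length_cons, ← add_assoc, Nat.add_sub_cancel,
    downSteps_add, downSteps_append_cons h₁, ← descents_drop, List.drop_left, downSteps_cons h₂]

lemma descents_map_of_strictAnti {β : Type*} [LinearOrder β] {f : α → β} (hf : StrictAnti f)
    {l : List α} (hl : l.Nodup) {k : ℕ} (hk : k + 1 < l.length) :
    descents (l.map f) k = !descents l k := by
  have hne : l[k + 1] ≠ l[k] := fun h => by simpa using (hl.getElem_inj_iff).1 h
  rw [Bool.eq_iff_iff, Bool.not_eq_true', ← Bool.not_eq_true, descents_iff, descents_iff,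
    List.getElem?_map, List.getElem?_map, List.getElem?_eq_getElem hk,
    List.getElem?_eq_getElem (by lia), Option.map_some, Option.map_some, Option.some_lt_some,
    Option.some_lt_some, hf.lt_iff_gt, not_lt]
  exact ⟨le_of_lt, fun h => lt_of_le_of_ne h hne.symm⟩

variable {A : Type*} [CommRing A]

lemma wordSum_desCount_complement (F : ℕ → ℕ → A) (n : ℕ) :
    wordSum (fun n s => F n (n - 1 - desCount n s)) n =
      wordSum (fun n s => F n (desCount n s)) n := by
  conv_rhs => rw [wordSum, ← map_univ_equiv (Fin.revPerm (n := n)), arrangements_map, sum_map]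
  refine sum_congr rfl fun l hl => ?_
  have hlen : l.length = n := by rw [length_of_mem_arrangements hl, card_univ, Fintype.card_fin]
  have hdes : desCount n (descents (l.map Fin.revPerm)) = desCount n fun k => !descents l k :=
    desCount_congr fun k hk => descents_map_of_strictAnti Fin.rev_strictAnti
      (nodup_of_mem_arrangements hl) (by lia)
  rw [Function.Embedding.coeFn_mk]
  change _ = F n (desCount n (descents (l.map Fin.revPerm)))
  rw [hdes, desCount_not]

end Words

section CycleWeights

open PowerSeries

variable {n : ℕ}

lemma wordSum_zero {A : Type*} [CommRing A] (Φ : ℕ → (ℕ → Bool) → A) :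
    wordSum Φ 0 = Φ 0 (descents ([] : List (Fin 0))) := by
  rw [wordSum, univ_eq_empty, arrangements_empty, sum_singleton]

lemma wordSum_ascRuns (hn : 0 < n) :
    wordSum (fun n s => (.X ^ ascRuns n s : ℚ[X])) n =
      .X * wordSum (fun n s => .X ^ desCount n s) n := by
  simp only [wordSum, ascRuns_of_pos hn, pow_succ', mul_sum]

/-- The contribution to the generating polynomial of a cycle of odd length whose word, started at
its maximum and with the maximum omitted, has length `n` and descent pattern `s`. -/
noncomputable def cycleWeight (n : ℕ) (s : ℕ → Bool) : ℚ[X] :=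
  if Even n then .X ^ minRuns n s else 0

/-- The counterpart of `cycleWeight` with the larger one of the numbers of cyclic ascents and
descents, except that the empty word contributes `X`. -/
noncomputable def cocycleWeight (n : ℕ) (s : ℕ → Bool) : ℚ[X] :=
  if Even n then .X ^ (n + 1 - minRuns n s) else 0

lemma X_pow_minRuns_add (n : ℕ) (s : ℕ → Bool) :
    (.X ^ minRuns n s + .X ^ (n + 1 - minRuns n s) : ℚ[X]) =
      .X ^ ascRuns n s + .X * .X ^ (n - 1 - desCount n s) := by
  have hdes := desCount_le (n := n) (s := s)
  rw [← pow_succ']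
  rcases n.eq_zero_or_pos with rfl | hn
  · rw [minRuns, ascRuns_zero, Nat.zero_min]
    rfl
  rw [minRuns, ascRuns_of_pos hn]
  rcases le_total (desCount n s + 1) (n - desCount n s) with h | h
  · rw [min_eq_left h, show n + 1 - (desCount n s + 1) = n - 1 - desCount n s + 1 by lia]
  · rw [min_eq_right h, add_comm, show n + 1 - (n - desCount n s) = desCount n s + 1 by lia,
      show n - 1 - desCount n s + 1 = n - desCount n s by lia]

lemma wordSum_cycleWeight_add (n : ℕ) :
    wordSum cycleWeight n + wordSum cocycleWeight n =
      wordSum (fun n s => .X ^ ascRuns n s) n +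
        .X * ((-1) ^ n * wordSum (fun n s => .X ^ desCount n s) n) := by
  rcases n.even_or_odd with hn | hn
  · rw [hn.neg_one_pow, one_mul, ← wordSum_desCount_complement fun _ d => (.X ^ d : ℚ[X])]
    simp only [wordSum, cycleWeight, cocycleWeight, if_pos hn, mul_sum, ← sum_add_distrib,
      X_pow_minRuns_add]
  · rw [wordSum_ascRuns hn.pos, hn.neg_one_pow]
    simp only [wordSum, cycleWeight, cocycleWeight, if_neg (Nat.not_even_iff_odd.2 hn),
      sum_const_zero]
    ring

lemma two_mul_minRuns_le (hn : Even n) (s : ℕ → Bool) : 2 * minRuns n s ≤ n := by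
  have hdes := desCount_le (n := n) (s := s)
  obtain ⟨m, rfl⟩ := hn
  rw [minRuns, ascRuns]
  split_ifs <;> lia

lemma Ballot.two_mul_desCount_le {s : ℕ → Bool} (hn : 0 < n) (h : Ballot n s) :
    2 * desCount n s ≤ n - 1 := by
  have := h (n - 1) (by lia)
  rw [height] at this
  rw [desCount]
  lia

lemma Coballot.le_two_mul_desCount {s : ℕ → Bool} (hn : 0 < n) (h : Coballot n s) :
    n - 1 ≤ 2 * desCount n s := by
  have := h 0 hn
  rw [height_zero, height] at this
  rw [desCount]
  lia

end CycleWeights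

section Series

open PowerSeries

/-- The exponential generating function of the Eulerian polynomials. -/
noncomputable def eulerSeries : ℚ[X]⟦X⟧ := egf (wordSum fun n s => .X ^ desCount n s)

lemma coeff_zero_eulerSeries : coeff 0 eulerSeries = 1 := by
  rw [eulerSeries, coeff_zero_egf, wordSum_zero]
  rfl

lemma egf_wordSum_ascRuns :
    egf (wordSum fun n s => .X ^ ascRuns n s) = 1 + C (.X : ℚ[X]) * (eulerSeries - 1) := by
  ext1 n
  rw [map_add, coeff_C_mul, map_sub, coeff_egf, coeff_one]
  rcases n.eq_zero_or_pos with rfl | hn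
  · rw [coeff_zero_eulerSeries, wordSum_zero, ascRuns_zero]
    simp
  · rw [if_neg hn.ne', zero_add, sub_zero, wordSum_ascRuns hn, eulerSeries, coeff_egf,
      mul_smul_comm]

/-- Removing the maximal letter splits a word into two arbitrary ones. -/
lemma derivative_eulerSeries :
    d⁄dX ℚ[X] eulerSeries = eulerSeries * (1 + C (.X : ℚ[X]) * (eulerSeries - 1)) := by
  rw [← egf_wordSum_ascRuns, eulerSeries, ← egf_binomConv, derivative_egf]
  refine congrArg egf (funext fun n => wordSum_succ_eq_binomConv (fun l₁ l₂ M h₁ h₂ => ?_) n)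
  rw [desCount_append_cons h₁ h₂, pow_add]

lemma ballotWeight_zero (s : ℕ → Bool) : ballotWeight 0 s = 1 :=
  if_pos fun j hj => absurd hj j.not_lt_zero

lemma coballotWeight_zero (s : ℕ → Bool) : coballotWeight 0 s = 1 :=
  if_pos fun j hj => absurd hj j.not_lt_zero

lemma binomConv_coballotWeight_ballotWeight {n : ℕ} (hn : 0 < n) :
    binomConv (wordSum coballotWeight) (wordSum ballotWeight) n =
      (1 + .X) * wordSum (fun n s => .X ^ desCount n s) n := by
  rw [binomConv_wordSum, wordSum, mul_sum]
  refine sum_congr rfl fun l _ => ?_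
  rw [← sum_coballotWeight_mul_ballotWeight hn]
  refine sum_congr rfl fun i _ => ?_
  rw [coballotWeight_congr fun k hk => descents_take l hk, descents_drop]

lemma egf_coballotWeight_mul_egf_ballotWeight :
    egf (wordSum coballotWeight) * egf (wordSum ballotWeight) =
      1 + (1 + C (.X : ℚ[X])) * (eulerSeries - 1) := by
  rw [← map_one (C (R := ℚ[X])), ← map_add, map_one]
  ext1 n
  rcases n.eq_zero_or_pos with rfl | hn
  · rw [map_add, coeff_C_mul, map_sub, coeff_zero_eulerSeries, coeff_zero_one, sub_self, mul_zero,
      add_zero, ← egf_binomConv, coeff_zero_egf, binomConv, sum_range_one, wordSum_zero,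
      wordSum_zero, coballotWeight_zero, ballotWeight_zero, Nat.choose_self, one_smul, one_mul]
  · rw [← egf_binomConv, coeff_egf, binomConv_coballotWeight_ballotWeight hn, map_add, coeff_C_mul,
      map_sub, coeff_one, if_neg hn.ne', zero_add, sub_zero, eulerSeries, coeff_egf, mul_smul_comm]

lemma egf_cycleWeight_add_egf_cocycleWeight :
    egf (wordSum cycleWeight) + egf (wordSum cocycleWeight) =
      1 + C (.X : ℚ[X]) * (eulerSeries - 1) + C (.X : ℚ[X]) * rescale (-1) eulerSeries := by
  rw [← egf_wordSum_ascRuns]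
  ext1 n
  simp only [map_add, coeff_C_mul, coeff_rescale, eulerSeries, coeff_egf, ← smul_add,
    wordSum_cycleWeight_add, mul_smul_comm]

lemma belowDiagonal_egf_ballotWeight : BelowDiagonal (egf (wordSum ballotWeight)) := by
  refine belowDiagonal_egf fun n hn => ?_
  have hword : (wordSum ballotWeight n).natDegree ≤ (n - 1) / 2 := by
    refine Polynomial.natDegree_sum_le_of_forall_le _ _ fun l _ => ?_
    rw [ballotWeight]
    split_ifs with h
    · have := h.two_mul_desCount_le hn
      rw [Polynomial.natDegree_X_pow]
      lia
    · exact Polynomial.natDegree_zero.trans_le (Nat.zero_le _)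
  lia

lemma aboveDiagonal_egf_coballotWeight : AboveDiagonal (egf (wordSum coballotWeight)) := by
  refine aboveDiagonal_egf fun n hn => dvd_sum fun l _ => ?_
  rw [coballotWeight]
  split_ifs with h
  · have := h.le_two_mul_desCount hn
    exact pow_dvd_pow _ (by rw [ascRuns_of_pos hn]; lia)
  · exact dvd_zero _

lemma two_mul_natDegree_coeff_egf_cycleWeight_le (n : ℕ) :
    2 * (coeff n (egf (wordSum cycleWeight))).natDegree ≤ n := by
  have hword : (wordSum cycleWeight n).natDegree ≤ n / 2 := by
    refine Polynomial.natDegree_sum_le_of_forall_le _ _ fun l _ => ?_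
    rw [cycleWeight]
    split_ifs with hn
    · have := two_mul_minRuns_le hn (descents l)
      rw [Polynomial.natDegree_X_pow]
      lia
    · exact Polynomial.natDegree_zero.trans_le (Nat.zero_le _)
  have := Polynomial.natDegree_smul_le (n.factorial : ℚ)⁻¹ (wordSum cycleWeight n)
  rw [coeff_egf]
  lia

lemma X_pow_dvd_coeff_egf_cocycleWeight (n : ℕ) :
    .X ^ ((n + 1) / 2 + 1) ∣ coeff n (egf (wordSum cocycleWeight)) := by
  rw [coeff_egf]
  refine dvd_smul_of_dvd _ (dvd_sum fun l _ => ?_)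
  rw [cocycleWeight]
  split_ifs with hn
  · have := two_mul_minRuns_le hn (descents l)
    obtain ⟨m, rfl⟩ := hn
    exact pow_dvd_pow _ (by lia)
  · exact dvd_zero _

/-- Both series are the factor below the diagonal in a factorisation of the same series. -/
theorem egf_ballotWeight_eq_of_derivative_eq {F : ℚ[X]⟦X⟧}
    (hF : d⁄dX ℚ[X] F = egf (wordSum cycleWeight) * F) (hF0 : coeff 0 F = 1) :
    egf (wordSum ballotWeight) = F := by
  set N := egf (wordSum ballotWeight)
  set R := egf (wordSum coballotWeight)
  have hF_unit : IsUnit F := isUnit_iff_constantCoeff.2 (by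
    rw [← coeff_zero_eq_constantCoeff_apply, hF0]
    exact isUnit_one)
  obtain ⟨G, hG⟩ : F ∣ R * N := hF_unit.dvd
  have hN0 : coeff 0 N = 1 := by rw [coeff_zero_egf, wordSum_zero, ballotWeight_zero]
  have hR0 : coeff 0 R = 1 := by rw [coeff_zero_egf, wordSum_zero, coballotWeight_zero]
  have hG0 : coeff 0 G = 1 := by
    have h0 := congrArg constantCoeff hG
    rw [coeff_zero_eq_constantCoeff_apply] at hF0 hN0 hR0 ⊢
    rwa [map_mul, map_mul, hF0, hN0, hR0, one_mul, one_mul, eq_comm] at h0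
  have hFG : d⁄dX ℚ[X] (F * G) =
      (egf (wordSum cycleWeight) + egf (wordSum cocycleWeight)) * (F * G) := by
    rw [← hG, egf_coballotWeight_mul_egf_ballotWeight, egf_cycleWeight_add_egf_cocycleWeight]
    exact derivative_of_riccati derivative_eulerSeries coeff_zero_eulerSeries
  have hG' : d⁄dX ℚ[X] G = egf (wordSum cocycleWeight) * G :=
    derivative_eq_mul_of_derivative_mul_eq hF_unit hF hFG
  refine eq_of_mul_eq_mul_of_diagonal belowDiagonal_egf_ballotWeight ?_
    aboveDiagonal_egf_coballotWeight ?_ hN0 hF0 hR0 hG0 (mul_comm R N ▸ hG)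
  · exact belowDiagonal_of_derivative_eq_mul hF hF0 two_mul_natDegree_coeff_egf_cycleWeight_le
  · exact aboveDiagonal_of_derivative_eq_mul hG' hG0 X_pow_dvd_coeff_egf_cocycleWeight

end Series

section CycleWords

variable {α : Type*} [Fintype α] [DecidableEq α]

/-- The letters following `M` in the cycle of `σ` through `M`. -/
def cycleWord (σ : Equiv.Perm α) (M : α) : List α := (σ.toList M).tail

variable {σ τ : Equiv.Perm α} {M : α} {l : List α}

lemma cons_cycleWord (h : M ∈ σ.support) : M :: cycleWord σ M = σ.toList M := by
  have hne : σ.toList M ≠ [] := fun hnil => Equiv.Perm.toList_eq_nil_iff.1 hnil h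
  have hhead : (σ.toList M).head hne = M := by
    rw [List.head_eq_getElem_zero, Equiv.Perm.toList_getElem_zero σ M h]
  conv_rhs => rw [← List.cons_head_tail hne, hhead]
  rfl

lemma cycleWord_eq_nil (h : M ∉ σ.support) : cycleWord σ M = [] := by
  rw [cycleWord, Equiv.Perm.toList_eq_nil_iff.2 h, List.tail_nil]

lemma formPerm_cons_cycleWord (σ : Equiv.Perm α) (M : α) :
    (M :: cycleWord σ M).formPerm = σ.cycleOf M := by
  by_cases h : M ∈ σ.support
  · rw [cons_cycleWord h, Equiv.Perm.formPerm_toList]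
  · rw [cycleWord_eq_nil h, List.formPerm_singleton, eq_comm, Equiv.Perm.cycleOf_eq_one_iff]
    exact Equiv.Perm.notMem_support.1 h

lemma nodup_cons_cycleWord (σ : Equiv.Perm α) (M : α) : (M :: cycleWord σ M).Nodup := by
  by_cases h : M ∈ σ.support
  · exact cons_cycleWord h ▸ Equiv.Perm.nodup_toList σ M
  · exact cycleWord_eq_nil h ▸ List.nodup_singleton M

lemma mem_cons_cycleWord {x : α} : x ∈ M :: cycleWord σ M ↔ σ.SameCycle M x := by
  by_cases h : M ∈ σ.support
  · rw [cons_cycleWord h, Equiv.Perm.mem_toList_iff, and_iff_left h]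
  · rw [cycleWord_eq_nil h, List.mem_singleton, eq_comm]
    exact ⟨fun hx => hx ▸ .refl _ _, fun hx => hx.eq_of_left (Equiv.Perm.notMem_support.1 h)⟩

lemma cycleOf_cycleOf_self (σ : Equiv.Perm α) (M : α) : (σ.cycleOf M).cycleOf M = σ.cycleOf M := by
  by_cases h : σ M = M
  · rw [(Equiv.Perm.cycleOf_eq_one_iff σ).2 h, Equiv.Perm.cycleOf_one]
  · refine (Equiv.Perm.isCycle_cycleOf σ h).cycleOf_eq ?_
    rwa [Equiv.Perm.cycleOf_apply_self]

lemma toList_cycleOf (σ : Equiv.Perm α) (M : α) : (σ.cycleOf M).toList M = σ.toList M := by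
  refine List.ext_getElem ?_ fun k _ _ => ?_
  · rw [Equiv.Perm.length_toList, Equiv.Perm.length_toList, cycleOf_cycleOf_self]
  · rw [Equiv.Perm.getElem_toList, Equiv.Perm.getElem_toList, Equiv.Perm.cycleOf_pow_apply_self]

lemma cycleWord_formPerm_cons (h : (M :: l).Nodup) : cycleWord (M :: l).formPerm M = l := by
  rcases l with _ | ⟨x, l⟩
  · rw [cycleWord, Equiv.Perm.toList_formPerm_singleton, List.tail_nil]
  · have := Equiv.Perm.toList_formPerm_nontrivial (M :: x :: l) (by simp) h
    exact congrArg List.tail this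

lemma cycleOf_formPerm_cons (h : (M :: l).Nodup) :
    (M :: l).formPerm.cycleOf M = (M :: l).formPerm := by
  rw [← formPerm_cons_cycleWord, cycleWord_formPerm_cons h]

lemma cycleOf_formPerm_cons_mul (h : (M :: l).Nodup) (hd : (M :: l).formPerm.Disjoint τ)
    (hM : τ M = M) : ((M :: l).formPerm * τ).cycleOf M = (M :: l).formPerm := by
  rw [Equiv.Perm.cycleOf_mul_of_apply_right_eq_self hd.commute M hM, cycleOf_formPerm_cons h]

lemma cycleWord_formPerm_cons_mul (h : (M :: l).Nodup) (hd : (M :: l).formPerm.Disjoint τ)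
    (hM : τ M = M) : cycleWord ((M :: l).formPerm * τ) M = l := by
  rw [cycleWord, ← toList_cycleOf, cycleOf_formPerm_cons_mul h hd hM]
  exact cycleWord_formPerm_cons h

lemma mem_support_inv_cycleOf_mul {x : α} :
    x ∈ ((σ.cycleOf M)⁻¹ * σ).support ↔ x ∈ σ.support ∧ ¬ σ.SameCycle M x := by
  rw [Equiv.Perm.mem_support, Equiv.Perm.mem_support, Equiv.Perm.mul_apply, ne_eq, ne_eq,
    Equiv.Perm.inv_eq_iff_eq]
  by_cases h : σ.SameCycle M x
  · simp only [h.cycleOf_apply, h, not_true_eq_false, and_false]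
  · rw [Equiv.Perm.cycleOf_apply_of_not_sameCycle h, and_iff_left h]

lemma disjoint_formPerm_cons {S T : Finset α} (hM : M ∉ S) (hl : l ∈ arrangements T)
    (hτ : τ.support ⊆ S \ T) : (M :: l).formPerm.Disjoint τ := by
  rw [Equiv.Perm.disjoint_iff_disjoint_support]
  refine disjoint_of_subset_left (List.support_formPerm_le _) (disjoint_left.2 fun x hx hxτ => ?_)
  obtain ⟨hxS, hxT⟩ := mem_sdiff.1 (hτ hxτ)
  rw [List.mem_toFinset, List.mem_cons, mem_iff_of_mem_arrangements hl] at hx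
  exact hx.elim (fun h => hM (h ▸ hxS)) hxT

lemma cycleWord_mem_arrangements (σ : Equiv.Perm α) (M : α) :
    cycleWord σ M ∈ arrangements (cycleWord σ M).toFinset := by
  rw [mem_arrangements, List.toFinset_val, (List.nodup_cons.1 (nodup_cons_cycleWord σ M)).2.dedup]

lemma toFinset_cycleWord_subset {S : Finset α} (hσ : σ.support ⊆ insert M S) :
    (cycleWord σ M).toFinset ⊆ S := by
  intro x hx
  rw [List.mem_toFinset] at hx
  have hxM : x ≠ M := fun h => (List.nodup_cons.1 (nodup_cons_cycleWord σ M)).1 (h ▸ hx)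
  have hcycle := mem_cons_cycleWord.1 (List.mem_cons_of_mem M hx)
  have hxσ : x ∈ σ.support := Equiv.Perm.mem_support.2 fun h => hxM (hcycle.symm.eq_of_left h)
  exact mem_of_mem_insert_of_ne (hσ hxσ) hxM

lemma support_inv_cycleOf_mul_subset {S : Finset α} (hσ : σ.support ⊆ insert M S) :
    ((σ.cycleOf M)⁻¹ * σ).support ⊆ S \ (cycleWord σ M).toFinset := by
  intro x hx
  obtain ⟨hxσ, hcycle⟩ := mem_support_inv_cycleOf_mul.1 hx
  rw [← mem_cons_cycleWord, List.mem_cons, not_or] at hcycle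
  exact mem_sdiff.2 ⟨mem_of_mem_insert_of_ne (hσ hxσ) hcycle.1,
    fun h => hcycle.2 (List.mem_toFinset.1 h)⟩

lemma support_formPerm_cons_mul_subset {S T : Finset α} (hT : T ⊆ S) (hl : l ∈ arrangements T)
    (hτ : τ.support ⊆ S \ T) : ((M :: l).formPerm * τ).support ⊆ insert M S := by
  refine (Equiv.Perm.support_mul_le _ _).trans (union_subset ?_ ?_)
  · refine (List.support_formPerm_le _).trans fun x hx => ?_
    rw [List.mem_toFinset, List.mem_cons, mem_iff_of_mem_arrangements hl] at hx
    exact mem_insert.2 (hx.imp_right fun h => hT h)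
  · exact hτ.trans (sdiff_subset.trans (subset_insert M S))

lemma sum_support_subset_insert {A : Type*} [AddCommMonoid A] {S : Finset α} (hM : M ∉ S)
    (F : Equiv.Perm α → A) :
    ∑ σ : Equiv.Perm α with σ.support ⊆ insert M S, F σ =
      ∑ T ∈ S.powerset, ∑ l ∈ arrangements T, ∑ τ : Equiv.Perm α with τ.support ⊆ S \ T,
        F ((M :: l).formPerm * τ) := by
  simp only [← sum_product', sum_sigma' S.powerset fun T =>
    arrangements T ×ˢ ({τ | τ.support ⊆ S \ T} : Finset (Equiv.Perm α))]
  refine sum_bij' (fun σ _ => ⟨(cycleWord σ M).toFinset, cycleWord σ M, (σ.cycleOf M)⁻¹ * σ⟩)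
    (fun x _ => (M :: x.2.1).formPerm * x.2.2) ?_ ?_ ?_ ?_ ?_
  · intro σ hσ
    rw [mem_filter_univ] at hσ
    simp only [mem_sigma, mem_powerset, mem_product, mem_filter_univ]
    exact ⟨toFinset_cycleWord_subset hσ, cycleWord_mem_arrangements σ M,
      support_inv_cycleOf_mul_subset hσ⟩
  · rintro ⟨T, l, τ⟩ hx
    simp only [mem_sigma, mem_powerset, mem_product, mem_filter_univ] at hx ⊢
    exact support_formPerm_cons_mul_subset hx.1 hx.2.1 hx.2.2
  · intro σ _
    rw [formPerm_cons_cycleWord, mul_inv_cancel_left]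
  · rintro ⟨T, l, τ⟩ hx
    simp only [mem_sigma, mem_powerset, mem_product, mem_filter_univ] at hx
    obtain ⟨hT, hl, hτ⟩ := hx
    have hnd : (M :: l).Nodup :=
      List.nodup_cons.2 ⟨fun h => hM (hT ((mem_iff_of_mem_arrangements hl).1 h)),
        nodup_of_mem_arrangements hl⟩
    have hd := disjoint_formPerm_cons hM hl hτ
    have hMτ : τ M = M := Equiv.Perm.notMem_support.1 fun h => hM (mem_sdiff.1 (hτ h)).1
    have hTl : l.toFinset = T := ext fun x => by
      rw [List.mem_toFinset, mem_iff_of_mem_arrangements hl]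
    simp only [cycleWord_formPerm_cons_mul hnd hd hMτ, cycleOf_formPerm_cons_mul hnd hd hMτ, hTl,
      inv_mul_cancel_left]
  · intro σ _
    rw [formPerm_cons_cycleWord, mul_inv_cancel_left]

end CycleWords

section OddOrder

variable {N : ℕ} {σ τ : Equiv.Perm (Fin N)} {M : Fin N} {l : List (Fin N)}

open scoped Classical in
/-- The contribution of a permutation to the generating polynomial of `Mstat` over odd order
permutations. -/
noncomputable def oddWeight (σ : Equiv.Perm (Fin N)) : ℚ[X] :=
  if ∀ m ∈ σ.cycleType, Odd m then .X ^ Mstat σ else 0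

lemma oddWeight_one : oddWeight (1 : Equiv.Perm (Fin N)) = 1 := by
  simp [oddWeight, Mstat]

lemma Mstat_mul (h : σ.Disjoint τ) : Mstat (σ * τ) = Mstat σ + Mstat τ := by
  rw [Mstat, h.cycleFactorsFinset_mul_eq_union, sum_union h.disjoint_cycleFactorsFinset]
  rfl

lemma oddWeight_mul (h : σ.Disjoint τ) : oddWeight (σ * τ) = oddWeight σ * oddWeight τ := by
  simp only [oddWeight, h.cycleType_mul, Multiset.mem_add, or_imp, forall_and, Mstat_mul h, pow_add,
    ite_zero_mul_ite_zero]

lemma cdes_add_casc (σ : Equiv.Perm (Fin N)) : cdes σ + casc σ = #σ.support := by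
  rw [cdes, casc, ← card_union_of_disjoint (disjoint_filter.2 fun x _ h => h.asymm), ← filter_or]
  refine congrArg card (ext fun x => ?_)
  rw [mem_filter_univ, Equiv.Perm.mem_support, ne_iff_lt_or_gt]

lemma formPerm_cons_apply_lt_iff (hnd : (M :: l).Nodup) (h : ∀ x ∈ l, x < M) {k : ℕ}
    (hk : k < (M :: l).length) :
    (M :: l).formPerm (M :: l)[k] < (M :: l)[k] ↔ k < l.length ∧ descents (M :: l) k := by
  rcases lt_or_eq_of_le (Nat.lt_succ_iff.1 hk) with hkl | rfl
  · have hk1 : k + 1 < (M :: l).length := Nat.succ_lt_succ hkl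
    rw [List.formPerm_apply_lt_getElem _ hnd _ hk1, descents_iff, List.getElem?_eq_getElem hk,
      List.getElem?_eq_getElem hk1, Option.some_lt_some, and_iff_right hkl]
  · have hmax : ∀ x ∈ M :: l, x ≤ M := List.forall_mem_cons.2 ⟨le_rfl, fun x hx => (h x hx).le⟩
    have hlast : (M :: l).formPerm (M :: l)[l.length] = M := List.formPerm_apply_getElem_length M l
    rw [hlast]
    exact iff_of_false (hmax _ (List.getElem_mem hk)).not_gt fun hlt => hlt.1.false

/-- The last letter before returning to the maximum is followed by a cyclic ascent. -/
lemma cdes_formPerm_cons (hnd : (M :: l).Nodup) (h : ∀ x ∈ l, x < M) :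
    cdes (M :: l).formPerm = ascRuns l.length (descents l) := by
  rw [← downSteps_cons h, downSteps, Nat.count_eq_card_filter_range, cdes, eq_comm]
  have hlt {k : ℕ} (hk : k ∈ (range l.length).filter fun k => descents (M :: l) k) :
      k < (M :: l).length := (mem_range.1 (mem_filter.1 hk).1).trans l.length.lt_succ_self
  refine card_bij (fun k hk => (M :: l)[k]'(hlt hk)) ?_ ?_ ?_
  · intro k hk
    rw [mem_filter_univ, formPerm_cons_apply_lt_iff hnd h (hlt hk)]
    exact ⟨mem_range.1 (mem_filter.1 hk).1, (mem_filter.1 hk).2⟩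
  · intro j hj k hk hjk
    exact hnd.getElem_inj_iff.1 hjk
  · intro x hx
    rw [mem_filter_univ] at hx
    have hxl : x ∈ M :: l := by
      by_contra hxl
      exact hx.ne (List.formPerm_apply_of_notMem hxl)
    obtain ⟨k, hk, rfl⟩ := List.getElem_of_mem hxl
    obtain ⟨hkl, hdes⟩ := (formPerm_cons_apply_lt_iff hnd h hk).1 hx
    exact ⟨k, mem_filter.2 ⟨mem_range.2 hkl, hdes⟩, rfl⟩

lemma oddWeight_formPerm_cons (hnd : (M :: l).Nodup) (h : ∀ x ∈ l, x < M) :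
    oddWeight (M :: l).formPerm = cycleWeight l.length (descents l) := by
  rcases l.length.eq_zero_or_pos with h0 | hpos
  · rw [List.eq_nil_of_length_eq_zero h0, List.formPerm_singleton, oddWeight_one]
    simp [cycleWeight, minRuns, ascRuns_zero]
  have hcycle := List.isCycle_formPerm hnd (Nat.succ_le_succ hpos)
  have hcard : #(M :: l).formPerm.support = l.length + 1 := by
    rw [List.support_formPerm_of_nodup _ hnd (by rintro x ⟨⟩; exact hpos.false),
      List.toFinset_card_of_nodup hnd, List.length_cons]
  have hcdes := cdes_formPerm_cons hnd h
  have hcasc : casc (M :: l).formPerm = l.length - desCount l.length (descents l) := by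
    have := cdes_add_casc (M :: l).formPerm
    rw [ascRuns_of_pos hpos] at hcdes
    lia
  rw [oddWeight, Mstat, hcycle.cycleType, hcycle.cycleFactorsFinset_eq_singleton, sum_singleton,
    hcdes, hcasc, hcard, cycleWeight, minRuns]
  simp only [Multiset.mem_singleton, forall_eq, Nat.odd_add_one, Nat.not_odd_iff_even]

/-- The generating polynomial of `Mstat` over the odd order permutations moving only points
of `S`. -/
noncomputable def oddSum (S : Finset (Fin N)) : ℚ[X] :=
  ∑ σ : Equiv.Perm (Fin N) with σ.support ⊆ S, oddWeight σ

lemma oddSum_empty : oddSum (∅ : Finset (Fin N)) = 1 := by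
  simp [oddSum, filter_eq', oddWeight_one]

lemma oddSum_univ : oddSum (univ : Finset (Fin N)) = ∑ σ : Equiv.Perm (Fin N), oddWeight σ := by
  simp only [oddSum, subset_univ, filter_true]

lemma oddSum_insert {S : Finset (Fin N)} (hM : ∀ x ∈ S, x < M) {o : ℕ → ℚ[X]}
    (ho : ∀ T ⊆ S, oddSum T = o #T) :
    oddSum (insert M S) = binomConv (wordSum cycleWeight) o #S := by
  have hMS : M ∉ S := fun h => (hM M h).false
  rw [oddSum, sum_support_subset_insert hMS, ← sum_powerset_eq_binomConv]
  refine sum_congr rfl fun T hT => ?_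
  rw [← ho _ sdiff_subset, ← sum_arrangements_eq_wordSum, oddSum, sum_mul_sum]
  refine sum_congr rfl fun l hl => sum_congr rfl fun τ hτ => ?_
  have hlt : ∀ x ∈ l, x < M := fun x hx =>
    hM x (mem_powerset.1 hT ((mem_iff_of_mem_arrangements hl).1 hx))
  have hnd : (M :: l).Nodup :=
    List.nodup_cons.2 ⟨fun h => (hlt M h).false, nodup_of_mem_arrangements hl⟩
  rw [oddWeight_mul (disjoint_formPerm_cons hMS hl ((mem_filter_univ τ).1 hτ)),
    oddWeight_formPerm_cons hnd hlt]

lemma oddSum_of_card_eq_succ {n : ℕ} {o : ℕ → ℚ[X]} {S : Finset (Fin N)} (hS : #S = n + 1)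
    (ho : ∀ T : Finset (Fin N), #T ≤ n → oddSum T = o #T) :
    oddSum S = binomConv (wordSum cycleWeight) o n := by
  have hne : S.Nonempty := card_pos.1 (hS ▸ n.succ_pos)
  have hcard : #(S.erase (S.max' hne)) = n := by
    rw [card_erase_of_mem (S.max'_mem hne), hS, Nat.add_sub_cancel]
  rw [← insert_erase (S.max'_mem hne),
    oddSum_insert (fun x hx => S.lt_max'_of_mem_erase_max' hne hx)
      fun T hT => ho T ((card_le_card hT).trans_eq hcard), hcard]

lemma oddSum_eq_sum_oddWeight (S : Finset (Fin N)) :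
    oddSum S = ∑ σ : Equiv.Perm (Fin #S), oddWeight σ := by
  suffices h : ∀ n, ∀ {N : ℕ} (S : Finset (Fin N)), #S = n →
      oddSum S = ∑ σ : Equiv.Perm (Fin n), oddWeight σ from h _ S rfl
  intro n
  induction n using Nat.strong_induction_on with
  | _ n ih =>
    intro N S hS
    rw [← oddSum_univ]
    rcases n with _ | n
    · rw [card_eq_zero.1 hS, eq_empty_of_isEmpty univ, oddSum_empty, oddSum_empty]
    · have hrec {N : ℕ} {S : Finset (Fin N)} (hS : #S = n + 1) :=
        oddSum_of_card_eq_succ (o := fun k => ∑ σ : Equiv.Perm (Fin k), oddWeight σ) hS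
          fun T hT => ih #T (Nat.lt_succ_of_le hT) T rfl
      rw [hrec hS, hrec (by simp)]

lemma sum_oddWeight_succ (n : ℕ) :
    ∑ σ : Equiv.Perm (Fin (n + 1)), oddWeight σ =
      binomConv (wordSum cycleWeight) (fun k => ∑ σ : Equiv.Perm (Fin k), oddWeight σ) n := by
  rw [← oddSum_univ]
  exact oddSum_of_card_eq_succ (by simp) fun T _ => oddSum_eq_sum_oddWeight T

theorem wordSum_ballotWeight_eq_sum_oddWeight (n : ℕ) :
    wordSum ballotWeight n = ∑ σ : Equiv.Perm (Fin n), oddWeight σ := by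
  refine congrFun (g := fun k => ∑ σ : Equiv.Perm (Fin k), oddWeight σ)
    (egf_injective (egf_ballotWeight_eq_of_derivative_eq ?_ ?_)) n
  · rw [derivative_egf, ← egf_binomConv]
    exact congrArg egf (funext sum_oddWeight_succ)
  · rw [coeff_zero_egf, ← oddSum_univ, eq_empty_of_isEmpty univ, oddSum_empty]

end OddOrder

section Permutations

variable {n : ℕ}

lemma ofFn_mem_arrangements (π : Equiv.Perm (Fin n)) : List.ofFn π ∈ arrangements univ := by
  rw [mem_arrangements, ← Fin.univ_val_map]
  exact Multiset.map_univ_val_equiv π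

lemma sum_arrangements_univ_eq_sum_perm {A : Type*} [AddCommMonoid A] (F : List (Fin n) → A) :
    ∑ l ∈ arrangements univ, F l = ∑ π : Equiv.Perm (Fin n), F (List.ofFn π) := by
  refine (sum_bij (fun (π : Equiv.Perm (Fin n)) _ => List.ofFn π) ?_ ?_ ?_ fun _ _ => rfl).symm
  · exact fun π _ => ofFn_mem_arrangements π
  · exact fun π _ π' _ h => Equiv.coe_fn_injective (List.ofFn_injective h)
  · intro l hl
    have hlen : l.length = n := by
      rw [length_of_mem_arrangements hl, card_univ, Fintype.card_fin]
    have hinj : Function.Injective fun i : Fin n => l[i] :=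
      fun i j hij => Fin.ext ((nodup_of_mem_arrangements hl).getElem_inj_iff.1 hij)
    refine ⟨.ofBijective _ (Finite.injective_iff_bijective.1 hinj), mem_univ _, ?_⟩
    exact List.ext_getElem (by rw [List.length_ofFn, hlen]) fun i _ _ => List.getElem_ofFn _

variable {π : Equiv.Perm (Fin n)} {i k : ℕ}

lemma permWord_succ_lt_iff (hk : k + 1 < n) :
    permWord n π (k + 1) < permWord n π k ↔ descents (List.ofFn π) k := by
  have hk' : k < n := k.lt_succ_self.trans hk
  rw [descents_iff, List.getElem?_ofFn, List.getElem?_ofFn, dif_pos hk, dif_pos hk',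
    Option.some_lt_some, permWord, permWord, dif_pos hk, dif_pos hk', Nat.add_lt_add_iff_right]
  rfl

lemma permWord_lt_succ_iff (hk : k + 1 < n) :
    permWord n π k < permWord n π (k + 1) ↔ ¬ permWord n π (k + 1) < permWord n π k := by
  have hk' : k < n := k.lt_succ_self.trans hk
  rw [not_lt, le_iff_lt_or_eq, or_iff_left]
  intro h
  rw [permWord, permWord, dif_pos hk, dif_pos hk', Nat.add_right_cancel_iff, Fin.val_inj,
    π.apply_eq_iff_eq, Fin.mk.injEq] at h
  exact k.lt_succ_self.ne h

lemma card_permWord_descents (hi : i ≤ n) :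
    #{k ∈ range (i - 1) | permWord n π (k + 1) < permWord n π k} =
      downSteps (descents (List.ofFn π)) (i - 1) := by
  rw [downSteps, Nat.count_eq_card_filter_range]
  refine congrArg card (filter_congr fun k hk => permWord_succ_lt_iff ?_)
  have := mem_range.1 hk
  lia

lemma card_permWord_ascents_add (hi : i ≤ n) :
    #{k ∈ range (i - 1) | permWord n π k < permWord n π (k + 1)} +
      downSteps (descents (List.ofFn π)) (i - 1) = i - 1 := by
  have hasc : {k ∈ range (i - 1) | permWord n π k < permWord n π (k + 1)} =
      {k ∈ range (i - 1) | ¬ permWord n π (k + 1) < permWord n π k} :=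
    filter_congr fun k hk => permWord_lt_succ_iff (by have := mem_range.1 hk; lia)
  rw [← card_permWord_descents hi, hasc, add_comm, card_filter_add_card_filter_not, card_range]

lemma desNum_eq_desCount : desNum n π = desCount n (descents (List.ofFn π)) :=
  card_permWord_descents le_rfl

lemma isBallot_iff_ballot : IsBallot n π ↔ Ballot n (descents (List.ofFn π)) := by
  have hheight {i : ℕ} (hi : i ≤ n) :
      #{k ∈ range (i - 1) | permWord n π (k + 1) < permWord n π k} ≤
        #{k ∈ range (i - 1) | permWord n π k < permWord n π (k + 1)} ↔
          0 ≤ height (descents (List.ofFn π)) (i - 1) := by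
    have := card_permWord_ascents_add (π := π) hi
    rw [card_permWord_descents hi, height]
    lia
  constructor
  · intro h j hj
    exact (hheight (Nat.succ_le_of_lt hj)).1 (h (j + 1) hj)
  · intro h i hi
    rcases i with _ | j
    · exact le_rfl
    · exact (hheight hi).2 (h j hi)

open scoped Classical in
lemma wordSum_ballotWeight (n : ℕ) :
    wordSum ballotWeight n = ∑ π : Equiv.Perm (Fin n) with IsBallot n π, .X ^ desNum n π := by
  simp only [wordSum, sum_arrangements_univ_eq_sum_perm, ballotWeight, sum_filter,
    isBallot_iff_ballot, desNum_eq_desCount]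

lemma coeff_sum_X_pow {ι : Type*} [Fintype ι] (p : ι → Prop) [DecidablePred p] (f : ι → ℕ) (d : ℕ) :
    (∑ i with p i, (.X : ℚ[X]) ^ f i).coeff d = Nat.card {i // p i ∧ f i = d} := by
  rw [Polynomial.finsetSum_coeff, Nat.card_eq_fintype_card, Fintype.card_subtype, ← filter_filter,
    ← sum_boole]
  simp only [Polynomial.coeff_X_pow, eq_comm]

lemma card_eq_of_sum_X_pow_eq {ι κ : Type*} [Fintype ι] [Fintype κ] {p : ι → Prop} {q : κ → Prop}
    [DecidablePred p] [DecidablePred q] {f : ι → ℕ} {g : κ → ℕ}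
    (h : ∑ i with p i, (.X : ℚ[X]) ^ f i = ∑ j with q j, (.X : ℚ[X]) ^ g j) (d : ℕ) :
    Nat.card {i // p i ∧ f i = d} = Nat.card {j // q j ∧ g j = d} := by
  have := congrArg (fun P => P.coeff d) h
  simp only [coeff_sum_X_pow] at this
  exact_mod_cast this

open scoped Classical in
theorem sum_X_pow_desNum_eq_sum_X_pow_Mstat (n : ℕ) :
    ∑ π : Equiv.Perm (Fin n) with IsBallot n π, (.X : ℚ[X]) ^ desNum n π =
      ∑ π : Equiv.Perm (Fin n) with ∀ m ∈ π.cycleType, Odd m, .X ^ Mstat π := by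
  rw [← wordSum_ballotWeight, wordSum_ballotWeight_eq_sum_oddWeight, sum_filter]
  simp only [oddWeight]

end Permutations

end BallotOddOrder

/-- For `0 ≤ d ≤ ⌊(n-1)/2⌋`, the number of ballot permutations of `[n]` with `d` descents
equals the number of odd order permutations `π` of `[n]` with `M(π) = d`. -/
theorem ballot_eq_oddOrder (n d : ℕ) (hn : 1 ≤ n) (hd : d ≤ (n - 1) / 2) :
    Nat.card {π : Equiv.Perm (Fin n) // IsBallot n π ∧ desNum n π = d} =
      Nat.card {π : Equiv.Perm (Fin n) //
        (∀ m ∈ π.cycleType, Odd m) ∧ Mstat π = d} := by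
  classical
  exact BallotOddOrder.card_eq_of_sum_X_pow_eq
    (BallotOddOrder.sum_X_pow_desNum_eq_sum_X_pow_Mstat n) d
end

section
/- For all integers n ≥ 3, d ≥ 0, and 2 ≤ j ≤ n−1, one has b_{n,d}(1,j) + b_{n,d}(j,1) = 2·p_{n,d}(1,j). -/
/-- `π` has the three-letter word `a b c` as a factor: the letters `a, b, c`
occur consecutively (in this order) in the word of `π`. -/
def HasFactor (n : ℕ) (π : Equiv.Perm (Fin n)) (a b c : ℕ) : Prop :=
  ∃ k, k + 2 < n ∧ permWord n π k = a ∧ permWord n π (k + 1) = b ∧ permWord n π (k + 2) = c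

/-- `π` has the three-letter word `a b c` (with distinct letters) as a cyclic factor:
`a, b, c` occur consecutively in (a word representing) some cycle of `π`, i.e.
`π` maps the element labelled `a` to the one labelled `b` and that one to `c`. -/
def HasCyclicFactor (n : ℕ) (π : Equiv.Perm (Fin n)) (a b c : ℕ) : Prop :=
  ∃ x y z : Fin n, (x : ℕ) + 1 = a ∧ (y : ℕ) + 1 = b ∧ (z : ℕ) + 1 = c ∧ π x = y ∧ π y = z

/-- `b_{n,d}(i,j)`: the number of ballot permutations of length `n` with `d` descents
having `i n j` as a factor. -/
noncomputable def ballotFactorCount (n d i j : ℕ) : ℕ :=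
  Nat.card {π : Equiv.Perm (Fin n) //
    IsBallot n π ∧ desNum n π = d ∧ HasFactor n π i n j}

/-- `p_{n,d}(i,j)`: the number of odd order permutations `π` of length `n` with
`M(π) = d` having `i n j` as a cyclic factor. -/
noncomputable def oddOrderCyclicCount (n d i j : ℕ) : ℕ :=
  Nat.card {π : Equiv.Perm (Fin n) //
    (∀ m ∈ π.cycleType, Odd m) ∧ Mstat π = d ∧ HasCyclicFactor n π i n j}

/-!
Give each ascent the weight `x` and each descent the weight `y`. Cutting words at their minima
splits the series of all words into the series of words that end at their minimal height times the
series of ballot words. The exponent of `x` is at most that of `y` in the former and at least that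
of `y` in the latter, so this is a Wiener–Hopf factorization, and such factorizations are unique.

Carlitz's identity for the series of all words relates the odd cycles through a given block of
letters to the words with this block inserted. An odd cycle never has as many ascents as descents,
so the factorization separates the two orientations of this relation: the odd cycles through the
block, times the ballot words on the remaining letters, are the ballot words containing the block.
For the block `1` it follows by induction that ballot words and odd order permutations have the
same series. In the blocks `1 n j` and `j n 1` the letter `n` is a peak, which contributes one
ascent and one descent and does not affect the ballot property, so the relation for them is the
theorem.
-/

open Finset

/-- Formal power series in the letters `α` that are exponential in each letter and square-free:
functions on finite sets of letters, multiplied by splitting the set into two complementary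
parts. -/
def SetSeries (α K : Type*) := Finset α → K

namespace SetSeries

variable {α K L : Type*}

/-- The series with the given coefficients; using it instead of a bare `fun` keeps terms
type-correct at reducible transparency. -/
def of (f : Finset α → K) : SetSeries α K := f

theorem of_apply (f : Finset α → K) (S : Finset α) : of f S = f S := rfl

variable [CommRing K] [CommRing L]

instance : AddCommGroup (SetSeries α K) := inferInstanceAs (AddCommGroup (Finset α → K))

theorem add_apply (F G : SetSeries α K) (S : Finset α) : (F + G) S = F S + G S := rfl

theorem zero_apply (S : Finset α) : (0 : SetSeries α K) S = 0 := rfl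

/-- The exponential series `exp (∑ a, c a * z a)`, which is multiplicative in the set. -/
def expSeries (c : α → K) : SetSeries α K := of fun S => ∏ a ∈ S, c a

theorem expSeries_apply (c : α → K) (S : Finset α) : expSeries c S = ∏ a ∈ S, c a := rfl

variable [DecidableEq α]

instance : Mul (SetSeries α K) := ⟨fun F G => of fun S => ∑ T ∈ S.powerset, F T * G (S \ T)⟩

instance : One (SetSeries α K) := ⟨of fun S => if S = ∅ then 1 else 0⟩

theorem mul_apply (F G : SetSeries α K) (S : Finset α) :
    (F * G) S = ∑ T ∈ S.powerset, F T * G (S \ T) := rfl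

theorem one_apply (S : Finset α) : (1 : SetSeries α K) S = if S = ∅ then 1 else 0 := rfl

protected theorem mul_comm (F G : SetSeries α K) : F * G = G * F := by
  funext S
  refine sum_nbij' (S \ ·) (S \ ·) ?_ ?_ ?_ ?_ ?_ <;>
    simp +contextual [mul_comm]

protected theorem mul_assoc (F G H : SetSeries α K) : F * G * H = F * (G * H) := by
  funext S
  simp only [mul_apply, sum_mul, mul_sum]
  rw [sum_sigma', sum_sigma']
  refine sum_nbij' (fun p => ⟨p.2, p.1 \ p.2⟩) (fun p => ⟨p.1 ∪ p.2, p.1⟩) ?_ ?_ ?_ ?_ ?_ <;>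
    rintro ⟨T, U⟩ h <;> simp only [mem_sigma, mem_powerset] at h ⊢
  · exact ⟨h.2.trans h.1, sdiff_subset_sdiff h.1 le_rfl⟩
  · exact ⟨union_subset h.1 (h.2.trans sdiff_subset), subset_union_left⟩
  · rw [union_sdiff_of_subset h.2]
  · rw [union_sdiff_cancel_left (disjoint_sdiff.mono_right h.2)]
  · rw [mul_assoc, show (S \ U) \ (T \ U) = S \ T by grind]

protected theorem one_mul (F : SetSeries α K) : 1 * F = F := by
  funext S
  rw [mul_apply, sum_eq_single ∅] <;> simp +contextual [one_apply]

instance : CommRing (SetSeries α K) where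
  __ := (inferInstance : AddCommGroup (SetSeries α K))
  mul_assoc := SetSeries.mul_assoc
  mul_comm := SetSeries.mul_comm
  one_mul := SetSeries.one_mul
  mul_one F := by rw [SetSeries.mul_comm, SetSeries.one_mul]
  left_distrib F G H := by
    funext S; simp only [mul_apply, add_apply, mul_add, sum_add_distrib]
  right_distrib F G H := by
    funext S; simp only [mul_apply, add_apply, add_mul, sum_add_distrib]
  zero_mul F := by funext S; simp [mul_apply, zero_apply]
  mul_zero F := by funext S; simp [mul_apply, zero_apply]

/-- The constant series, concentrated on the empty set. -/
def C : K →+* SetSeries α K where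
  toFun x := of fun S => if S = ∅ then x else 0
  map_one' := rfl
  map_zero' := by funext S; simp [zero_apply, of_apply]
  map_add' x y := by funext S; by_cases h : S = ∅ <;> simp [add_apply, of_apply, h]
  map_mul' x y := by
    funext S
    rw [mul_apply, sum_eq_single ∅] <;> simp +contextual [of_apply]

theorem C_apply (x : K) (S : Finset α) : (C x : SetSeries α K) S = if S = ∅ then x else 0 := rfl

theorem C_mul_apply (x : K) (F : SetSeries α K) (S : Finset α) :
    (C x * F : SetSeries α K) S = x * F S := by
  rw [mul_apply, sum_eq_single ∅] <;> simp +contextual [C_apply]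

theorem two_mul_apply (F : SetSeries α K) (S : Finset α) : (2 * F : SetSeries α K) S = 2 * F S := by
  rw [two_mul, add_apply, two_mul]

/-- The substitution `z ↦ -z` in every letter. -/
def bar : SetSeries α K →+* SetSeries α K where
  toFun F := of fun S => (-1) ^ #S * F S
  map_one' := by funext S; by_cases h : S = ∅ <;> simp [one_apply, of_apply, h]
  map_zero' := by funext S; simp [zero_apply, of_apply]
  map_add' F G := by funext S; simp only [add_apply, of_apply, mul_add]
  map_mul' F G := by
    funext S
    simp only [mul_apply, of_apply, mul_sum]
    refine sum_congr rfl fun T hT => ?_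
    rw [← card_sdiff_add_card_eq_card (mem_powerset.mp hT), pow_add]
    ring

theorem bar_apply (F : SetSeries α K) (S : Finset α) : bar F S = (-1) ^ #S * F S := rfl

theorem bar_C (x : K) : bar (C x : SetSeries α K) = C x := by
  funext S
  by_cases h : S = ∅ <;> simp [bar_apply, C_apply, h]

theorem expSeries_mul_expSeries (c d : α → K) :
    expSeries c * expSeries d = expSeries (c + d) := by
  funext S
  simp [expSeries_apply, mul_apply, prod_add]

theorem expSeries_zero : expSeries (0 : α → K) = 1 := by
  funext S
  simp [expSeries_apply, one_apply, zero_pow_eq]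

theorem bar_expSeries (c : α → K) : bar (expSeries c) = expSeries (-c) := by
  funext S
  simp [bar_apply, expSeries_apply, prod_neg]

theorem bar_expSeries_mul_expSeries (c : α → K) : bar (expSeries c) * expSeries c = 1 := by
  rw [bar_expSeries, expSeries_mul_expSeries, neg_add_cancel, expSeries_zero]

/-- The series whose coefficients all lie in `A`. -/
def coeffsIn (A : AddSubgroup K) : AddSubgroup (SetSeries α K) where
  carrier := {F | ∀ S, F S ∈ A}
  add_mem' hF hG S := A.add_mem (hF S) (hG S)
  zero_mem' _ := A.zero_mem
  neg_mem' hF S := A.neg_mem (hF S)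

theorem C_mem_coeffsIn {A : AddSubgroup K} {x : K} (hx : x ∈ A) :
    (C x : SetSeries α K) ∈ coeffsIn A := by
  intro S
  rw [C_apply]
  split_ifs
  exacts [hx, A.zero_mem]

theorem mul_mem_coeffsIn {A B D : AddSubgroup K} (h : ∀ a ∈ A, ∀ b ∈ B, a * b ∈ D)
    {F G : SetSeries α K} (hF : F ∈ coeffsIn A) (hG : G ∈ coeffsIn B) : F * G ∈ coeffsIn D :=
  fun _ => D.sum_mem fun _ _ => h _ (hF _) _ (hG _)

/-- The uniqueness of Wiener–Hopf factorizations, `A` and `B` being the two halves of the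
coefficients. -/
theorem eq_zero_of_mul_add_mul_eq_zero {A B : AddSubgroup K} (hAB : Disjoint A B)
    {G H N P : SetSeries α K} (hG : G ∈ coeffsIn A) (hH : H ∈ coeffsIn B)
    (hN : N ∅ = 1) (hP : P ∅ = 1) (h : G * N + H * P = 0) : G = 0 ∧ H = 0 := by
  suffices ∀ S, G S = 0 ∧ H S = 0 from
    ⟨funext fun S => (this S).1, funext fun S => (this S).2⟩
  intro S
  induction S using Finset.strongInduction with
  | H S ih =>
    have top {F M : SetSeries α K} (hM : M ∅ = 1) (hF : ∀ T ⊂ S, F T = 0) :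
        (F * M) S = F S := by
      rw [mul_apply, sum_eq_single S]
      · simp [hM]
      · intro T hT hTS
        rw [hF T ((mem_powerset.mp hT).ssubset_of_ne hTS), zero_mul]
      · simp
    have hsum : G S + H S = 0 := by
      rw [← top hN fun T hT => (ih T hT).1, ← top hP fun T hT => (ih T hT).2, ← add_apply, h,
        zero_apply]
    have hGB : G S ∈ B := by
      rw [eq_neg_of_add_eq_zero_left hsum]
      exact B.neg_mem (hH S)
    have hG0 : G S = 0 := AddSubgroup.disjoint_def.mp hAB (hG S) hGB
    exact ⟨hG0, by simpa [hG0] using hsum⟩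

/-- Apply a ring homomorphism to all coefficients. -/
def map (f : K →+* L) : SetSeries α K →+* SetSeries α L where
  toFun F := of fun S => f (F S)
  map_one' := by funext S; simp [one_apply, of_apply, apply_ite f]
  map_zero' := by funext S; simp [zero_apply, of_apply]
  map_add' F G := by funext S; simp only [add_apply, of_apply, map_add]
  map_mul' F G := by funext S; simp only [mul_apply, of_apply, map_sum, map_mul]

theorem map_apply (f : K →+* L) (F : SetSeries α K) (S : Finset α) : map f F S = f (F S) := rfl

theorem map_C (f : K →+* L) (x : K) : map f (C x : SetSeries α K) = C (f x) := by
  funext S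
  simp [map_apply, C_apply, apply_ite f]

end SetSeries

namespace BallotFactor

section Words

variable {α M : Type*}

/-- The sum of `φ u v` over all factorizations `w = u ++ v`. -/
def splitSum [AddCommMonoid M] (φ : List α → List α → M) (w : List α) : M :=
  ∑ k ∈ range (w.length + 1), φ (w.take k) (w.drop k)

section AddCommMonoid

variable [AddCommMonoid M]

theorem splitSum_nil (φ : List α → List α → M) : splitSum φ [] = φ [] [] := by
  simp [splitSum]

theorem splitSum_cons (φ : List α → List α → M) (a : α) (w : List α) :
    splitSum φ (a :: w) = φ [] (a :: w) + splitSum (fun u v => φ (a :: u) v) w := by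
  rw [splitSum, List.length_cons, sum_range_succ', add_comm]
  rfl

theorem splitSum_congr {φ ψ : List α → List α → M} {w : List α}
    (h : ∀ u v, u ++ v = w → φ u v = ψ u v) : splitSum φ w = splitSum ψ w :=
  sum_congr rfl fun _ _ => h _ _ (List.take_append_drop _ _)

theorem splitSum_add (φ ψ : List α → List α → M) (w : List α) :
    splitSum (fun u v => φ u v + ψ u v) w = splitSum φ w + splitSum ψ w :=
  sum_add_distrib

theorem mul_splitSum {K : Type*} [NonUnitalNonAssocSemiring K] (k : K)
    (φ : List α → List α → K) (w : List α) :
    k * splitSum φ w = splitSum (fun u v => k * φ u v) w :=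
  mul_sum ..

theorem splitSum_mul {K : Type*} [NonUnitalNonAssocSemiring K] (φ : List α → List α → K) (k : K)
    (w : List α) : splitSum φ w * k = splitSum (fun u v => φ u v * k) w :=
  sum_mul ..

theorem splitSum_assoc (φ : List α → List α → List α → M) (w : List α) :
    splitSum (fun u t => splitSum (φ u) t) w =
      splitSum (fun t x => splitSum (fun u v => φ u v x) t) w := by
  induction w generalizing φ with
  | nil => simp only [splitSum_nil]
  | cons a w ih => simp only [splitSum_cons, splitSum_nil, ih, splitSum_add, add_assoc]

end AddCommMonoid

variable [DecidableEq α]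

/-- The words in which each letter of `S` occurs exactly once and no other letter occurs. -/
def words (S : Finset α) : Finset (List α) := (Multiset.lists S.val).toFinset

theorem mem_words {S : Finset α} {l : List α} : l ∈ words S ↔ l.Nodup ∧ l.toFinset = S := by
  rw [words, Multiset.mem_toFinset, Multiset.mem_lists_iff]
  constructor
  · intro h
    have hl : l.Nodup := Multiset.coe_nodup.mp (show Multiset.Nodup ⟦l⟧ from h ▸ S.nodup)
    exact ⟨hl, Finset.val_injective (by rw [h, List.toFinset_val, hl.dedup]; rfl)⟩
  · rintro ⟨hl, rfl⟩
    rw [List.toFinset_val, hl.dedup]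
    rfl

theorem mem_iff_of_mem_words {S : Finset α} {l : List α} (h : l ∈ words S) {a : α} :
    a ∈ l ↔ a ∈ S := by
  rw [← (mem_words.mp h).2, List.mem_toFinset]

theorem length_of_mem_words {S : Finset α} {l : List α} (h : l ∈ words S) : l.length = #S := by
  obtain ⟨hl, rfl⟩ := mem_words.mp h
  rw [List.toFinset_card_of_nodup hl]

theorem mem_words_of_perm {S : Finset α} {l l' : List α} (h : l.Perm l') :
    l ∈ words S ↔ l' ∈ words S := by
  rw [mem_words, mem_words, h.nodup_iff, List.toFinset_eq_of_perm _ _ h]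

theorem words_empty : words (∅ : Finset α) = {[]} := by
  ext l
  simp +contextual [mem_words]

theorem append_mem_words_union {S : Finset α} {B l : List α} (hB : B.Nodup)
    (hBS : Disjoint B.toFinset S) : B ++ l ∈ words (B.toFinset ∪ S) ↔ l ∈ words S := by
  rw [mem_words, mem_words, List.toFinset_append, List.nodup_append']
  constructor
  · rintro ⟨⟨-, hl, hBl⟩, h⟩
    rw [← List.disjoint_toFinset_iff_disjoint] at hBl
    exact ⟨hl, by rw [← union_sdiff_cancel_left hBl, h, union_sdiff_cancel_left hBS]⟩
  · rintro ⟨hl, rfl⟩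
    exact ⟨⟨hB, hl, List.disjoint_toFinset_iff_disjoint.mp hBS⟩, rfl⟩

theorem sum_powerset_sum_words [AddCommMonoid M] (φ : List α → List α → M) (S : Finset α) :
    ∑ T ∈ S.powerset, ∑ u ∈ words T, ∑ v ∈ words (S \ T), φ u v =
      ∑ w ∈ words S, splitSum φ w := by
  simp only [splitSum, sum_sigma']
  refine sum_nbij' (fun p => ⟨p.2.1 ++ p.2.2, p.2.1.length⟩)
    (fun p => ⟨(p.1.take p.2).toFinset, p.1.take p.2, p.1.drop p.2⟩) ?_ ?_ ?_ ?_ ?_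
  · rintro ⟨T, u, v⟩ h
    simp only [mem_sigma, mem_powerset, mem_words] at h
    obtain ⟨hT, ⟨hu, rfl⟩, hv⟩ := h
    rw [mem_sigma, ← union_sdiff_of_subset hT,
      append_mem_words_union hu disjoint_sdiff, mem_words]
    exact ⟨hv, by simp⟩
  · rintro ⟨w, k⟩ h
    obtain ⟨hw, rfl⟩ := mem_words.mp (mem_sigma.mp h).1
    have hdisj := List.disjoint_toFinset_iff_disjoint.mpr (List.disjoint_take_drop hw (le_refl k))
    simp only [mem_sigma, mem_powerset, mem_words]
    refine ⟨?_, ⟨hw.sublist (List.take_sublist _ _), trivial⟩,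
      hw.sublist (List.drop_sublist _ _), ?_⟩
    · exact fun a ha => List.mem_toFinset.mpr (List.mem_of_mem_take (List.mem_toFinset.mp ha))
    · nth_rw 2 [← List.take_append_drop k w]
      rw [List.toFinset_append, union_sdiff_cancel_left hdisj]
  · rintro ⟨T, u, v⟩ h
    simp only [mem_sigma, mem_words] at h
    simp [h.2.1.2]
  · rintro ⟨w, k⟩ h
    simp only [mem_sigma, mem_range] at h
    simpa using Nat.le_of_lt_succ h.2
  · rintro ⟨T, u, v⟩ _
    simp

theorem sum_filter_infix_words [AddCommMonoid M] {B : List α} (hB : B.Nodup) (hB0 : B ≠ [])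
    {S : Finset α} (hBS : Disjoint B.toFinset S) (φ : List α → M) :
    ∑ w ∈ words (B.toFinset ∪ S) with B <:+: w, φ w =
      ∑ w ∈ words S, splitSum (fun u v => φ (u ++ B ++ v)) w := by
  have hins (u v : List α) : u ++ B ++ v ∈ words (B.toFinset ∪ S) ↔ u ++ v ∈ words S := by
    rw [← append_mem_words_union hB hBS]
    refine mem_words_of_perm ?_
    rw [← List.append_assoc]
    exact List.Perm.append_right _ List.perm_append_comm
  simp only [splitSum, sum_sigma']
  symm
  refine sum_nbij (fun p => p.1.take p.2 ++ B ++ p.1.drop p.2) ?_ ?_ ?_ (fun _ _ => rfl)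
  · rintro ⟨w, k⟩ h
    rw [mem_filter, hins, List.take_append_drop]
    exact ⟨(mem_sigma.mp h).1, _, _, rfl⟩
  · rintro ⟨w, k⟩ hw ⟨w', k'⟩ hw' heq
    simp only [mem_coe, mem_sigma, mem_range, Nat.lt_succ_iff] at hw hw' heq
    obtain ⟨b, B', rfl⟩ := List.exists_cons_of_ne_nil hB0
    have hb {l : List α} (hl : l ∈ words S) : b ∉ l := fun h =>
      disjoint_left.mp hBS (by simp) ((mem_iff_of_mem_words hl).mp h)
    have hnodup := (mem_words.mp ((hins (w'.take k') (w'.drop k')).mpr (by simpa using hw'.1))).1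
    simp only [List.append_assoc, List.cons_append] at heq hnodup
    have hb' : b ∉ B' ++ w'.drop k' := (List.nodup_append'.mp hnodup).2.1.notMem
    have hbk' : b ∉ w'.take k' := fun h => hb hw'.1 (List.mem_of_mem_take h)
    obtain ⟨htake, -, htail⟩ := (List.append_cons_inj_of_notMem hbk' hb').mp heq.symm
    have hdrop : w'.drop k' = w.drop k := List.append_cancel_left htail
    have hk : k' = k := by simpa [hw.2, hw'.2] using congrArg List.length htake
    have hww : w' = w := by
      rw [← List.take_append_drop k' w', htake, hdrop, List.take_append_drop]
    rw [hk, hww]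
  · intro w hw
    obtain ⟨hw, u, v, rfl⟩ := mem_filter.mp (mem_coe.mp hw)
    refine ⟨⟨u ++ v, u.length⟩, ?_, by simp⟩
    simpa using (hins u v).mp hw

theorem count_map_eq_card_filter {l : List α} (hl : l.Nodup)
    (f : α → Bool) (e : Bool) : (l.map f).count e = #{x ∈ l.toFinset | f x = e} := by
  rw [List.count, List.countP_map, List.countP_eq_length_filter,
    ← List.toFinset_card_of_nodup (hl.filter _), List.toFinset_filter]
  simp

end Words

section WordSeries

variable {α K : Type*} [CommRing K]

/-- The generating function of words by their sets of letters, with weights `φ`. -/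
def wordSeries [DecidableEq α] (φ : List α → K) : SetSeries α K :=
  SetSeries.of fun S => ∑ w ∈ words S, φ w

variable [DecidableEq α]

theorem wordSeries_apply (φ : List α → K) (S : Finset α) :
    wordSeries φ S = ∑ w ∈ words S, φ w := rfl

theorem wordSeries_add (φ ψ : List α → K) :
    wordSeries φ + wordSeries ψ = wordSeries fun w => φ w + ψ w :=
  funext fun _ => sum_add_distrib.symm

theorem C_mul_wordSeries (x : K) (φ : List α → K) :
    SetSeries.C x * wordSeries φ = wordSeries fun w => x * φ w := by
  funext S
  rw [SetSeries.C_mul_apply, wordSeries_apply, wordSeries_apply, mul_sum]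

theorem wordSeries_mul (φ ψ : List α → K) :
    wordSeries φ * wordSeries ψ = wordSeries (splitSum fun u v => φ u * ψ v) := by
  funext S
  simp only [SetSeries.mul_apply, wordSeries_apply, sum_mul_sum, ← sum_powerset_sum_words]

theorem bar_wordSeries (φ : List α → K) :
    SetSeries.bar (wordSeries φ) = wordSeries fun w => (-1) ^ w.length * φ w := by
  funext S
  rw [SetSeries.bar_apply, wordSeries_apply, wordSeries_apply, mul_sum]
  exact sum_congr rfl fun w hw => by rw [length_of_mem_words hw]

theorem wordSeries_congr {φ ψ : List α → K} (h : ∀ w, w.Nodup → φ w = ψ w) :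
    wordSeries φ = wordSeries ψ :=
  funext fun _ => sum_congr rfl fun w hw => h w (mem_words.mp hw).1

theorem wordSeries_reverse (φ : List α → K) :
    wordSeries (fun w => φ w.reverse) = wordSeries φ := by
  funext S
  have hrev (w : List α) (hw : w ∈ words S) : w.reverse ∈ words S :=
    (mem_words_of_perm w.reverse_perm).mpr hw
  exact sum_nbij' List.reverse List.reverse hrev hrev (by simp) (by simp) (by simp)

end WordSeries

section StepLists

variable {K : Type*} [CommRing K]

/-- A list of steps is a lattice path, `true` being an ascent and `false` a descent; its weight
records the numbers of both. -/
def weight (x y : K) (s : List Bool) : K := x ^ s.count true * y ^ s.count false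

/-- The final height of the path with steps `s`. -/
def height (s : List Bool) : ℤ := s.count true - s.count false

/-- The minimal height of the path with steps `s`, whose initial height `0` is included. -/
def minHeight : List Bool → ℤ
  | [] => 0
  | e :: s => min 0 ((if e then 1 else -1) + minHeight s)

theorem weight_nil (x y : K) : weight x y [] = 1 := by simp [weight]

theorem weight_cons (x y : K) (e : Bool) (s : List Bool) :
    weight x y (e :: s) = (if e then x else y) * weight x y s := by
  cases e <;> simp [weight] <;> ring

theorem weight_append (x y : K) (s t : List Bool) :
    weight x y (s ++ t) = weight x y s * weight x y t := by
  simp only [weight, List.count_append, pow_add]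
  ring

theorem height_nil : height [] = 0 := by simp [height]

theorem height_cons (e : Bool) (s : List Bool) :
    height (e :: s) = (if e then 1 else -1) + height s := by
  cases e <;> simp [height] <;> ring

theorem minHeight_nonpos (s : List Bool) : minHeight s ≤ 0 := by
  cases s <;> simp [minHeight]

theorem minHeight_le_height (s : List Bool) : minHeight s ≤ height s := by
  induction s with
  | nil => rfl
  | cons e s ih =>
    rw [minHeight, height_cons]
    omega

/-- The weight of the paths that stay at nonnegative height, and zero for the other ones. -/
def ballotWeight (x y : K) (s : List Bool) : K := if 0 ≤ minHeight s then weight x y s else 0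

/-- The weight of the paths that end at their minimal height, and zero for the other ones. -/
def endMinWeight (x y : K) (s : List Bool) : K :=
  if height s ≤ minHeight s then weight x y s else 0

/-- The weight of the increasing paths of length `k` when each step has weight `z`, and zero for
the other paths. -/
def ascentWeight (z : K) (s : List Bool) : K := if false ∈ s then 0 else z ^ s.length

/-- The sum of `F t * G u` over all ways to cut out one step, `s = t ++ e :: u`. -/
def cutSum (F G : List Bool → K) : List Bool → K
  | [] => 0
  | e :: s => F [] * G s + cutSum (fun t => F (e :: t)) G s

theorem cutSum_mul_left (k : K) (F G : List Bool → K) (s : List Bool) :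
    cutSum (fun t => k * F t) G s = k * cutSum F G s := by
  induction s generalizing F with
  | nil => simp [cutSum]
  | cons e s ih => simp only [cutSum, ih]; ring

theorem cutSum_append (F G : List Bool → K) (s t : List Bool) :
    cutSum F G (s ++ t) =
      cutSum F (fun u => G (u ++ t)) s + cutSum (fun u => F (s ++ u)) G t := by
  induction s generalizing F with
  | nil => simp [cutSum]
  | cons e s ih => simp only [List.cons_append, cutSum, ih, add_assoc]

/-- The telescoping identity `x ^ n = (x - y) ^ n + ∑ i, (x - y) ^ i * y * x ^ (n - 1 - i)`. -/
theorem weight_eq_ascentWeight_add (x y : K) (s : List Bool) :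
    weight x y s = ascentWeight (x - y) s + y * cutSum (ascentWeight (x - y)) (weight x y) s := by
  induction s with
  | nil => simp [weight_nil, ascentWeight, cutSum]
  | cons e s ih =>
    cases e
    · have h (t : List Bool) : ascentWeight (x - y) (false :: t) = 0 * weight x y t := by
        simp [ascentWeight]
      simp only [cutSum, h, cutSum_mul_left, weight_cons]
      simp [ascentWeight]
    · have h (t : List Bool) :
          ascentWeight (x - y) (true :: t) = (x - y) * ascentWeight (x - y) t := by
        simp [ascentWeight, pow_succ']
      simp only [cutSum, h, cutSum_mul_left, weight_cons, if_true]
      rw [show ascentWeight (x - y) [] = 1 by simp [ascentWeight]]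
      linear_combination (x - y) * ih

/-- Like `endMinWeight`, for paths that moreover end at height at most `c`. -/
def endMinWeightLE (x y : K) (c : ℤ) (s : List Bool) : K :=
  if height s ≤ min c (minHeight s) then weight x y s else 0

theorem endMinWeightLE_zero (x y : K) : endMinWeightLE x y 0 = endMinWeight x y := by
  funext s
  simp only [endMinWeightLE, endMinWeight, min_eq_right (minHeight_nonpos s)]

theorem endMinWeightLE_cons (x y : K) {c : ℤ} (hc : c ≤ 0) (e : Bool) (s : List Bool) :
    endMinWeightLE x y c (e :: s) =
      (if e then x else y) * endMinWeightLE x y (min 0 (c - if e then 1 else -1)) s := by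
  have hnonpos := minHeight_nonpos s
  have hle := minHeight_le_height s
  simp only [endMinWeightLE, weight_cons, height_cons, minHeight, mul_ite, mul_zero]
  exact if_congr (by omega) rfl rfl

/-- In a nonzero term of the left side, an ascent is cut out right after the last minimum, and a
descent right before the first one. -/
theorem cutSum_endMinWeightLE_ballotWeight (x y : K) (s : List Bool) {c : ℤ} (hc : c ≤ 0) :
    x * y * cutSum (endMinWeightLE x y c) (ballotWeight x y) s =
      weight x y s * ((if minHeight s < c then x else 0) +
        if minHeight s ≤ c ∧ minHeight s < height s then y else 0) := by
  induction s generalizing c with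
  | nil => simp [cutSum, minHeight, height_nil, hc.not_gt]
  | cons e s ih =>
    have hnonpos := minHeight_nonpos s
    have hle := minHeight_le_height s
    have ih' := ih (min_le_left 0 (c - if e then 1 else -1))
    have hnil : endMinWeightLE x y c [] = if 0 ≤ c then 1 else 0 := by
      simp [endMinWeightLE, minHeight, height_nil, weight_nil]
    simp only [cutSum, endMinWeightLE_cons x y hc, cutSum_mul_left]
    rw [mul_add, mul_left_comm (x * y) (if e then x else y), ih', hnil, ballotWeight, weight_cons,
      height_cons, minHeight]
    clear ih ih' hnil
    cases e <;> simp only [if_true, if_false, Bool.false_eq_true] <;> split_ifs <;>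
      first | omega | ring1

/-- The Wiener–Hopf factorization of a path at its minima. -/
theorem add_mul_weight (x y : K) (s : List Bool) :
    (x + y) * weight x y s = x * ballotWeight x y s + y * endMinWeight x y s +
      x * y * cutSum (endMinWeight x y) (ballotWeight x y) s := by
  have hnonpos := minHeight_nonpos s
  have hle := minHeight_le_height s
  rw [← endMinWeightLE_zero, cutSum_endMinWeightLE_ballotWeight x y s le_rfl,
    endMinWeightLE_zero, ballotWeight, endMinWeight]
  split_ifs <;> first | omega | ring1

end StepLists

section Steps

variable {α K : Type*} [LinearOrder α] [CommRing K]

/-- The steps of the word `w` when a virtual letter stands before it, `q a` telling whether `a` is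
larger than that letter. -/
def stepsFrom (q : α → Bool) : List α → List Bool
  | [] => []
  | a :: w => q a :: stepsFrom (fun b => a < b) w

/-- The ascents (`true`) and descents (`false`) of a word. -/
def steps : List α → List Bool
  | [] => []
  | a :: w => stepsFrom (fun b => a < b) w

/-- The steps of the word `w` when a virtual letter stands after it, `p a` telling whether `a` is
smaller than that letter. -/
def stepsTo (p : α → Bool) (w : List α) : List Bool := steps w ++ w.getLast?.toList.map p

theorem steps_cons (a : α) (w : List α) : steps (a :: w) = stepsFrom (fun b => a < b) w := rfl

theorem stepsTo_nil (p : α → Bool) : stepsTo p [] = [] := rfl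

theorem stepsTo_singleton (p : α → Bool) (a : α) : stepsTo p [a] = [p a] := rfl

theorem stepsTo_cons_cons (p : α → Bool) (a b : α) (w : List α) :
    stepsTo p (a :: b :: w) = decide (a < b) :: stepsTo p (b :: w) := by
  simp [stepsTo, steps, stepsFrom, List.getLast?_cons_cons]

theorem stepsFrom_congr {q q' : α → Bool} {w : List α} (h : ∀ a ∈ w, q a = q' a) :
    stepsFrom q w = stepsFrom q' w := by
  cases w with
  | nil => rfl
  | cons a w => simp [stepsFrom, h a (by simp)]

theorem stepsTo_congr {p p' : α → Bool} {w : List α} (h : ∀ a ∈ w, p a = p' a) :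
    stepsTo p w = stepsTo p' w := by
  rw [stepsTo, stepsTo]
  congr 1
  refine List.map_congr_left fun a ha => h a ?_
  exact List.mem_of_getLast? (by simpa using ha)

theorem length_stepsFrom (q : α → Bool) (w : List α) : (stepsFrom q w).length = w.length := by
  induction w generalizing q with
  | nil => rfl
  | cons a w ih => simp [stepsFrom, ih]

theorem steps_append_cons (u : List α) (a : α) (v : List α) :
    steps (u ++ a :: v) = stepsTo (fun b => b < a) u ++ stepsFrom (fun b => a < b) v := by
  induction u with
  | nil => rfl
  | cons b u ih =>
    cases u with
    | nil => rfl
    | cons c u => exact (congrArg _ ih).trans (by rw [stepsTo_cons_cons, List.cons_append])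

theorem stepsTo_append_singleton (p : α → Bool) (u : List α) (a : α) :
    stepsTo p (u ++ [a]) = stepsTo (fun b => b < a) u ++ [p a] := by
  rw [stepsTo, steps_append_cons]
  simp [stepsFrom]

theorem stepsTo_reverse (q : α → Bool) {w : List α} (hw : w.Nodup) :
    stepsTo (fun a => !q a) w.reverse = ((stepsFrom q w).map not).reverse := by
  induction w generalizing q with
  | nil => rfl
  | cons a w ih =>
    obtain ⟨ha, hw⟩ := List.nodup_cons.mp hw
    have hflip : ∀ b ∈ w.reverse, decide (b < a) = !decide (a < b) := by
      intro b hb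
      have hba : b ≠ a := fun h => ha (by simpa [h] using hb)
      simp [← not_le, hba.symm.le_iff_lt]
    rw [List.reverse_cons, stepsTo_append_singleton, stepsTo_congr hflip, ih _ hw]
    simp [stepsFrom]

theorem false_notMem_stepsFrom_iff {q : α → Bool} (hq : Monotone q) {w : List α} :
    false ∉ stepsFrom q w ↔ w.Pairwise (· < ·) ∧ ∀ a ∈ w, q a := by
  induction w generalizing q with
  | nil => simp [stepsFrom]
  | cons a w ih =>
    have hlt : Monotone fun b => decide (a < b) := fun b c hbc => by
      simpa [Bool.le_iff_imp] using fun hab => lt_of_lt_of_le hab hbc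
    have hqw : q a → (∀ b ∈ w, a < b) → ∀ b ∈ w, q b := fun ha h b hb =>
      Bool.le_iff_imp.mp (hq (h b hb).le) ha
    rw [stepsFrom, List.mem_cons, not_or, ih hlt, List.pairwise_cons, List.forall_mem_cons]
    simp only [decide_eq_true_eq, Bool.false_eq, Bool.not_eq_false]
    tauto

theorem splitSum_stepsFrom_steps (F G : List Bool → K) (q : α → Bool) (w : List α) :
    splitSum (fun u v => F (stepsFrom q u) * if v = [] then 0 else G (steps v)) w =
      cutSum F G (stepsFrom q w) := by
  induction w generalizing q F with
  | nil => simp [splitSum_nil, stepsFrom, cutSum]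
  | cons a w ih =>
    simpa [splitSum_cons, stepsFrom, steps_cons, cutSum] using
      ih (fun t => F (q a :: t)) (fun b => a < b)

theorem splitSum_steps_steps (F G : List Bool → K) (w : List α) :
    splitSum (fun u v => (if u = [] then 0 else F (steps u)) *
      if v = [] then 0 else G (steps v)) w = cutSum F G (steps w) := by
  cases w with
  | nil => simp [splitSum_nil, steps, cutSum]
  | cons a w =>
    simpa [splitSum_cons, steps_cons] using splitSum_stepsFrom_steps F G _ w

theorem splitSum_stepsFrom_stepsTo (F G : List Bool → K) (p : α → Bool) (a : α) (w : List α) :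
    splitSum (fun u v => F (stepsFrom (fun b => a < b) u) * G (stepsTo p v)) w =
      cutSum F G (stepsTo p (a :: w)) := by
  induction w generalizing a F with
  | nil => simp [splitSum_nil, stepsFrom, stepsTo_nil, stepsTo_singleton, cutSum]
  | cons b w ih =>
    rw [splitSum_cons, stepsTo_cons_cons, cutSum, ← ih]
    rfl

theorem splitSum_steps_stepsTo (F G : List Bool → K) (p : α → Bool) (w : List α) :
    splitSum (fun u v => (if u = [] then 0 else F (steps u)) * G (stepsTo p v)) w =
      cutSum F G (stepsTo p w) := by
  cases w with
  | nil => simp [splitSum_nil, stepsTo_nil, cutSum]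
  | cons a w =>
    rw [splitSum_cons, ← splitSum_stepsFrom_stepsTo]
    simp [steps]

end Steps

section StepSeries

variable {α K : Type*} [LinearOrder α] [CommRing K]

open SetSeries (expSeries expSeries_apply)

/-- The generating function of nonempty words, weighted by a function of their steps. -/
def stepSeries (F : List Bool → K) : SetSeries α K :=
  wordSeries fun w => if w = [] then 0 else F (steps w)

/-- The generating function of words preceded by a virtual letter; see `stepsFrom`. -/
def fromSeries (q : α → Bool) (F : List Bool → K) : SetSeries α K :=
  wordSeries fun w => F (stepsFrom q w)

/-- The generating function of words followed by a virtual letter; see `stepsTo`. -/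
def toSeries (p : α → Bool) (F : List Bool → K) : SetSeries α K :=
  wordSeries fun w => F (stepsTo p w)

/-- The generating function of words with a virtual factor inserted somewhere; the steps inside
that factor are not recorded. -/
def insertSeries (p q : α → Bool) (F : List Bool → K) : SetSeries α K :=
  wordSeries (splitSum fun u v => F (stepsTo p u ++ stepsFrom q v))

theorem insertSeries_congr {p p' q q' : α → Bool} {S : Finset α} (hp : ∀ a ∈ S, p a = p' a)
    (hq : ∀ a ∈ S, q a = q' a) (F : List Bool → K) :
    insertSeries p q F S = insertSeries p' q' F S := by
  refine sum_congr rfl fun w hw => splitSum_congr fun u v huv => ?_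
  have hS {a : α} (ha : a ∈ u ++ v) : a ∈ S := (mem_iff_of_mem_words hw).mp (huv ▸ ha)
  rw [stepsTo_congr fun a ha => hp a (hS (List.mem_append_left _ ha)),
    stepsFrom_congr fun a ha => hq a (hS (List.mem_append_right _ ha))]

theorem fromSeries_mul_stepSeries (q : α → Bool) (F G : List Bool → K) :
    fromSeries q F * stepSeries G = fromSeries q (cutSum F G) := by
  rw [fromSeries, stepSeries, wordSeries_mul]
  exact congrArg _ (funext (splitSum_stepsFrom_steps F G q))

theorem stepSeries_mul_stepSeries (F G : List Bool → K) :
    (stepSeries F * stepSeries G : SetSeries α K) = stepSeries (cutSum F G) := by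
  rw [stepSeries, stepSeries, wordSeries_mul, stepSeries]
  refine congrArg _ (funext fun w => ?_)
  rw [splitSum_steps_steps]
  cases w <;> simp [steps, cutSum]

theorem toSeries_mul_fromSeries_weight (p q : α → Bool) (x y : K) :
    toSeries p (weight x y) * fromSeries q (weight x y) = insertSeries p q (weight x y) := by
  simp only [toSeries, fromSeries, wordSeries_mul, insertSeries, weight_append]

theorem stepSeries_mul_insertSeries_add (p q : α → Bool) (F G : List Bool → K) :
    stepSeries F * insertSeries p q G + insertSeries p q F * stepSeries G =
      insertSeries p q (cutSum F G) := by
  have hleft : stepSeries F * insertSeries p q G = wordSeries (splitSum fun u v =>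
      cutSum F (fun s => G (s ++ stepsFrom q v)) (stepsTo p u)) := by
    rw [stepSeries, insertSeries, wordSeries_mul]
    refine congrArg _ (funext fun w => ?_)
    simp only [mul_splitSum, ← splitSum_steps_stepsTo]
    exact splitSum_assoc (fun t u v => (if t = [] then 0 else F (steps t)) *
      G (stepsTo p u ++ stepsFrom q v)) w
  have hright : insertSeries p q F * stepSeries G = wordSeries (splitSum fun u v =>
      cutSum (fun s => F (stepsTo p u ++ s)) G (stepsFrom q v)) := by
    rw [stepSeries, insertSeries, wordSeries_mul]
    refine congrArg _ (funext fun w => ?_)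
    simp only [splitSum_mul, ← splitSum_stepsFrom_steps (fun s => F (_ ++ s))]
    exact (splitSum_assoc (fun u v t => F (stepsTo p u ++ stepsFrom q v) *
      if t = [] then 0 else G (steps t)) w).symm
  rw [hleft, hright, wordSeries_add, insertSeries]
  simp only [← splitSum_add, cutSum_append]

theorem fromSeries_ascentWeight {q : α → Bool} (hq : Monotone q) (z : K) :
    fromSeries q (ascentWeight z) = expSeries fun a => if q a then z else 0 := by
  funext S
  have hsort : S.sort ∈ words S := mem_words.mpr ⟨S.sort_nodup _, S.sort_toFinset _⟩
  rw [fromSeries, wordSeries_apply, sum_eq_single S.sort, expSeries_apply, prod_ite_zero]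
  · have hmem : false ∉ stepsFrom q S.sort ↔ ∀ a ∈ S, q a := by
      rw [false_notMem_stepsFrom_iff hq]
      simp [S.sortedLT_sort.pairwise]
    rw [ascentWeight, length_stepsFrom, length_of_mem_words hsort, prod_const]
    simp only [← hmem, ite_not]
  · intro w hw hne
    rw [ascentWeight, if_pos]
    contrapose! hne
    have hsorted := ((false_notMem_stepsFrom_iff hq).mp hne).1
    obtain ⟨hnodup, rfl⟩ := mem_words.mp hw
    exact ((List.toFinset_sort (· ≤ ·) hnodup).mpr (hsorted.imp le_of_lt)).symm
  · exact fun h => absurd hsort h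

end StepSeries

section Reversal

variable {α : Type*} [LinearOrder α]

theorem steps_reverse {w : List α} (hw : w.Nodup) :
    steps w.reverse = ((steps w).map not).reverse := by
  cases w with
  | nil => rfl
  | cons a w =>
    have h := stepsTo_reverse (fun _ => true) hw
    rw [List.reverse_cons, stepsTo_append_singleton] at h
    rw [List.reverse_cons, steps_append_cons, steps_cons]
    simpa [stepsFrom] using h

theorem weight_reverse_map_not {K : Type*} [CommRing K] (x y : K) (s : List Bool) :
    weight x y (s.map not).reverse = weight y x s := by
  rw [weight, List.count_reverse, List.count_reverse, mul_comm, weight]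
  congr 2
  exacts [List.count_map_of_injective s not Bool.not_injective true,
    List.count_map_of_injective s not Bool.not_injective false]

end Reversal

section SeriesIdentities

open SetSeries (C bar expSeries)

variable {α K : Type*} [LinearOrder α] [CommRing K]

theorem wordSeries_ite_nil : wordSeries (fun w : List α => if w = [] then (1 : K) else 0) = 1 := by
  funext S
  rw [wordSeries_apply, SetSeries.one_apply]
  split_ifs with hS
  · simp [hS, words_empty]
  · refine sum_eq_zero fun w hw => if_neg ?_
    rintro rfl
    exact hS (mem_words.mp hw).2.symm

theorem stepSeries_empty (F : List Bool → K) : (stepSeries F : SetSeries α K) ∅ = 0 := by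
  simp [stepSeries, wordSeries_apply, words_empty]

theorem fromSeries_const_weight (x y : K) (e : Bool) :
    (fromSeries (fun _ => e) (weight x y) : SetSeries α K) =
      1 + C (if e then x else y) * stepSeries (weight x y) := by
  rw [fromSeries, stepSeries, C_mul_wordSeries, ← wordSeries_ite_nil, wordSeries_add]
  refine congrArg _ (funext fun w => ?_)
  cases w <;> simp [stepsFrom, steps_cons, weight_nil, weight_cons]

theorem toSeries_not_weight (q : α → Bool) (x y : K) :
    toSeries (fun a => !q a) (weight x y) = fromSeries q (weight y x) := by
  rw [toSeries, ← wordSeries_reverse]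
  refine wordSeries_congr fun w hw => ?_
  rw [stepsTo_reverse q hw, weight_reverse_map_not]

theorem stepSeries_weight_comm (x y : K) :
    (stepSeries (weight x y) : SetSeries α K) = stepSeries (weight y x) := by
  rw [stepSeries, ← wordSeries_reverse]
  refine wordSeries_congr fun w hw => ?_
  rw [steps_reverse hw, weight_reverse_map_not]
  simp

theorem fromSeries_weight {q : α → Bool} (hq : Monotone q) (x y : K) :
    fromSeries q (weight x y) =
      expSeries (fun a => if q a then x - y else 0) * (1 + C y * stepSeries (weight x y)) := by
  rw [mul_add, mul_one, mul_left_comm, ← fromSeries_ascentWeight hq, fromSeries_mul_stepSeries]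
  simp only [fromSeries, C_mul_wordSeries, wordSeries_add, ← weight_eq_ascentWeight_add]

theorem fromSeries_weight_swap {q : α → Bool} (hq : Monotone q) (x y : K) :
    fromSeries q (weight y x) =
      bar (expSeries fun a => if q a then x - y else 0) *
        (1 + C x * stepSeries (weight x y)) := by
  rw [fromSeries_weight hq, stepSeries_weight_comm, SetSeries.bar_expSeries]
  congr 2
  funext a
  change _ = -(if q a then x - y else 0)
  split_ifs <;> simp

theorem one_add_stepSeries_weight (x y : K) :
    (1 + C (x + y) * stepSeries (weight x y) : SetSeries α K) =
      (1 + C x * stepSeries (ballotWeight x y)) * (1 + C y * stepSeries (endMinWeight x y)) := by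
  have h : (C (x + y) * stepSeries (weight x y) : SetSeries α K) =
      C x * stepSeries (ballotWeight x y) + C y * stepSeries (endMinWeight x y) +
        C (x * y) * (stepSeries (endMinWeight x y) * stepSeries (ballotWeight x y)) := by
    rw [stepSeries_mul_stepSeries]
    simp only [stepSeries, C_mul_wordSeries, wordSeries_add, mul_ite, mul_zero, add_mul_weight]
    refine congrArg _ (funext fun w => ?_)
    split_ifs <;> simp
  rw [h, map_mul]
  ring

theorem toSeries_mul_fromSeries (p q : α → Bool) (x y : K) :
    C (x + y) * (toSeries p (weight x y) * fromSeries q (weight x y)) =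
      C x * insertSeries p q (ballotWeight x y) * (1 + C y * stepSeries (endMinWeight x y)) +
      C y * insertSeries p q (endMinWeight x y) * (1 + C x * stepSeries (ballotWeight x y)) := by
  have h : C (x + y) * insertSeries p q (weight x y) =
      C x * insertSeries p q (ballotWeight x y) + C y * insertSeries p q (endMinWeight x y) +
        C (x * y) * insertSeries p q (cutSum (endMinWeight x y) (ballotWeight x y)) := by
    simp only [insertSeries, C_mul_wordSeries, wordSeries_add, mul_splitSum, ← splitSum_add,
      add_mul_weight]
  rw [toSeries_mul_fromSeries_weight, h, ← stepSeries_mul_insertSeries_add, map_mul]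
  ring

/-- Carlitz's identity `(1 + x A) = exp (x - y) (1 + y A)` compared with its image under `bar`. -/
theorem stepSeries_weight_add_bar [IsDomain K] {x y : K} (hxy : x ≠ y) :
    (stepSeries (weight x y) + bar (stepSeries (weight x y)) +
      C (x + y) * stepSeries (weight x y) * bar (stepSeries (weight x y)) : SetSeries α K) = 0 := by
  set A : SetSeries α K := stepSeries (weight x y)
  set e : SetSeries α K := expSeries fun _ => x - y
  have hA : 1 + C x * A = e * (1 + C y * A) := by
    simpa [A, e, fromSeries_const_weight] using
      fromSeries_weight (α := α) (q := fun _ => true) monotone_const x y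
  have hbarA : 1 + C x * bar A = bar e * (1 + C y * bar A) := by
    simpa only [map_add, map_mul, map_one, SetSeries.bar_C] using congrArg bar hA
  have he : bar e * e = 1 := SetSeries.bar_expSeries_mul_expSeries _
  have hcancel : C (x - y) * (A + bar A + C (x + y) * A * bar A) = 0 := by
    rw [map_sub, map_add]
    linear_combination (1 + C x * bar A) * hA + e * (1 + C y * A) * hbarA +
      (1 + C y * A) * (1 + C y * bar A) * he
  funext S
  have hS := congrFun hcancel S
  rw [SetSeries.C_mul_apply, SetSeries.zero_apply] at hS
  exact (mul_eq_zero.mp hS).resolve_left (sub_ne_zero.mpr hxy)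

/-- The weight recording only the more frequent and the less frequent kind of steps. -/
def unorientedWeight (x y : K) (s : List Bool) : K :=
  x ^ max (s.count true) (s.count false) * y ^ min (s.count true) (s.count false)

theorem unorientedWeight_add_swap (x y : K) (s : List Bool) :
    unorientedWeight x y s + unorientedWeight y x s = weight x y s + weight y x s := by
  simp only [unorientedWeight, weight]
  rcases le_total (s.count true) (s.count false) with h | h
  · rw [max_eq_right h, min_eq_left h]
    ring
  · rw [max_eq_left h, min_eq_right h]

/-- The generating function of the words of even length preceded by a virtual letter (see
`stepsFrom`), with a descent appended to their steps: closing up the word at a letter that is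
smaller than all its letters yields a cycle with these steps. -/
def cycleSeries (q : α → Bool) (x y : K) : SetSeries α K :=
  wordSeries fun w => if Even w.length then unorientedWeight x y (stepsFrom q w ++ [false]) else 0

theorem two_mul_cycleSeries_add_swap (q : α → Bool) (x y : K) :
    2 * (cycleSeries q x y + cycleSeries q y x) =
      (C x * fromSeries q (weight y x) + C y * fromSeries q (weight x y)) +
        bar (C x * fromSeries q (weight y x) + C y * fromSeries q (weight x y)) := by
  rw [two_mul]
  simp only [cycleSeries, fromSeries, C_mul_wordSeries, wordSeries_add, bar_wordSeries]
  refine congrArg _ (funext fun w => ?_)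
  have h := unorientedWeight_add_swap x y (stepsFrom q w ++ [false])
  simp only [weight_append, weight_cons, weight_nil, Bool.false_eq_true, if_false, mul_one] at h
  split_ifs with hw
  · rw [hw.neg_one_pow]
    linear_combination 2 * h
  · rw [(Nat.not_even_iff_odd.mp hw).neg_one_pow]
    ring

theorem two_mul_cycleSeries_mul [IsDomain K] {q : α → Bool} (hq : Monotone q) {x y : K}
    (hxy : x ≠ y) :
    2 * (cycleSeries q x y + cycleSeries q y x) * (1 + C (x + y) * stepSeries (weight x y)) =
      C (x + y) * (toSeries (fun _ => false) (weight x y) * fromSeries q (weight x y)) +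
      C (x + y) *
        (toSeries (fun a => !q a) (weight x y) * fromSeries (fun _ => true) (weight x y)) := by
  have hto : (toSeries (fun _ => false) (weight x y) : SetSeries α K) =
      1 + C y * stepSeries (weight x y) := by
    have := toSeries_not_weight (α := α) (fun _ => true) x y
    rwa [fromSeries_const_weight, stepSeries_weight_comm] at this
  rw [two_mul_cycleSeries_add_swap, toSeries_not_weight, hto, fromSeries_const_weight, if_pos rfl,
    fromSeries_weight_swap hq x y, fromSeries_weight hq x y]
  have hA := stepSeries_weight_add_bar (α := α) hxy
  set A : SetSeries α K := stepSeries (weight x y)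
  set e : SetSeries α K := expSeries fun a => if q a then x - y else 0
  have hbar : bar (bar e) = e := by simp only [e, SetSeries.bar_expSeries, neg_neg]
  simp only [map_add, map_mul, map_one, SetSeries.bar_C, hbar] at hA ⊢
  linear_combination (C x ^ 2 * e + C y ^ 2 * bar e) * hA

end SeriesIdentities

section Balance

open SetSeries (coeffsIn)
open MvPolynomial (X)

/-- The polynomials whose monomials `x ^ a * y ^ b` all satisfy `a - b ∈ I`. -/
noncomputable def balanceIn (I : Set ℤ) : AddSubgroup (MvPolynomial (Fin 2) ℤ) :=
  (MvPolynomial.restrictSupport ℤ {m | (m 0 : ℤ) - m 1 ∈ I}).toAddSubgroup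

theorem balanceIn_mono {I J : Set ℤ} (h : I ⊆ J) : balanceIn I ≤ balanceIn J :=
  MvPolynomial.restrictSupport_mono ℤ fun _ hm => h hm

theorem pow_mul_pow_mem_balanceIn {I : Set ℤ} {a b : ℕ} (h : (a : ℤ) - b ∈ I) :
    (X 0 ^ a * X 1 ^ b : MvPolynomial (Fin 2) ℤ) ∈ balanceIn I := by
  rw [MvPolynomial.X_pow_eq_monomial, MvPolynomial.X_pow_eq_monomial, MvPolynomial.monomial_mul]
  exact (MvPolynomial.monomial_mem_restrictSupport ℤ).mpr (Or.inl (by simpa using h))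

theorem mul_mem_balanceIn {I J L : Set ℤ} (h : ∀ i ∈ I, ∀ j ∈ J, i + j ∈ L)
    {f g : MvPolynomial (Fin 2) ℤ} (hf : f ∈ balanceIn I) (hg : g ∈ balanceIn J) :
    f * g ∈ balanceIn L := by
  have hfg := Submodule.mul_mem_mul hf hg
  rw [← MvPolynomial.restrictSupport_add] at hfg
  refine MvPolynomial.restrictSupport_mono ℤ ?_ hfg
  rintro _ ⟨m, hm, n, hn, rfl⟩
  have := h _ hm _ hn
  simp only [Set.mem_ofPred_eq, Finsupp.add_apply, Nat.cast_add]
  rwa [add_sub_add_comm]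

theorem disjoint_balanceIn {I J : Set ℤ} (h : Disjoint I J) :
    Disjoint (balanceIn I) (balanceIn J) := by
  refine AddSubgroup.disjoint_def.mpr fun {f} hI hJ => ?_
  rw [← MvPolynomial.support_eq_empty, eq_empty_iff_forall_notMem]
  exact fun m hm => Set.disjoint_left.mp h (hI hm) (hJ hm)

theorem wordSeries_mem_coeffsIn {α K : Type*} [DecidableEq α] [CommRing K] {A : AddSubgroup K}
    {φ : List α → K} (h : ∀ w, φ w ∈ A) : wordSeries φ ∈ coeffsIn A :=
  fun _ => A.sum_mem fun w _ => h w

end Balance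

section WienerHopf

open SetSeries (C coeffsIn)
open MvPolynomial (X)

variable {α : Type*} [LinearOrder α]

theorem ballotWeight_mem_balanceIn (s : List Bool) :
    ballotWeight (X 0) (X 1) s ∈ balanceIn (Set.Ici 0) := by
  rw [ballotWeight]
  split_ifs with h
  · exact pow_mul_pow_mem_balanceIn (h.trans (minHeight_le_height s))
  · exact AddSubgroup.zero_mem _

theorem endMinWeight_mem_balanceIn (s : List Bool) :
    endMinWeight (X 0) (X 1) s ∈ balanceIn (Set.Iic 0) := by
  rw [endMinWeight]
  split_ifs with h
  · exact pow_mul_pow_mem_balanceIn (h.trans (minHeight_nonpos s))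
  · exact AddSubgroup.zero_mem _

theorem count_true_ne_count_false {s : List Bool} (hs : Odd s.length) :
    s.count true ≠ s.count false := by
  rw [← List.count_true_add_count_false, Nat.odd_add] at hs
  grind

/-- Cycles of odd length have more steps of one kind than of the other. -/
theorem cycleSeries_mem_coeffsIn {x y : MvPolynomial (Fin 2) ℤ} {I : Set ℤ}
    (h : ∀ a b : ℕ, b < a → x ^ a * y ^ b ∈ balanceIn I) (q : α → Bool) :
    cycleSeries q x y ∈ coeffsIn (balanceIn I) := by
  refine wordSeries_mem_coeffsIn fun w => ?_
  split_ifs with hw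
  · refine h _ _ (min_lt_max.mpr (count_true_ne_count_false ?_))
    rw [List.length_append, length_stepsFrom]
    exact hw.add_one
  · exact AddSubgroup.zero_mem _

theorem insertSeries_sub_cycleSeries_mem_coeffsIn {I J : Set ℤ} (hJI : J ⊆ I) (h0 : 0 ∈ I)
    (hIJ : ∀ j ∈ J, ∀ i ∈ I, j + i ∈ J) {z : MvPolynomial (Fin 2) ℤ} (hz : z ∈ balanceIn J)
    {F : List Bool → MvPolynomial (Fin 2) ℤ} (hF : ∀ s, F s ∈ balanceIn I)
    {c : SetSeries α (MvPolynomial (Fin 2) ℤ)} (hc : c ∈ coeffsIn (balanceIn J))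
    (p q p' q' : α → Bool) :
    C z * (insertSeries p q F + insertSeries p' q' F) - 2 * c * (1 + C z * stepSeries F) ∈
      coeffsIn (balanceIn J) := by
  have hmul {G H : SetSeries α (MvPolynomial (Fin 2) ℤ)} (hG : G ∈ coeffsIn (balanceIn J))
      (hH : H ∈ coeffsIn (balanceIn I)) : G * H ∈ coeffsIn (balanceIn J) :=
    SetSeries.mul_mem_coeffsIn (fun _ hf _ hg => mul_mem_balanceIn hIJ hf hg) hG hH
  have hins (p q : α → Bool) : insertSeries p q F ∈ coeffsIn (balanceIn I) :=
    wordSeries_mem_coeffsIn fun w => AddSubgroup.sum_mem _ fun _ _ => hF _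
  have hstep : (stepSeries F : SetSeries α _) ∈ coeffsIn (balanceIn I) := by
    refine wordSeries_mem_coeffsIn fun w => ?_
    split_ifs
    exacts [AddSubgroup.zero_mem _, hF _]
  have hone : (1 : SetSeries α (MvPolynomial (Fin 2) ℤ)) ∈ coeffsIn (balanceIn I) :=
    SetSeries.C_mem_coeffsIn (x := 1) (by
      simpa using pow_mul_pow_mem_balanceIn (I := I) (a := 0) (b := 0) (by simpa using h0))
  have hCz : (C z : SetSeries α _) ∈ coeffsIn (balanceIn J) := SetSeries.C_mem_coeffsIn hz
  have hmono {G : SetSeries α (MvPolynomial (Fin 2) ℤ)} (hG : G ∈ coeffsIn (balanceIn J)) :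
      G ∈ coeffsIn (balanceIn I) := fun S => balanceIn_mono hJI (hG S)
  refine AddSubgroup.sub_mem _ (hmul hCz (add_mem (hins p q) (hins p' q'))) (hmul ?_ ?_)
  · rw [two_mul]
    exact add_mem hc hc
  · exact add_mem hone (hmono (hmul hCz hstep))

theorem one_add_C_mul_stepSeries_empty {K : Type*} [CommRing K] (z : K) (F : List Bool → K) :
    (1 + C z * stepSeries F : SetSeries α K) ∅ = 1 := by
  rw [SetSeries.add_apply, SetSeries.C_mul_apply, stepSeries_empty, mul_zero, add_zero,
    SetSeries.one_apply, if_pos rfl]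

theorem insertSeries_add_insertSeries_mvPolynomial {q : α → Bool} (hq : Monotone q) :
    (C (X 0) * (insertSeries (fun _ => false) q (ballotWeight (X 0) (X 1)) +
        insertSeries (fun a => !q a) (fun _ => true) (ballotWeight (X 0) (X 1))) :
      SetSeries α (MvPolynomial (Fin 2) ℤ)) =
      2 * cycleSeries q (X 0) (X 1) * (1 + C (X 0) * stepSeries (ballotWeight (X 0) (X 1))) := by
  have hXmem : (X 0 : MvPolynomial (Fin 2) ℤ) ∈ balanceIn (Set.Ici 1) := by
    simpa using pow_mul_pow_mem_balanceIn (a := 1) (b := 0) (I := Set.Ici 1) (by simp)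
  have hYmem : (X 1 : MvPolynomial (Fin 2) ℤ) ∈ balanceIn (Set.Iic (-1)) := by
    simpa using pow_mul_pow_mem_balanceIn (a := 0) (b := 1) (I := Set.Iic (-1)) (by simp)
  have hcycX : cycleSeries q (X 0) (X 1) ∈ coeffsIn (balanceIn (Set.Ici 1)) :=
    cycleSeries_mem_coeffsIn (fun a b hab => pow_mul_pow_mem_balanceIn (by simp; omega)) q
  have hcycY : cycleSeries q (X 1) (X 0) ∈ coeffsIn (balanceIn (Set.Iic (-1))) := by
    refine cycleSeries_mem_coeffsIn (fun a b hab => ?_) q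
    rw [mul_comm]
    exact pow_mul_pow_mem_balanceIn (by simp; omega)
  have hG := insertSeries_sub_cycleSeries_mem_coeffsIn (Set.Ici_subset_Ici.mpr zero_le_one)
    Set.self_mem_Ici (by simp; omega) hXmem ballotWeight_mem_balanceIn hcycX
    (fun _ => false) q (fun a => !q a) (fun _ => true)
  have hH := insertSeries_sub_cycleSeries_mem_coeffsIn (Set.Iic_subset_Iic.mpr (by simp))
    Set.self_mem_Iic (by simp; omega) hYmem endMinWeight_mem_balanceIn hcycY
    (fun _ => false) q (fun a => !q a) (fun _ => true)
  have hdisj : Disjoint (balanceIn (Set.Ici 1)) (balanceIn (Set.Iic (-1))) :=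
    disjoint_balanceIn (Set.disjoint_left.mpr fun i => by simp; omega)
  have hcyc := two_mul_cycleSeries_mul hq (x := (X 0 : MvPolynomial (Fin 2) ℤ)) (y := X 1) (by simp)
  rw [toSeries_mul_fromSeries, toSeries_mul_fromSeries, one_add_stepSeries_weight] at hcyc
  refine sub_eq_zero.mp (SetSeries.eq_zero_of_mul_add_mul_eq_zero hdisj hG hH
    (one_add_C_mul_stepSeries_empty (X 1) (endMinWeight (X 0) (X 1)))
    (one_add_C_mul_stepSeries_empty (X 0) (ballotWeight (X 0) (X 1))) ?_).1
  linear_combination -hcyc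

end WienerHopf

section Specialization

open SetSeries (C map)

variable {α K L : Type*} [LinearOrder α] [CommRing K] [CommRing L]

theorem map_weight (f : K →+* L) (x y : K) (s : List Bool) :
    f (weight x y s) = weight (f x) (f y) s := by
  simp [weight]

theorem map_ballotWeight (f : K →+* L) (x y : K) (s : List Bool) :
    f (ballotWeight x y s) = ballotWeight (f x) (f y) s := by
  simp [ballotWeight, apply_ite f, map_weight]

theorem map_stepSeries_ballotWeight (f : K →+* L) (x y : K) :
    map f (stepSeries (ballotWeight x y) : SetSeries α K) =
      stepSeries (ballotWeight (f x) (f y)) := by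
  funext S
  simp [SetSeries.map_apply, stepSeries, wordSeries_apply, apply_ite f, map_ballotWeight]

theorem map_insertSeries_ballotWeight (f : K →+* L) (p q : α → Bool) (x y : K) :
    map f (insertSeries p q (ballotWeight x y)) = insertSeries p q (ballotWeight (f x) (f y)) := by
  funext S
  simp [SetSeries.map_apply, insertSeries, wordSeries_apply, splitSum, map_ballotWeight]

theorem map_cycleSeries (f : K →+* L) (q : α → Bool) (x y : K) :
    map f (cycleSeries q x y) = cycleSeries q (f x) (f y) := by
  funext S
  simp [SetSeries.map_apply, cycleSeries, wordSeries_apply, apply_ite f, unorientedWeight]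

theorem insertSeries_add_insertSeries {q : α → Bool} (hq : Monotone q) (x y : K) :
    C x * (insertSeries (fun _ => false) q (ballotWeight x y) +
        insertSeries (fun a => !q a) (fun _ => true) (ballotWeight x y)) =
      2 * cycleSeries q x y * (1 + C x * stepSeries (ballotWeight x y)) := by
  have h := congrArg (map (MvPolynomial.eval₂Hom (Int.castRingHom K) ![x, y]))
    (insertSeries_add_insertSeries_mvPolynomial hq)
  simpa [map_ofNat, SetSeries.map_C, map_stepSeries_ballotWeight, map_insertSeries_ballotWeight,
    map_cycleSeries] using h

/-- The generating function of ballot words, in which `y` marks the descents. -/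
def ballotSeries (y : K) : SetSeries α K := wordSeries fun w => ballotWeight 1 y (steps w)

theorem ballotSeries_empty (y : K) : (ballotSeries y : SetSeries α K) ∅ = 1 := by
  simp [ballotSeries, wordSeries_apply, words_empty, steps, ballotWeight, minHeight, weight_nil]

theorem one_add_stepSeries_ballotWeight (y : K) :
    (1 + stepSeries (ballotWeight 1 y) : SetSeries α K) = ballotSeries y := by
  rw [← wordSeries_ite_nil, stepSeries, wordSeries_add, ballotSeries]
  refine congrArg _ (funext fun w => ?_)
  split_ifs with hw
  · simp [hw, steps, ballotWeight, minHeight, weight_nil]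
  · exact zero_add _

theorem insertSeries_add_insertSeries_one {q : α → Bool} (hq : Monotone q) (y : K) :
    insertSeries (fun _ => false) q (ballotWeight 1 y) +
        insertSeries (fun a => !q a) (fun _ => true) (ballotWeight 1 y) =
      2 * cycleSeries q 1 y * ballotSeries y := by
  simpa [one_add_stepSeries_ballotWeight] using insertSeries_add_insertSeries hq 1 y

theorem ballotSeries_insert (y : K) {m : α} {S : Finset α} (hm : ∀ a ∈ S, m < a) :
    ballotSeries y (insert m S) =
      insertSeries (fun _ => false) (fun _ => true) (ballotWeight 1 y) S := by
  have hmS : m ∉ S := fun h => lt_irrefl m (hm m h)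
  have hinsert : insert m S = [m].toFinset ∪ S := by ext; simp
  have hmem {w : List α} (hw : w ∈ words ([m].toFinset ∪ S)) : [m] <:+: w := by
    rw [List.singleton_infix_iff]
    exact (mem_iff_of_mem_words hw).mpr (by simp)
  rw [← insertSeries_congr (p := fun a => a < m) (q := fun a => m < a)
      (fun a ha => by simpa using (hm a ha).le) fun a ha => by simpa using hm a ha,
    ballotSeries, wordSeries_apply, hinsert, ← filter_true_of_mem fun w => hmem,
    sum_filter_infix_words (List.nodup_singleton m) (by simp) (by simpa using hmS), insertSeries,
    wordSeries_apply]
  refine sum_congr rfl fun w _ => splitSum_congr fun u v _ => ?_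
  rw [List.append_assoc, List.singleton_append, steps_append_cons]

theorem ballotSeries_insert_eq_cycleSeries_mul [IsDomain K] [CharZero K] (y : K) {m : α}
    {S : Finset α} (hm : ∀ a ∈ S, m < a) :
    ballotSeries y (insert m S) =
      (cycleSeries (fun _ => true) 1 y * ballotSeries y : SetSeries α K) S := by
  have h := congrFun (insertSeries_add_insertSeries_one (α := α) (q := fun _ => true)
    monotone_const y) S
  rw [mul_assoc, SetSeries.two_mul_apply, SetSeries.add_apply, Bool.not_true, ← two_mul] at h
  rw [ballotSeries_insert y hm, mul_left_cancel₀ two_ne_zero h]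

end Specialization

section CycleWords

open Equiv (Perm)
open Function (minimalPeriod)

variable {α : Type*}

/-- The cycle of `π` through `a`, written as a word starting with `a`. -/
noncomputable def cycleWord (π : Perm α) (a : α) : List α :=
  List.iterate π a (minimalPeriod π a)

theorem cycleWord_append_singleton (π : Perm α) (a : α) :
    cycleWord π a ++ [a] = List.iterate π a (minimalPeriod π a + 1) := by
  rw [List.iterate_add, cycleWord, Function.iterate_minimalPeriod]
  rfl

theorem nodup_cycleWord (π : Perm α) (a : α) : (cycleWord π a).Nodup := by
  rw [cycleWord, ← List.range_map_iterate, ← Cycle.nodup_coe_iff]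
  exact Function.nodup_periodicOrbit

theorem isChain_cons_iff_eq_iterate (π : Perm α) (a : α) (q : List α) :
    List.IsChain (fun b c => π b = c) (a :: q) ↔ a :: q = List.iterate π a (q.length + 1) := by
  induction q generalizing a with
  | nil => simp [List.iterate]
  | cons b q ih =>
    rw [List.isChain_cons_cons, ih, List.length_cons, List.iterate.eq_2 π a, List.cons_inj_right]
    constructor
    · rintro ⟨rfl, h⟩
      exact h
    · intro h
      obtain rfl : b = π a := (List.cons.inj h).1
      exact ⟨rfl, h⟩

section Finite

variable [Finite α]

theorem minimalPeriod_pos (π : Perm α) (a : α) : 0 < minimalPeriod π a :=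
  Function.minimalPeriod_pos_of_mem_periodicPts (π.injective.mem_periodicPts a)

theorem exists_cycleWord_eq_cons (π : Perm α) (a : α) : ∃ w, cycleWord π a = a :: w := by
  obtain ⟨n, hn⟩ := Nat.exists_eq_add_one.mpr (minimalPeriod_pos π a)
  exact ⟨_, by rw [cycleWord, hn, List.iterate]⟩

theorem isChain_cons_iff_prefix_cycleWord {π : Perm α} {a : α} {q : List α}
    (hq : (a :: q).Nodup) :
    List.IsChain (fun b c => π b = c) (a :: q) ↔ a :: q <+: cycleWord π a := by
  rw [isChain_cons_iff_eq_iterate, List.prefix_iff_eq_take, cycleWord, List.take_iterate,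
    List.length_cons]
  constructor
  · intro h
    have hle : q.length + 1 ≤ minimalPeriod π a := by
      by_contra! hlt
      rw [h] at hq
      refine (minimalPeriod_pos π a).ne' ((hq.getElem_inj_iff (hi := by simpa using hlt)
        (hj := by simp)).mp ?_)
      simp only [List.getElem_iterate, Function.iterate_minimalPeriod, Function.iterate_zero, id]
    rwa [min_eq_left hle]
  · intro h
    have hlen := congrArg List.length h
    rw [List.length_iterate, List.length_cons] at hlen
    rwa [← hlen] at h

end Finite

section DecidableEq

variable [DecidableEq α]

theorem apply_eq_formPerm_cycleWord {π : Perm α} {a x : α} (hx : x ∈ cycleWord π a) :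
    π x = (cycleWord π a).formPerm x := by
  obtain ⟨i, hi, rfl⟩ := List.mem_iff_getElem.mp hx
  rw [List.formPerm_apply_getElem _ (nodup_cycleWord π a)]
  simp only [cycleWord, List.getElem_iterate, List.length_iterate,
    Function.iterate_mod_minimalPeriod_eq, Function.iterate_succ_apply']

theorem cycleWord_formPerm_mul {a : α} {w : List α} (hw : (a :: w).Nodup) {σ : Perm α}
    (hσ : ∀ x ∈ a :: w, σ x = x) : cycleWord ((a :: w).formPerm * σ) a = a :: w := by
  set π := (a :: w).formPerm * σ
  have hiter (k : ℕ) : π^[k] a = (a :: w)[k % (a :: w).length]'(Nat.mod_lt _ (by simp)) := by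
    rw [← List.formPerm_pow_apply_head a w hw]
    induction k with
    | zero => rfl
    | succ k ih =>
      rw [Function.iterate_succ_apply', ih, Perm.mul_apply, hσ, pow_succ', Perm.mul_apply]
      rw [List.formPerm_pow_apply_head a w hw]
      exact List.getElem_mem _
  have hperiod : minimalPeriod π a = (a :: w).length := by
    refine Nat.dvd_antisymm (Function.IsPeriodicPt.minimalPeriod_dvd ?_)
      (Nat.dvd_of_mod_eq_zero ?_)
    · simp [Function.IsPeriodicPt, Function.IsFixedPt, hiter]
    · have h := hiter (minimalPeriod π a)
      rw [Function.iterate_minimalPeriod] at h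
      exact (hw.getElem_inj_iff (j := 0) (hj := by simp)).mp h.symm
  refine List.ext_getElem (by rw [cycleWord, List.length_iterate, hperiod]) fun k hk hk' => ?_
  simp only [cycleWord, List.getElem_iterate, hiter, Nat.mod_eq_of_lt hk']

theorem nodup_append_of_mem_words {B w : List α} {S T : Finset α} (hB : B.Nodup)
    (hBS : Disjoint B.toFinset S) (hT : T ⊆ S) (hw : w ∈ words T) : (B ++ w).Nodup :=
  (mem_words.mp ((append_mem_words_union hB (hBS.mono_right hT)).mpr hw)).1

end DecidableEq

end CycleWords

section SumOverPerms

open Equiv (Perm)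

variable {α M : Type*} [Fintype α] [DecidableEq α] [AddCommMonoid M]

theorem support_formPerm_cycleWord_inv_mul_subset (π : Perm α) (a : α) :
    ((cycleWord π a).formPerm⁻¹ * π).support ⊆ π.support \ (cycleWord π a).toFinset := by
  intro x hx
  rw [Perm.mem_support, Perm.mul_apply, Ne, Perm.inv_eq_iff_eq] at hx
  have hmem : x ∉ cycleWord π a := fun h => hx (apply_eq_formPerm_cycleWord h)
  rw [List.formPerm_apply_of_notMem hmem] at hx
  simpa [hmem] using hx

theorem toFinset_cycleWord_subset (π : Perm α) (a : α) :
    (cycleWord π a).toFinset ⊆ insert a π.support := by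
  intro x hx
  obtain ⟨k, -, rfl⟩ := List.mem_iterate.mp (List.mem_toFinset.mp hx)
  by_cases ha : π a = a
  · simp [Function.iterate_fixed ha]
  · rw [← Perm.coe_pow]
    exact mem_insert_of_mem (Perm.pow_apply_mem_support.mpr (Perm.mem_support.mpr ha))

theorem support_formPerm_mul_subset (l : List α) (σ : Perm α) :
    (l.formPerm * σ).support ⊆ l.toFinset ∪ σ.support :=
  (Perm.support_mul_le _ _).trans (union_subset_union_left l.support_formPerm_le)

theorem apply_eq_self_of_mem_append {B w : List α} {S T : Finset α} {σ : Perm α}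
    (hBS : Disjoint B.toFinset S) (hw : w ∈ words T)
    (hσ : σ.support ⊆ S \ T) {x : α} (hx : x ∈ B ++ w) : σ x = x := by
  rw [← Perm.notMem_support]
  intro hxσ
  obtain ⟨hxS, hxT⟩ := mem_sdiff.mp (hσ hxσ)
  rcases List.mem_append.mp hx with hxB | hxw
  · exact disjoint_left.mp hBS (List.mem_toFinset.mpr hxB) hxS
  · exact hxT ((mem_iff_of_mem_words hw).mp hxw)

theorem exists_formPerm_mul_eq {a : α} {q : List α} {S : Finset α} {π : Perm α}
    (hsupp : π.support ⊆ (a :: q).toFinset ∪ S) (hpre : a :: q <+: cycleWord π a) :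
    ∃ T ⊆ S, ∃ w ∈ words T, ∃ σ : Perm α, σ.support ⊆ S \ T ∧
      (a :: q ++ w).formPerm * σ = π := by
  obtain ⟨w, hw⟩ := hpre
  have hnodup := List.nodup_append'.mp (hw ▸ nodup_cycleWord π a)
  have hletters : (cycleWord π a).toFinset ⊆ (a :: q).toFinset ∪ S :=
    (toFinset_cycleWord_subset π a).trans (insert_subset (by simp) hsupp)
  refine ⟨w.toFinset, fun x hx => ?_, w, mem_words.mpr ⟨hnodup.2.1, rfl⟩,
    (a :: q ++ w).formPerm⁻¹ * π, fun x hx => ?_, mul_inv_cancel_left _ π⟩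
  · have hxw : x ∈ w := List.mem_toFinset.mp hx
    refine (mem_union.mp (hletters ?_)).resolve_left fun hxq => ?_
    · exact List.mem_toFinset.mpr (hw ▸ List.mem_append_right _ hxw)
    · exact hnodup.2.2 (List.mem_toFinset.mp hxq) hxw
  · rw [hw] at hx
    have hx' := mem_sdiff.mp (support_formPerm_cycleWord_inv_mul_subset π a hx)
    rw [← hw, List.toFinset_append, notMem_union] at hx'
    exact mem_sdiff.mpr ⟨(mem_union.mp (hsupp hx'.1)).resolve_left hx'.2.1, hx'.2.2⟩

theorem sum_perm_prefix_cycleWord {a : α} {q : List α} (hq : (a :: q).Nodup) {S : Finset α}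
    (hS : Disjoint (a :: q).toFinset S) (f : Perm α → M) :
    ∑ π with π.support ⊆ (a :: q).toFinset ∪ S ∧ a :: q <+: cycleWord π a, f π =
      ∑ T ∈ S.powerset, ∑ w ∈ words T, ∑ σ : Perm α with σ.support ⊆ S \ T,
        f ((a :: q ++ w).formPerm * σ) := by
  simp only [sum_sigma']
  have hcycle : ∀ p ∈ S.powerset.sigma fun T =>
      (words T).sigma fun _ => ({σ | σ.support ⊆ S \ T} : Finset (Perm α)),
      cycleWord ((a :: q ++ p.2.1).formPerm * p.2.2) a = a :: q ++ p.2.1 := by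
    rintro ⟨T, w, σ⟩ hp
    simp only [mem_sigma, mem_powerset, mem_filter_univ] at hp
    exact cycleWord_formPerm_mul (nodup_append_of_mem_words hq hS hp.1 hp.2.1)
      fun x => apply_eq_self_of_mem_append hS hp.2.1 hp.2.2
  refine (sum_nbij (fun p : (_ : Finset α) × (_ : List α) × Perm α =>
    (a :: q ++ p.2.1).formPerm * p.2.2) ?_ ?_ ?_ fun _ _ => rfl).symm
  · intro p hp
    rw [mem_filter_univ, hcycle p hp]
    obtain ⟨T, w, σ⟩ := p
    simp only [mem_sigma, mem_powerset, mem_filter_univ] at hp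
    refine ⟨(support_formPerm_mul_subset _ _).trans ?_, List.prefix_append _ _⟩
    rw [List.toFinset_append, (mem_words.mp hp.2.1).2, union_assoc]
    exact union_subset_union_right (union_subset hp.1 (hp.2.2.trans sdiff_subset))
  · rintro ⟨T, w, σ⟩ hp ⟨T', w', σ'⟩ hp' heq
    dsimp only at heq
    have hword := (hcycle _ hp).symm.trans ((congrArg (cycleWord · a) heq).trans (hcycle _ hp'))
    obtain rfl : w = w' := List.append_cancel_left hword
    obtain rfl : σ = σ' := mul_left_cancel heq
    simp only [coe_sigma, Set.mem_sigma_iff, mem_coe] at hp hp'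
    obtain rfl : T = T' := (mem_words.mp hp.2.1).2.symm.trans (mem_words.mp hp'.2.1).2
    rfl
  · intro π hπ
    obtain ⟨hsupp, hpre⟩ := (mem_filter_univ _).mp hπ
    obtain ⟨T, hT, w, hw, σ, hσ, rfl⟩ := exists_formPerm_mul_eq hsupp hpre
    exact ⟨⟨T, w, σ⟩, by simp [hT, hw, hσ], rfl⟩

end SumOverPerms

section CyclicSteps

open Equiv (Perm)

variable {α : Type*} [LinearOrder α]

theorem steps_iterate (f : α → α) (a : α) (n : ℕ) :
    steps (List.iterate f a (n + 1)) =
      (List.iterate f a n).map fun x => decide (x < f x) := by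
  induction n generalizing a with
  | zero => rfl
  | succ n ih =>
    rw [List.iterate.eq_2 f a n, List.map_cons, ← ih]
    rfl

theorem steps_cycleWord_append_singleton (π : Perm α) (a : α) :
    steps (cycleWord π a ++ [a]) = (cycleWord π a).map fun x => decide (x < π x) := by
  rw [cycleWord_append_singleton, steps_iterate, cycleWord]

theorem stepsFrom_append_singleton {q : α → Bool} {a : α} {w : List α} (hq : q a = false)
    (ha : ∀ b ∈ w, a ≤ b) : stepsFrom q (w ++ [a]) = stepsFrom q w ++ [false] := by
  induction w generalizing q with
  | nil => simp [stepsFrom, hq]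
  | cons b w ih =>
    simp [stepsFrom, ih (q := fun c => b < c) (by simp [ha b]) fun c hc => ha c (by simp [hc])]

theorem map_lt_formPerm {a : α} {w : List α} (hw : (a :: w).Nodup) (ha : ∀ b ∈ w, a ≤ b) :
    ((a :: w).map fun x => decide (x < (a :: w).formPerm x)) =
      stepsFrom (fun b => a < b) w ++ [false] := by
  have hcycle : cycleWord (a :: w).formPerm a = a :: w := by
    simpa using cycleWord_formPerm_mul hw (σ := 1) (by simp)
  rw [← stepsFrom_append_singleton (by simp) ha, ← steps_cons, ← List.cons_append]
  simpa only [hcycle] using (steps_cycleWord_append_singleton (a :: w).formPerm a).symm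

end CyclicSteps

section OddPermutations

open Equiv (Perm)
open Polynomial (X)

variable {n : ℕ}

theorem min_cdes_casc_formPerm {a : Fin n} {w : List (Fin n)} (hw : (a :: w).Nodup)
    (ha : ∀ b ∈ w, a ≤ b) :
    min (cdes (a :: w).formPerm) (casc (a :: w).formPerm) =
      min ((stepsFrom (fun b => a < b) w ++ [false]).count false)
        ((stepsFrom (fun b => a < b) w ++ [false]).count true) := by
  rcases eq_or_ne w [] with rfl | hw0
  · simp [cdes, casc, stepsFrom]
  rw [← map_lt_formPerm hw ha, cdes, casc]
  have hmem {x : Fin n} (hx : (a :: w).formPerm x ≠ x) : x ∈ a :: w :=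
    List.mem_of_formPerm_apply_ne hx
  have hne {x : Fin n} (hx : x ∈ a :: w) : (a :: w).formPerm x ≠ x :=
    (List.formPerm_apply_mem_ne_self_iff _ hw x hx).mpr (by grind [List.length_pos_iff])
  rw [count_map_eq_card_filter hw, count_map_eq_card_filter hw]
  congr 2 <;> ext x
  · simpa using ⟨fun h => ⟨by simpa using hmem h.ne, h.le⟩,
      fun h => lt_of_le_of_ne h.2 (hne (by simpa using h.1))⟩
  · simpa using fun h => by simpa using hmem h.ne'

theorem disjoint_formPerm {α : Type*} [DecidableEq α] {l : List α} {σ : Perm α}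
    (hσ : ∀ x ∈ l, σ x = x) : l.formPerm.Disjoint σ := fun x => by
  by_cases hx : x ∈ l
  · exact .inr (hσ x hx)
  · exact .inl (List.formPerm_apply_of_notMem hx)

theorem forall_odd_cycleType_formPerm_mul {α : Type*} [Fintype α] [DecidableEq α] {a : α}
    {w : List α} (hw : (a :: w).Nodup) {σ : Perm α} (hσ : ∀ x ∈ a :: w, σ x = x) :
    (∀ m ∈ ((a :: w).formPerm * σ).cycleType, Odd m) ↔
      Odd (a :: w).length ∧ ∀ m ∈ σ.cycleType, Odd m := by
  rw [(disjoint_formPerm hσ).cycleType_mul]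
  cases w with
  | nil => simp
  | cons b w =>
    rw [(List.isCycle_formPerm hw (by simp)).cycleType,
      List.support_formPerm_of_nodup _ hw (by simp), List.toFinset_card_of_nodup hw]
    simp only [Multiset.mem_add, Multiset.mem_singleton, or_imp, forall_and, forall_eq]

theorem Mstat_formPerm_mul {a : Fin n} {w : List (Fin n)} (hw : (a :: w).Nodup)
    {σ : Perm (Fin n)} (hσ : ∀ x ∈ a :: w, σ x = x) :
    Mstat ((a :: w).formPerm * σ) =
      min (cdes (a :: w).formPerm) (casc (a :: w).formPerm) + Mstat σ := by
  have hdisj := disjoint_formPerm hσ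
  rw [Mstat, hdisj.cycleFactorsFinset_mul_eq_union, sum_union hdisj.disjoint_cycleFactorsFinset]
  refine congrArg (· + Mstat σ) ?_
  cases w with
  | nil => simp [cdes]
  | cons b w =>
    rw [Perm.cycleFactorsFinset_eq_singleton_self_iff.mpr (List.isCycle_formPerm hw (by simp)),
      sum_singleton]

/-- The weight `X ^ M(π)` of an odd order permutation, and `0` for other permutations. -/
noncomputable def oddWeight (π : Perm (Fin n)) : Polynomial ℤ :=
  if ∀ m ∈ π.cycleType, Odd m then X ^ Mstat π else 0

theorem oddWeight_formPerm_mul {a : Fin n} {w : List (Fin n)} (hw : (a :: w).Nodup)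
    (ha : ∀ b ∈ w, a ≤ b) {σ : Perm (Fin n)} (hσ : ∀ x ∈ a :: w, σ x = x) :
    oddWeight ((a :: w).formPerm * σ) = (if Odd (a :: w).length then
      unorientedWeight 1 X (stepsFrom (fun b => a < b) w ++ [false]) else 0) * oddWeight σ := by
  simp only [oddWeight, forall_odd_cycleType_formPerm_mul hw hσ, Mstat_formPerm_mul hw hσ,
    min_cdes_casc_formPerm hw ha, unorientedWeight, one_pow, one_mul, ite_zero_mul_ite_zero,
    pow_add, min_comm]

/-- The generating function of the odd order permutations of sets `S`, a permutation of `S` being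
encoded as a permutation that fixes all other letters. -/
noncomputable def oddSeries (n : ℕ) : SetSeries (Fin n) (Polynomial ℤ) :=
  SetSeries.of fun S => ∑ π with π.support ⊆ S, oddWeight π

theorem oddSeries_apply (S : Finset (Fin n)) :
    oddSeries n S = ∑ π with π.support ⊆ S, oddWeight π := rfl

theorem oddSeries_empty : oddSeries n ∅ = 1 := by
  simp [oddSeries_apply, oddWeight, Mstat, sum_filter]

theorem sum_oddWeight_prefix_cycleWord {a : Fin n} {q : List (Fin n)} (hq : (a :: q).Nodup)
    {S : Finset (Fin n)} (hS : Disjoint (a :: q).toFinset S) (hqa : ∀ b ∈ q, a ≤ b)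
    (hSa : ∀ b ∈ S, a ≤ b) :
    ∑ π with π.support ⊆ (a :: q).toFinset ∪ S ∧ a :: q <+: cycleWord π a, oddWeight π =
      (wordSeries (fun w => if Odd (a :: q ++ w).length then
        unorientedWeight 1 X (stepsFrom (fun b => a < b) (q ++ w) ++ [false]) else 0) *
          oddSeries n : SetSeries (Fin n) (Polynomial ℤ)) S := by
  rw [sum_perm_prefix_cycleWord hq hS, SetSeries.mul_apply]
  refine sum_congr rfl fun T hT => ?_
  rw [wordSeries_apply, oddSeries_apply, sum_mul_sum]
  refine sum_congr rfl fun w hw => sum_congr rfl fun σ hσ => ?_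
  have hwS : ∀ b ∈ w, b ∈ S := fun b hb =>
    mem_powerset.mp hT ((mem_iff_of_mem_words hw).mp hb)
  refine oddWeight_formPerm_mul (nodup_append_of_mem_words hq hS (mem_powerset.mp hT) hw)
    (fun b hb => ?_) fun x => apply_eq_self_of_mem_append hS hw ((mem_filter_univ σ).mp hσ)
  exact (List.mem_append.mp hb).elim (hqa b) fun h => hSa b (hwS b h)

theorem oddSeries_insert {a : Fin n} {S : Finset (Fin n)} (ha : ∀ b ∈ S, a < b) :
    oddSeries n (insert a S) =
      (cycleSeries (fun _ => true) 1 X * oddSeries n : SetSeries (Fin n) (Polynomial ℤ)) S := by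
  have haS : a ∉ S := fun h => lt_irrefl a (ha a h)
  have hprefix (π : Perm (Fin n)) : [a] <+: cycleWord π a := by
    obtain ⟨w, hw⟩ := exists_cycleWord_eq_cons π a
    exact hw ▸ List.prefix_append [a] w
  have h := sum_oddWeight_prefix_cycleWord (List.nodup_singleton a) (S := S) (by simpa using haS)
    (by simp) fun b hb => (ha b hb).le
  simp only [hprefix, and_true, List.toFinset_cons, List.toFinset_nil, insert_empty_eq,
    singleton_union] at h
  rw [oddSeries_apply, h, SetSeries.mul_apply, SetSeries.mul_apply]
  refine sum_congr rfl fun T hT => congrArg (· * _) (sum_congr rfl fun w hw => ?_)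
  have hwa : ∀ b ∈ w, a < b := fun b hb =>
    ha b (mem_powerset.mp hT ((mem_iff_of_mem_words hw).mp hb))
  beta_reduce
  rw [List.nil_append, stepsFrom_congr (q' := fun _ => true) fun b hb => by simp [hwa b hb]]
  simp [Nat.odd_add_one]

theorem oddSeries_eq_ballotSeries : oddSeries n = ballotSeries X := by
  funext S
  induction S using Finset.strongInduction with
  | H S ih =>
    rcases S.eq_empty_or_nonempty with rfl | hS
    · rw [oddSeries_empty, ballotSeries_empty]
    · have hmin : ∀ b ∈ S.erase (S.min' hS), S.min' hS < b := fun b hb =>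
        S.min'_lt_of_mem_erase_min' hS hb
      rw [← insert_erase (S.min'_mem hS), oddSeries_insert hmin,
        ballotSeries_insert_eq_cycleSeries_mul X hmin, SetSeries.mul_apply, SetSeries.mul_apply]
      refine sum_congr rfl fun T _ => ?_
      rw [ih _ (sdiff_subset.trans_ssubset (erase_ssubset (S.min'_mem hS)))]

end OddPermutations

section Peaks

open Equiv (Perm)
open Polynomial (X)

theorem minHeight_append_peak (s t : List Bool) :
    minHeight (s ++ true :: false :: t) = minHeight (s ++ t) := by
  induction s with
  | nil =>
    have := minHeight_nonpos t
    simp only [List.nil_append, minHeight, if_true, Bool.false_eq_true, if_false]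
    omega
  | cons e s ih => simp only [List.cons_append, minHeight, ih]

theorem ballotWeight_append_peak {K : Type*} [CommRing K] (x y : K) (s t : List Bool) :
    ballotWeight x y (s ++ true :: false :: t) = x * y * ballotWeight x y (s ++ t) := by
  simp only [ballotWeight, minHeight_append_peak, weight_append, weight_cons, if_true,
    Bool.false_eq_true, if_false, mul_ite, mul_zero]
  congr 1
  ring

theorem unorientedWeight_peak {K : Type*} [CommRing K] (x y : K) (s : List Bool) :
    unorientedWeight x y (true :: false :: s) = x * y * unorientedWeight x y s := by
  simp [unorientedWeight, Nat.add_max_add_right, Nat.add_min_add_right, pow_succ]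
  ring

section LinearOrder

variable {α : Type*} [LinearOrder α]

theorem steps_append_peak {a b c : α} (hab : a < b) (hcb : c < b) (u v : List α) :
    steps (u ++ [a, b, c] ++ v) =
      stepsTo (fun x => x < a) u ++ true :: false :: stepsFrom (fun x => c < x) v := by
  rw [List.append_assoc, List.cons_append, steps_append_cons]
  simp [stepsFrom, hab, hcb.le]

theorem sum_ballotWeight_peak {K : Type*} [CommRing K] (y : K) {a b c : α} (hab : a < b)
    (hcb : c < b) (hac : a ≠ c) {A : Finset α} (hA : {a, b, c} ⊆ A) :
    ∑ w ∈ words A with [a, b, c] <:+: w, ballotWeight 1 y (steps w) =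
      y * insertSeries (fun x => x < a) (fun x => c < x) (ballotWeight 1 y) (A \ {a, b, c}) := by
  have hblock : [a, b, c].toFinset = {a, b, c} := by simp
  have hsum := sum_filter_infix_words (B := [a, b, c]) (S := A \ {a, b, c})
    (by simp [hab.ne, hac, hcb.ne']) (by simp) (hblock ▸ disjoint_sdiff)
    fun w => ballotWeight 1 y (steps w)
  rw [hblock, union_sdiff_of_subset hA] at hsum
  rw [hsum, insertSeries, wordSeries_apply, mul_sum]
  refine sum_congr rfl fun w _ => ?_
  rw [mul_splitSum]
  exact splitSum_congr fun u v _ => by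
    rw [steps_append_peak hab hcb, ballotWeight_append_peak, one_mul]

end LinearOrder

theorem sum_oddWeight_peak {n : ℕ} {z a b : Fin n} (hza : z < a) (hab : a < b)
    {A : Finset (Fin n)} (hA : {z, b, a} ⊆ A) (hz : ∀ x ∈ A, z ≤ x) :
    ∑ π with π.support ⊆ A ∧ [z, b, a] <+: cycleWord π z, oddWeight π =
      X * (cycleSeries (fun x => a < x) 1 X * ballotSeries X :
        SetSeries (Fin n) (Polynomial ℤ)) (A \ {z, b, a}) := by
  have hblock : [z, b, a].toFinset = {z, b, a} := by simp
  have hsum := sum_oddWeight_prefix_cycleWord (q := [b, a]) (S := A \ {z, b, a})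
    (by simp [hza.ne, (hza.trans hab).ne, hab.ne']) (hblock ▸ disjoint_sdiff)
    (by simp [hza.le, (hza.trans hab).le]) fun x hx => hz x (sdiff_subset hx)
  rw [hblock, union_sdiff_of_subset hA] at hsum
  rw [hsum, oddSeries_eq_ballotSeries, ← SetSeries.C_mul_apply, ← mul_assoc, cycleSeries,
    C_mul_wordSeries]
  refine congrArg (fun F => (wordSeries F * _ : SetSeries _ _) _) (funext fun w => ?_)
  have hodd : Odd (z :: [b, a] ++ w).length ↔ Even w.length := by
    simp [Nat.odd_add_one]
  have hsteps : stepsFrom (fun x => z < x) ([b, a] ++ w) =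
      true :: false :: stepsFrom (fun x => a < x) w := by
    simp [stepsFrom, hza.trans hab, hab.le]
  simp only [hodd]
  rw [hsteps, List.cons_append, List.cons_append, unorientedWeight_peak]
  simp only [one_mul, mul_ite, mul_zero]

theorem sum_ballotWeight_add_sum_ballotWeight {n : ℕ} {z a b : Fin n} (hza : z < a)
    (hab : a < b) {A : Finset (Fin n)} (hA : {z, b, a} ⊆ A) (hz : ∀ x ∈ A, z ≤ x) :
    ∑ w ∈ words A with [z, b, a] <:+: w, ballotWeight 1 X (steps w) +
        ∑ w ∈ words A with [a, b, z] <:+: w, ballotWeight 1 X (steps w) =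
      2 * ∑ π with π.support ⊆ A ∧ [z, b, a] <+: cycleWord π z, oddWeight π := by
  have hcomm : ({a, b, z} : Finset (Fin n)) = {z, b, a} := by grind
  have hzS : ∀ x ∈ A \ {z, b, a}, z < x ∧ x ≠ a := by grind
  have hmono : Monotone fun x => decide (a < x) := fun x y hxy => by
    simpa [Bool.le_iff_imp] using fun h => lt_of_lt_of_le h hxy
  have hmain := congrFun (insertSeries_add_insertSeries_one hmono (X : Polynomial ℤ))
    (A \ {z, b, a})
  rw [SetSeries.add_apply, mul_assoc, SetSeries.two_mul_apply] at hmain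
  rw [insertSeries_congr (p := fun _ => false) (p' := fun x => x < z)
      (fun x hx => by simpa using (hzS x hx).1.le) fun _ _ => rfl,
    insertSeries_congr (p := fun x => !decide (a < x)) (p' := fun x => x < a)
      (q' := fun x => z < x)
      (fun x hx => by simpa [← decide_not] using (hzS x hx).2.le_iff_lt)
      fun x hx => by simpa using (hzS x hx).1] at hmain
  rw [sum_ballotWeight_peak X (hza.trans hab) hab hza.ne hA,
    sum_ballotWeight_peak X hab (hza.trans hab) hza.ne' (hcomm ▸ hA), hcomm,
    sum_oddWeight_peak hza hab hA hz, mul_left_comm, ← hmain, mul_add]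

end Peaks

section Translation

open Equiv (Perm)
open Polynomial (X)

theorem le_minHeight_iff {h : ℤ} {s : List Bool} :
    h ≤ minHeight s ↔ ∀ k, h ≤ height (s.take k) := by
  induction s generalizing h with
  | nil => simp [minHeight, height_nil]
  | cons e s ih =>
    have hcons : h ≤ minHeight (e :: s) ↔ h ≤ 0 ∧ h - (if e then 1 else -1) ≤ minHeight s := by
      simp only [minHeight]; omega
    rw [hcons, ih]
    refine ⟨fun ⟨h0, hs⟩ k => ?_, fun hs => ⟨by simpa [height_nil] using hs 0, fun k => ?_⟩⟩
    · cases k with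
      | zero => simpa [height_nil] using h0
      | succ k => rw [List.take_succ_cons, height_cons]; linarith [hs k]
    · have := hs (k + 1)
      rw [List.take_succ_cons, height_cons] at this
      linarith

theorem steps_eq_zipWith {α : Type*} [LinearOrder α] (w : List α) :
    steps w = List.zipWith (fun a b => decide (a < b)) w w.tail := by
  induction w with
  | nil => rfl
  | cons a w ih => cases w with
    | nil => rfl
    | cons b w => simpa [steps, stepsFrom] using ih

variable {n : ℕ} (π : Perm (Fin n))

theorem permWord_of_lt {i : ℕ} (hi : i < n) : permWord n π i = π ⟨i, hi⟩ + 1 := dif_pos hi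

theorem permWord_ne {i : ℕ} (hi : i + 1 < n) : permWord n π i ≠ permWord n π (i + 1) := by
  simp [permWord_of_lt, hi, Nat.lt_of_succ_lt hi, Fin.val_inj]

theorem steps_ofFn : steps (List.ofFn π) =
    (List.range (n - 1)).map fun i => decide (permWord n π i < permWord n π (i + 1)) := by
  rw [steps_eq_zipWith]
  refine List.ext_getElem (by simp) fun i hi _ => ?_
  have hi' : i + 1 < n := by simp at hi; omega
  simp [permWord_of_lt, hi', Nat.lt_of_succ_lt hi']

theorem count_true_take_steps_ofFn (k : ℕ) :
    ((steps (List.ofFn π)).take k).count true =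
      #{i ∈ range (min k (n - 1)) | permWord n π i < permWord n π (i + 1)} := by
  rw [steps_ofFn, ← List.map_take, List.take_range, count_map_eq_card_filter List.nodup_range,
    List.toFinset_range]
  simp

theorem count_false_take_steps_ofFn (k : ℕ) :
    ((steps (List.ofFn π)).take k).count false =
      #{i ∈ range (min k (n - 1)) | permWord n π (i + 1) < permWord n π i} := by
  rw [steps_ofFn, ← List.map_take, List.take_range, count_map_eq_card_filter List.nodup_range,
    List.toFinset_range]
  refine congrArg card (filter_congr fun i hi => ?_)
  have := permWord_ne π (i := i) (by simp at hi; omega)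
  simp [this.symm.le_iff_lt]

theorem desNum_eq_count : desNum n π = (steps (List.ofFn π)).count false := by
  have := count_false_take_steps_ofFn π (n - 1)
  rwa [List.take_of_length_le (by simp [steps_ofFn]), min_self, eq_comm] at this

theorem isBallot_iff : IsBallot n π ↔ 0 ≤ minHeight (steps (List.ofFn π)) := by
  simp only [le_minHeight_iff, height, count_true_take_steps_ofFn, count_false_take_steps_ofFn,
    sub_nonneg, Nat.cast_le]
  refine ⟨fun h k => ?_, fun h i hi => ?_⟩
  · have := h (min (k + 1) n) (min_le_right _ _)
    rwa [show min (k + 1) n - 1 = min k (n - 1) by omega] at this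
  · have := h (i - 1)
    rwa [min_eq_left (by omega)] at this

theorem hasFactor_iff (a b c : Fin n) :
    HasFactor n π (a + 1) (b + 1) (c + 1) ↔ [a, b, c] <:+: List.ofFn π := by
  have hletter : ∀ i, i < n → ∀ x : Fin n,
      permWord n π i = x + 1 ↔ (List.ofFn π)[i]? = some x := fun i hi x => by
    simp [permWord_of_lt, hi, Fin.ext_iff]
  rw [List.infix_iff_getElem?]
  refine exists_congr fun k => ?_
  have hlength : [a, b, c].length + k ≤ (List.ofFn π).length ↔ k + 2 < n := by
    simp only [List.length_cons, List.length_nil, List.length_ofFn]; omega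
  rw [hlength]
  refine and_congr_right fun hk => ?_
  rw [hletter _ (by omega), hletter _ (by omega), hletter _ (by omega)]
  constructor
  · rintro ⟨ha, hb, hc⟩ (_ | _ | _ | i) hi
    exacts [by simpa using ha, by simpa [add_comm] using hb, by simpa [add_comm] using hc,
      absurd hi (by simp)]
  · intro h
    exact ⟨by simpa using h 0, by simpa [add_comm] using h 1, by simpa [add_comm] using h 2⟩

theorem hasCyclicFactor_iff {a b c : Fin n} (habc : [a, b, c].Nodup) :
    HasCyclicFactor n π (a + 1) (b + 1) (c + 1) ↔ [a, b, c] <+: cycleWord π a := by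
  rw [← isChain_cons_iff_prefix_cycleWord habc]
  simp +contextual [HasCyclicFactor, Fin.val_inj]

theorem sum_perm_eq_sum_words {M : Type*} [AddCommMonoid M] (f : List (Fin n) → M) :
    ∑ π : Perm (Fin n), f (List.ofFn π) = ∑ w ∈ words univ, f w := by
  refine sum_nbij (fun π => List.ofFn π) (fun π _ => ?_) (fun π _ σ _ h => ?_) (fun w hw => ?_)
    fun _ _ => rfl
  · rw [mem_words]
    refine ⟨List.nodup_ofFn.2 π.injective, ?_⟩
    ext x
    simpa [List.mem_ofFn] using π.surjective x
  · exact DFunLike.coe_injective (List.ofFn_injective h)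
  · have hlen : w.length = n := by simpa using length_of_mem_words hw
    have hinj := (List.nodup_iff_injective_get.1 (mem_words.1 hw).1).comp
      (Fin.cast_injective hlen.symm)
    exact ⟨Equiv.ofBijective _ (Finite.injective_iff_bijective.1 hinj), mem_coe.2 (mem_univ _),
      List.ext_getElem (by simp [hlen]) (by simp)⟩

theorem coeff_sum_ite_X_pow {ι : Type*} [Fintype ι] (P Q : ι → Prop) [DecidablePred P]
    [DecidablePred Q] (f : ι → ℕ) (d : ℕ) :
    (∑ i with P i, if Q i then (X : Polynomial ℤ) ^ f i else 0).coeff d =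
      Nat.card {i // Q i ∧ f i = d ∧ P i} := by
  classical
  rw [← sum_filter, filter_filter, Polynomial.finsetSum_coeff, Nat.card_eq_fintype_card,
    Fintype.card_subtype]
  simp only [Polynomial.coeff_X_pow, sum_boole, filter_filter]
  congr 2
  grind

theorem ballotFactorCount_eq_coeff (d : ℕ) {a b c : Fin n} (hb : (b : ℕ) + 1 = n) :
    (ballotFactorCount n d (a + 1) (c + 1) : ℤ) =
      (∑ w ∈ words univ with [a, b, c] <:+: w, ballotWeight 1 X (steps w)).coeff d := by
  classical
  rw [sum_filter, ← sum_perm_eq_sum_words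
    fun w => if [a, b, c] <:+: w then ballotWeight 1 X (steps w) else 0, ← sum_filter]
  simp only [ballotWeight, weight, one_pow, one_mul]
  rw [coeff_sum_ite_X_pow]
  simp only [← isBallot_iff, ← desNum_eq_count, ← hasFactor_iff, hb, ballotFactorCount]

theorem oddOrderCyclicCount_eq_coeff (d : ℕ) {a b c : Fin n} (habc : [a, b, c].Nodup)
    (hb : (b : ℕ) + 1 = n) :
    (oddOrderCyclicCount n d (a + 1) (c + 1) : ℤ) =
      (∑ π : Perm (Fin n) with π.support ⊆ univ ∧ [a, b, c] <+: cycleWord π a,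
        oddWeight π).coeff d := by
  classical
  simp only [subset_univ, true_and, oddWeight]
  rw [coeff_sum_ite_X_pow]
  simp only [← hasCyclicFactor_iff _ habc, hb, oddOrderCyclicCount]

end Translation

end BallotFactor

/-- For `n ≥ 3`, `d ≥ 0` and `2 ≤ j ≤ n-1`:
`b_{n,d}(1,j) + b_{n,d}(j,1) = 2·p_{n,d}(1,j)`. -/
theorem ballot_factor_eq_two_mul_odd (n d j : ℕ) (hn : 3 ≤ n) (hj1 : 2 ≤ j)
    (hj2 : j ≤ n - 1) :
    ballotFactorCount n d 1 j + ballotFactorCount n d j 1 =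
      2 * oddOrderCyclicCount n d 1 j := by
  obtain ⟨m, rfl⟩ : ∃ m, n = m + 3 := ⟨n - 3, by omega⟩
  obtain ⟨i, rfl⟩ : ∃ i, j = i + 1 := ⟨j - 1, by omega⟩
  let J : Fin (m + 3) := ⟨i, by omega⟩
  have hJ : 0 < J := Fin.lt_def.2 (by simp [J]; omega)
  have hJlast : J < Fin.last _ := Fin.lt_def.2 (by simp [J]; omega)
  have hnodup : [0, Fin.last _, J].Nodup := by
    simp [hJ.ne, hJlast.ne', (hJ.trans hJlast).ne]
  have hlast : (Fin.last (m + 2) : ℕ) + 1 = m + 3 := rfl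
  have hcoeff := congrArg (Polynomial.coeff · d) <|
    BallotFactor.sum_ballotWeight_add_sum_ballotWeight hJ hJlast (subset_univ _)
      fun x _ => Fin.zero_le x
  simp only [two_mul, Polynomial.coeff_add, ← BallotFactor.ballotFactorCount_eq_coeff d hlast,
    ← BallotFactor.oddOrderCyclicCount_eq_coeff d hnodup hlast] at hcoeff
  rw [two_mul]
  exact_mod_cast hcoeff
end
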